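/- If the constructed token swapping instance has a swap sequence of length at most K = H + n that transforms the initial token placement into the target token placement, then the Star STS instance is a YES instance. -/

import Mathlib

namespace UnweightedTS

/-- Vertices of the constructed tree: the root, ordering-gadget vertices `ord d`
(distance `d+1` from the root), slot-gadget path vertices `slot i d` (distance `d+1`
from the root in slot gadget `i`), and nooks.  (Coordinates range over all of `ℕ`;
the graph below only has edges between the vertices of the construction, so the
remaining vertices are isolated and carry no tokens.) -/
inductive Vtx (m : ℕ) where
  | root : Vtx m
  | ord : ℕ → Vtx m
  | slot : Fin m → ℕ → Vtx m
  | nook : Fin m → Vtx m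
deriving DecidableEq

/-- Adjacency generator for the tree: `len i` = length of the path of slot gadget `i`,
`lenOrd` = length of the ordering path, `nd` = distance from the root of the path
vertex to which the nook of each slot gadget is attached. -/
def rel {m : ℕ} (len : Fin m → ℕ) (lenOrd nd : ℕ) : Vtx m → Vtx m → Prop
  | .root, .ord d => d = 0 ∧ 0 < lenOrd
  | .ord d, .ord d' => d' = d + 1 ∧ d' < lenOrd
  | .root, .slot i d => d = 0 ∧ 0 < len i
  | .slot i d, .slot i' d' => i = i' ∧ d' = d + 1 ∧ d' < len i
  | .slot i d, .nook i' => i = i' ∧ d + 1 = nd ∧ d < len i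
  | _, _ => False

/-- The constructed tree, as a simple graph. -/
def Tree {m : ℕ} (len : Fin m → ℕ) (lenOrd nd : ℕ) : SimpleGraph (Vtx m) :=
  SimpleGraph.fromRel (rel len lenOrd nd)

/-- Swap the two values `e.1`, `e.2`. -/
def swapV {V : Type*} [DecidableEq V] (e : V × V) (v : V) : V :=
  if v = e.1 then e.2 else if v = e.2 then e.1 else v

/-- Apply a sequence of swaps to a token placement (token ↦ vertex). -/
def applySwaps {T V : Type*} [DecidableEq V] (σ : List (V × V)) (f : T → V) : T → V :=
  σ.foldl (fun g e => fun t => swapV e (g t)) f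

/-- Apply a sequence of star swaps (each given by a leaf) to a placement on the star
with center `none` and leaves `some l`. -/
def starApply {L : Type*} [DecidableEq L] (σ : List L) (f : Option L → Option L) :
    Option L → Option L :=
  σ.foldl (fun g l => fun t => swapV ((none : Option L), some l) (g t)) f

/-- The Star STS instance is a YES instance. -/
def StarSTSYes {L : Type*} [DecidableEq L] (π : Equiv.Perm (Option L)) (σ : List L) : Prop :=
  ∃ σ' : List L, σ'.Sublist σ ∧ starApply σ' id = ⇑π

/-- `k = (mn)^25`, the length of a big segment. -/
def kk (m n : ℕ) : ℕ := (m * n) ^ 25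

/-- `k' = k / n^8`, the length of a padding segment. -/
def kk' (m n : ℕ) : ℕ := kk m n / n ^ 8

variable {m n : ℕ}

/-- `nᵢ`: the number of occurrences of slot `i` in the swap sequence. -/
def cnt (s : Fin n → Fin m) (i : Fin m) : ℕ :=
  (Finset.univ.filter fun j : Fin n => s j = i).card

/-- Length of the ordering path: `nk + nmk'`. -/
def lenOrd (m n : ℕ) : ℕ := n * kk m n + n * m * kk' m n

/-- Length of the path of slot gadget `i`: `nᵢ k + n k'`. -/
def lenSlot (s : Fin n → Fin m) (i : Fin m) : ℕ := cnt s i * kk m n + n * kk' m n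

/-- The non-item tokens: big segments `xⱼ`, `yⱼ` of `k` tokens each, and padding
segments `p_{i,j}`, `q_{i,j}` of `k'` tokens each (in this order of the sum). -/
abbrev NonItem (m n : ℕ) :=
  (Fin n × Fin (kk m n)) ⊕ (Fin n × Fin (kk m n)) ⊕
    (Fin m × Fin n × Fin (kk' m n)) ⊕ (Fin m × Fin n × Fin (kk' m n))

/-- All tokens: item tokens (`Option (Fin m)`, `none` = item 0) and the non-item
tokens. -/
abbrev Tok (m n : ℕ) := Option (Fin m) ⊕ NonItem m n

/-- The constructed tree: ordering path of length `nk + nmk'`, slot path `i` of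
length `nᵢk + nk'`, nooks attached at distance `k` from the root. -/
def TheGraph (s : Fin n → Fin m) : SimpleGraph (Vtx m) :=
  Tree (lenSlot s) (lenOrd m n) (kk m n)

/-- The distance from the root, in slot gadget `i`, at which the block of segment
`q_{i,j}` (preceded by `yⱼ` when `s j = i`) starts in the initial configuration. -/
def offQ (s : Fin n → Fin m) (i : Fin m) (j : Fin n) : ℕ :=
  ∑ j' ∈ Finset.univ.filter (fun j' : Fin n => j'.val < j.val),
    (kk' m n + if s j' = i then kk m n else 0)

/-- The slot occurring next after position `j` in the swap sequence, if any. -/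
def nxt (s : Fin n → Fin m) (j : Fin n) : Option (Fin m) :=
  if h : j.val + 1 < n then some (s ⟨j.val + 1, h⟩) else none

/-- The rank (`0`-based position) of the padding segment `q_{i,j}` among the `m`
padding segments following `yⱼ` in the target configuration of the ordering gadget:
`q_{s_{j+1},j}` first, `q_{s_j,j}` last, and the others in increasing order of `i`. -/
def rho (s : Fin n → Fin m) (i : Fin m) (j : Fin n) : ℕ :=
  if some i = nxt s j then 0
  else if i = s j then m - 1
  else (if (nxt s j).isSome then 1 else 0) +
    (Finset.univ.filter fun i' : Fin m =>
      i'.val < i.val ∧ i' ≠ s j ∧ some i' ≠ nxt s j).card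

/-- The distance from the root, in slot gadget `i`, at which the block of segment
`p_{i,j}` (followed by `xⱼ` when `s j = i`) starts in the target configuration. -/
def tOffP (s : Fin n → Fin m) (i : Fin m) (j : Fin n) : ℕ :=
  ∑ j' ∈ Finset.univ.filter (fun j' : Fin n => j.val < j'.val),
    (kk' m n + if s j' = i then kk m n else 0)

/-- The initial placement of the tokens.  Item `0` is at the root and item `i` at the
nook of slot gadget `i`.  The ordering gadget contains, from the root outward, the
blocks `x₁, p_{·,1}, x₂, p_{·,2}, …, xₙ, p_{·,n}` (the `m` padding blocks after `xⱼ`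
ordered by `rho`); slot gadget `i` contains, from the root outward, the blocks
`q_{i,1},…,q_{i,n}` with `yⱼ` inserted immediately on the root side of `q_{i,j}`
whenever `s j = i`.  Within a segment the coordinate `a` increases away from the root
in slot gadgets and away from the root in the ordering gadget. -/
def initTok (s : Fin n → Fin m) : Tok m n → Vtx m
  | Sum.inl none => .root
  | Sum.inl (some i) => .nook i
  | Sum.inr (Sum.inl (j, a)) => .ord (j.val * (kk m n + m * kk' m n) + a.val)
  | Sum.inr (Sum.inr (Sum.inl (j, a))) => .slot (s j) (offQ s (s j) j + a.val)
  | Sum.inr (Sum.inr (Sum.inr (Sum.inl (i, j, a)))) =>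
      .ord (j.val * (kk m n + m * kk' m n) + kk m n + rho s i j * kk' m n + a.val)
  | Sum.inr (Sum.inr (Sum.inr (Sum.inr (i, j, a)))) =>
      .slot i (offQ s i j + (if s j = i then kk m n else 0) + a.val)

/-- The target placement of the tokens.  Item `o` goes to the position of item `π o`;
the ordering gadget contains, from its far end toward the root, the blocks
`y₁, q_{·,1}, y₂, q_{·,2}, …, yₙ, q_{·,n}` (the `m` padding blocks after `yⱼ` ordered
by `rho`); slot gadget `i` contains, from the root outward, the blocks
`p_{i,n},…,p_{i,1}` with `xⱼ` inserted immediately after (away from the root)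
`p_{i,j}` whenever `s j = i`.  The left-to-right order of the tokens within each
segment is the same as in the initial configuration. -/
def tgtTok (s : Fin n → Fin m) (π : Equiv.Perm (Option (Fin m))) : Tok m n → Vtx m
  | Sum.inl o => (match π o with | none => .root | some i => .nook i)
  | Sum.inr (Sum.inl (j, a)) =>
      .slot (s j) (tOffP s (s j) j + kk' m n + (kk m n - 1 - a.val))
  | Sum.inr (Sum.inr (Sum.inl (j, a))) =>
      .ord (lenOrd m n - 1 - (j.val * (kk m n + m * kk' m n) + a.val))
  | Sum.inr (Sum.inr (Sum.inr (Sum.inl (i, j, a)))) =>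
      .slot i (tOffP s i j + (kk' m n - 1 - a.val))
  | Sum.inr (Sum.inr (Sum.inr (Sum.inr (i, j, a)))) =>
      .ord (lenOrd m n - 1 -
        (j.val * (kk m n + m * kk' m n) + kk m n + rho s i j * kk' m n + a.val))

/-- `d_t`: the tree distance between token `t`'s initial and target vertices. -/
noncomputable def dd (s : Fin n → Fin m) (π : Equiv.Perm (Option (Fin m)))
    (t : Tok m n) : ℕ :=
  (TheGraph s).dist (initTok s t) (tgtTok s π t)

end UnweightedTS

/-!
Call the depth of a token its distance from the root. A swap changes the depths of two tokens by at
most one each, so a solution needs at least `H` swaps, and a solution with at most `H + n` swaps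
wastes only `O(n)` of them. To make this quantitative, weigh the depth of a non-item token by `-1`
before it leaves its initial gadget, by `1` after it has settled in its target gadget and by `0` in
between, and correct the resulting potential so that every swap has nonnegative slack; the total
slack is then `O(n)`.

Consequently the gadgets stay synchronized: up to `O(n)` exceptions, which are negligible compared
with the `k'` tokens of a padding segment, tokens leave the ordering gadget in order, and a slot
gadget releases a token whenever it absorbs one. Moreover every slot gadget always holds a token
in transit at depth about `k`, like the item in its nook. It can be exchanged only if another
token goes in to this depth and it comes out itself, and then the `k` tokens between it and the
root are replaced as well. Since `n * k'` is much smaller than `k`, that many tokens for slot `l`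
pass only during a phase `j` with `s j = l`, when the big segment `x_j` moves. Hence between
consecutive phases only the item in slot `s j` changes, which means that the items move by a
subsequence of the star swaps `s`.
-/

namespace UnweightedTS

/-- The path vertex at distance `d + 1` from the root in a region: the ordering gadget (`none`)
or slot gadget `l` (`some l`). -/
def pathVtx {m : ℕ} : Option (Fin m) → ℕ → Vtx m
  | none, d => .ord d
  | some l, d => .slot l d

/-- The region (ordering gadget `none` or slot gadget `some l`) containing a vertex; the root lies
in no region. -/
def region {m : ℕ} : Vtx m → Option (Option (Fin m))
  | .root => none
  | .ord _ => some none
  | .slot l _ => some (some l)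
  | .nook l => some (some l)

/-- The depth of a vertex, which is its distance from the root except that a nook has the depth `k`
of its neighbour. -/
def depth {m : ℕ} (k : ℕ) : Vtx m → ℕ
  | .root => 0
  | .ord d => d + 1
  | .slot _ d => d + 1
  | .nook _ => k

/-- The vertex at which an item with a given index starts: the root for the center of the star, a
nook for a leaf. -/
def itemVtx {m : ℕ} : Option (Fin m) → Vtx m
  | none => .root
  | some i => .nook i

/-- The vertices that belong to the tree with slot paths of length `len l` and ordering path of
length `L`, as opposed to the isolated vertices of `Vtx m`. -/
def InTree {m : ℕ} (len : Fin m → ℕ) (L : ℕ) : Vtx m → Prop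
  | .root => True
  | .ord d => d < L
  | .slot l d => d < len l
  | .nook _ => True

/-- Edges of the tree directed away from the root. -/
inductive Arc {m : ℕ} (k : ℕ) : Vtx m → Vtx m → Prop
  | top (r : Option (Fin m)) : Arc k .root (pathVtx r 0)
  | path (r : Option (Fin m)) (d : ℕ) : Arc k (pathVtx r d) (pathVtx r (d + 1))
  | side (l : Fin m) : Arc k (pathVtx (some l) (k - 1)) (.nook l)

section Tree

variable {m k L : ℕ} {len : Fin m → ℕ} {u v : Vtx m}

@[simp] lemma region_pathVtx (r : Option (Fin m)) (d : ℕ) : region (pathVtx r d) = some r := by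
  cases r <;> rfl

@[simp] lemma region_root : region (.root : Vtx m) = none := rfl

@[simp] lemma region_nook (l : Fin m) : region (.nook l) = some (some l) := rfl

@[simp] lemma depth_pathVtx (k : ℕ) (r : Option (Fin m)) (d : ℕ) :
    depth k (pathVtx r d) = d + 1 := by
  cases r <;> rfl

@[simp] lemma depth_root (k : ℕ) : depth k (.root : Vtx m) = 0 := rfl

@[simp] lemma depth_nook (k : ℕ) (l : Fin m) : depth k (.nook l) = k := rfl

lemma pathVtx_inj {r r' : Option (Fin m)} {d d' : ℕ} (h : pathVtx r d = pathVtx r' d') :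
    r = r' ∧ d = d' := by
  cases r <;> cases r' <;> simp_all [pathVtx]

lemma pathVtx_ne_root (r : Option (Fin m)) (d : ℕ) : pathVtx r d ≠ .root := by
  cases r <;> simp [pathVtx]

lemma pathVtx_ne_nook (r : Option (Fin m)) (d : ℕ) (l : Fin m) : pathVtx r d ≠ .nook l := by
  cases r <;> simp [pathVtx]

lemma root_or_path_or_nook (v : Vtx m) :
    v = .root ∨ (∃ r d, v = pathVtx r d) ∨ ∃ l, v = .nook l := by
  cases v with
  | root => exact .inl rfl
  | ord d => exact .inr (.inl ⟨none, d, rfl⟩)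
  | slot l d => exact .inr (.inl ⟨some l, d, rfl⟩)
  | nook l => exact .inr (.inr ⟨l, rfl⟩)

lemma itemVtx_injective : Function.Injective (itemVtx (m := m)) := by
  intro a b h
  cases a <;> cases b <;> simp_all [itemVtx]

lemma itemVtx_ne_pathVtx (e r : Option (Fin m)) (d : ℕ) : itemVtx e ≠ pathVtx r d := by
  cases e
  · exact (pathVtx_ne_root r d).symm
  · exact (pathVtx_ne_nook r d _).symm

lemma arc_of_rel (h : rel len L k u v) : Arc k u v ∧ InTree len L u ∧ InTree len L v := by
  cases u <;> cases v <;> simp only [rel] at h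
  · obtain ⟨rfl, h⟩ := h
    exact ⟨Arc.top none, trivial, h⟩
  · obtain ⟨rfl, h⟩ := h
    exact ⟨Arc.top (some _), trivial, h⟩
  · obtain ⟨rfl, h⟩ := h
    exact ⟨Arc.path none _, Nat.lt_of_succ_lt h, h⟩
  · obtain ⟨rfl, rfl, h⟩ := h
    exact ⟨Arc.path (some _) _, Nat.lt_of_succ_lt h, h⟩
  · obtain ⟨rfl, rfl, h⟩ := h
    exact ⟨Arc.side _, h, trivial⟩

lemma arc_of_adj (h : (Tree len L k).Adj u v) :
    (Arc k u v ∨ Arc k v u) ∧ InTree len L u ∧ InTree len L v := by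
  rw [Tree, SimpleGraph.fromRel_adj] at h
  obtain ⟨-, h | h⟩ := h
  · obtain ⟨ha, hu, hv⟩ := arc_of_rel h
    exact ⟨.inl ha, hu, hv⟩
  · obtain ⟨ha, hv, hu⟩ := arc_of_rel h
    exact ⟨.inr ha, hu, hv⟩

lemma Arc.asymm (h : Arc k u v) : ¬Arc k v u := by
  obtain ⟨f, hf⟩ : ∃ f : Vtx m → ℕ, ∀ {u v}, Arc k u v → f u < f v := by
    refine ⟨fun | .nook _ => k + 2 | v => depth k v, fun h => ?_⟩
    cases h with
    | top r => cases r <;> simp [pathVtx, depth]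
    | path r d => cases r <;> simp [pathVtx, depth]
    | side l =>
      simp only [pathVtx, depth]
      omega
  exact fun h' => (hf h).not_gt (hf h')

lemma swapV_involutive {V : Type*} [DecidableEq V] (e : V × V) :
    Function.Involutive (swapV e) := by
  intro x
  unfold swapV
  split_ifs <;> simp_all

end Tree

/-- Tokens: items, then the non-item tokens `X b` that start in the ordering gadget, then the
non-item tokens `Y b` that end there. -/
abbrev Token (m : ℕ) (ι : Type*) := Option (Fin m) ⊕ (ι ⊕ ι)

lemma map_swap_map_swap {m : ℕ} {ι : Type*} (x : Token m ι) :
    (x.map id Sum.swap).map id Sum.swap = x := by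
  rcases x with e | b | b <;> rfl

/-- A run of swaps on the tree, with `loc t x` the location of token `x` after `t` of the `N`
swaps. The non-item token `X b` travels from index `ordPos b` of the ordering path (of length `L`)
to slot gadget `slot b`, and `Y b` travels from index `slotPos b` of that slot gadget to the
ordering gadget. The final configuration mirrors the initial one in every gadget, and tokens bound
for the same slot gadget appear in it in the same order as in the ordering gadget. -/
structure Run (m : ℕ) (ι : Type*) [Fintype ι] where
  k : ℕ
  L : ℕ
  N : ℕ
  len : Fin m → ℕ
  slot : ι → Fin m
  ordPos : ι → ℕ
  slotPos : ι → ℕ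
  loc : ℕ → Token m ι → Vtx m
  two_le_k : 2 ≤ k
  L_eq : L = Fintype.card ι
  len_eq : ∀ l, len l = (Finset.univ.filter fun b => slot b = l).card
  ordPos_injective : Function.Injective ordPos
  ordPos_lt : ∀ b, ordPos b < L
  slotPos_lt : ∀ b, slotPos b < len (slot b)
  slotPos_lt_slotPos : ∀ b b', slot b = slot b' → ordPos b < ordPos b' → slotPos b < slotPos b'
  init_X : ∀ b, loc 0 (.inr (.inl b)) = .ord (ordPos b)
  init_Y : ∀ b, loc 0 (.inr (.inr b)) = .slot (slot b) (slotPos b)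
  final_X : ∀ b, loc N (.inr (.inl b)) = .slot (slot b) (len (slot b) - 1 - slotPos b)
  final_Y : ∀ b, loc N (.inr (.inr b)) = .ord (L - 1 - ordPos b)
  init_item : ∃ ρ : Equiv.Perm (Option (Fin m)), ∀ e, loc 0 (.inl e) = itemVtx (ρ e)
  final_item : ∃ ρ : Equiv.Perm (Option (Fin m)), ∀ e, loc N (.inl e) = itemVtx (ρ e)
  step : ∀ t < N, ∃ u v, (Tree len L k).Adj u v ∧ ∀ x, loc (t + 1) x = swapV (u, v) (loc t x)

namespace Run

variable {m : ℕ} {ι : Type*} [Fintype ι] (R : Run m ι) {t : ℕ}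

/-- The number of path vertices in a region. -/
def regionLen : Option (Fin m) → ℕ
  | none => R.L
  | some l => R.len l

lemma inTree_pathVtx (r : Option (Fin m)) (d : ℕ) :
    InTree R.len R.L (pathVtx r d) ↔ d < R.regionLen r := by
  cases r <;> rfl

lemma exists_ordPos_eq {d : ℕ} (h : d < R.L) : ∃ b, R.ordPos b = d := by
  have hb : Function.Bijective (fun b => (⟨R.ordPos b, R.ordPos_lt b⟩ : Fin R.L)) := by
    rw [Fintype.bijective_iff_injective_and_card]
    exact ⟨fun a b hab => R.ordPos_injective (by simpa using hab), by simp [R.L_eq]⟩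
  obtain ⟨b, hb⟩ := hb.2 ⟨d, h⟩
  exact ⟨b, by simpa using hb⟩

lemma slotPos_inj {b b' : ι} (h : R.slot b = R.slot b') (h' : R.slotPos b = R.slotPos b') :
    b = b' := by
  rcases lt_trichotomy (R.ordPos b) (R.ordPos b') with hlt | heq | hlt
  · exact absurd h' (R.slotPos_lt_slotPos b b' h hlt).ne
  · exact R.ordPos_injective heq
  · exact absurd h' (R.slotPos_lt_slotPos b' b h.symm hlt).ne'

lemma exists_slotPos_eq {l : Fin m} {d : ℕ} (h : d < R.len l) :
    ∃ b, R.slot b = l ∧ R.slotPos b = d := by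
  have hlt (b : {b // R.slot b = l}) : R.slotPos b < R.len l := by
    simpa only [b.2] using R.slotPos_lt b.1
  have hb : Function.Bijective (fun b => (⟨R.slotPos b.1, hlt b⟩ : Fin (R.len l))) := by
    rw [Fintype.bijective_iff_injective_and_card]
    refine ⟨fun a b hab => Subtype.ext ?_, by simp [R.len_eq, Fintype.card_subtype]⟩
    exact R.slotPos_inj (a.2.trans b.2.symm) (by simpa using hab)
  obtain ⟨b, hb⟩ := hb.2 ⟨d, h⟩
  exact ⟨b, b.2, by simpa using hb⟩

lemma loc_zero_injective : Function.Injective (R.loc 0) := by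
  obtain ⟨ρ, hρ⟩ := R.init_item
  rintro (e | b | b) (e' | b' | b') h <;>
    simp only [hρ, R.init_X, R.init_Y, Vtx.ord.injEq, Vtx.slot.injEq, reduceCtorEq] at h
  · rw [ρ.injective (itemVtx_injective h)]
  · exact absurd h (itemVtx_ne_pathVtx _ none _)
  · exact absurd h (itemVtx_ne_pathVtx _ (some _) _)
  · exact absurd h.symm (itemVtx_ne_pathVtx _ none _)
  · rw [R.ordPos_injective h]
  · exact absurd h.symm (itemVtx_ne_pathVtx _ (some _) _)
  · rw [R.slotPos_inj h.1 h.2]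

lemma exists_loc_zero_eq {v : Vtx m} (hv : InTree R.len R.L v) : ∃ x, R.loc 0 x = v := by
  obtain ⟨ρ, hρ⟩ := R.init_item
  cases v with
  | root => exact ⟨.inl (ρ.symm none), by simp [hρ, itemVtx]⟩
  | ord d =>
    obtain ⟨b, rfl⟩ := R.exists_ordPos_eq hv
    exact ⟨.inr (.inl b), R.init_X b⟩
  | slot l d =>
    obtain ⟨b, rfl, rfl⟩ := R.exists_slotPos_eq hv
    exact ⟨.inr (.inr b), R.init_Y b⟩
  | nook l => exact ⟨.inl (ρ.symm (some l)), by simp [hρ, itemVtx]⟩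

lemma inTree_loc_zero (x : Token m ι) : InTree R.len R.L (R.loc 0 x) := by
  rcases x with e | b | b
  · obtain ⟨ρ, hρ⟩ := R.init_item
    rw [hρ]
    cases ρ e <;> trivial
  · rw [R.init_X]
    exact R.ordPos_lt b
  · rw [R.init_Y]
    exact R.slotPos_lt b

lemma loc_injective (ht : t ≤ R.N) : Function.Injective (R.loc t) := by
  induction t with
  | zero => exact R.loc_zero_injective
  | succ t ih =>
    obtain ⟨u, v, -, hst⟩ := R.step t ht
    intro x y hxy
    rw [hst, hst] at hxy
    exact ih (Nat.le_of_succ_le ht) ((swapV_involutive _).injective hxy)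

lemma inTree_swapV {u v w : Vtx m} (hu : InTree R.len R.L u) (hv : InTree R.len R.L v)
    (hw : InTree R.len R.L w) : InTree R.len R.L (swapV (u, v) w) := by
  unfold swapV
  split_ifs <;> assumption

lemma inTree_loc (ht : t ≤ R.N) (x : Token m ι) : InTree R.len R.L (R.loc t x) := by
  induction t with
  | zero => exact R.inTree_loc_zero x
  | succ t ih =>
    obtain ⟨u, v, huv, hst⟩ := R.step t ht
    obtain ⟨-, hu, hv⟩ := arc_of_adj huv
    rw [hst]
    exact R.inTree_swapV hu hv (ih (Nat.le_of_succ_le ht))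

lemma exists_loc_eq (ht : t ≤ R.N) {v : Vtx m} (hv : InTree R.len R.L v) :
    ∃ x, R.loc t x = v := by
  induction t generalizing v with
  | zero => exact R.exists_loc_zero_eq hv
  | succ t ih =>
    obtain ⟨u, w, huw, hst⟩ := R.step t ht
    obtain ⟨-, hu, hw⟩ := arc_of_adj huw
    obtain ⟨x, hx⟩ := ih (Nat.le_of_succ_le ht) (R.inTree_swapV hu hw hv)
    exact ⟨x, by rw [hst, hx, swapV_involutive]⟩

/-- The time-reversed run, in which the tokens `X b` and `Y b` exchange their roles. -/
def rev : Run m ι where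
  k := R.k
  L := R.L
  N := R.N
  len := R.len
  slot := R.slot
  ordPos b := R.L - 1 - R.ordPos b
  slotPos b := R.len (R.slot b) - 1 - R.slotPos b
  loc t x := R.loc (R.N - t) (x.map id Sum.swap)
  two_le_k := R.two_le_k
  L_eq := R.L_eq
  len_eq := R.len_eq
  ordPos_injective a b h := R.ordPos_injective <| by
    have := R.ordPos_lt a
    have := R.ordPos_lt b
    simp only at h
    omega
  ordPos_lt b := by have := R.ordPos_lt b; omega
  slotPos_lt b := by have := R.slotPos_lt b; omega
  slotPos_lt_slotPos b b' h h' := by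
    have := R.ordPos_lt b
    have := R.slotPos_lt b
    have := R.slotPos_lt_slotPos b' b h.symm (by omega)
    rw [← h]
    omega
  init_X b := by simpa using R.final_Y b
  init_Y b := by simpa using R.final_X b
  final_X b := by
    simpa [Nat.sub_sub_self (Nat.le_sub_one_of_lt (R.slotPos_lt b))] using R.init_Y b
  final_Y b := by
    simpa [Nat.sub_sub_self (Nat.le_sub_one_of_lt (R.ordPos_lt b))] using R.init_X b
  init_item := by simpa using R.final_item
  final_item := by simpa using R.init_item
  step t ht := by
    obtain ⟨u, v, huv, h⟩ := R.step (R.N - (t + 1)) (by omega)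
    refine ⟨u, v, huv, fun x => ?_⟩
    rw [show R.N - t = R.N - (t + 1) + 1 by omega, h, swapV_involutive]

@[simp] lemma rev_k : R.rev.k = R.k := rfl

@[simp] lemma rev_N : R.rev.N = R.N := rfl

@[simp] lemma rev_slot : R.rev.slot = R.slot := rfl

@[simp] lemma rev_ordPos (b : ι) : R.rev.ordPos b = R.L - 1 - R.ordPos b := rfl

lemma rev_loc (t : ℕ) (x : Token m ι) : R.rev.loc t x = R.loc (R.N - t) (x.map id Sum.swap) := rfl

/-- At step `t` the token `p` moves away from the root, exchanging its place with `q`. -/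
structure Swaps (t : ℕ) (p q : Token m ι) : Prop where
  lt : t < R.N
  arc : Arc R.k (R.loc t p) (R.loc t q)
  ne : p ≠ q
  down : R.loc (t + 1) p = R.loc t q
  up : R.loc (t + 1) q = R.loc t p
  other : ∀ x, x ≠ p → x ≠ q → R.loc (t + 1) x = R.loc t x

lemma exists_swaps (ht : t < R.N) : ∃ p q, R.Swaps t p q := by
  obtain ⟨u, v, huv, hst⟩ := R.step t ht
  obtain ⟨harc, hu, hv⟩ := arc_of_adj huv
  obtain ⟨p, rfl⟩ := R.exists_loc_eq ht.le hu
  obtain ⟨q, rfl⟩ := R.exists_loc_eq ht.le hv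
  have hpq : p ≠ q := fun h => huv.ne (h ▸ rfl)
  have hinj := R.loc_injective ht.le
  have other : ∀ x, x ≠ p → x ≠ q → R.loc (t + 1) x = R.loc t x := fun x hxp hxq => by
    rw [hst, swapV, if_neg (hinj.ne hxp), if_neg (hinj.ne hxq)]
  have hp : R.loc (t + 1) p = R.loc t q := by simp [hst, swapV]
  have hq : R.loc (t + 1) q = R.loc t p := by simp [hst, swapV]
  rcases harc with harc | harc
  · exact ⟨p, q, ht, harc, hpq, hp, hq, other⟩
  · exact ⟨q, p, ht, harc, hpq.symm, hq, hp, fun x a b => other x b a⟩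

variable {R} {p q : Token m ι}

lemma rev_loc_pred (hlt : t < R.N) (x : Token m ι) :
    R.rev.loc (R.N - (t + 1)) (x.map id Sum.swap) = R.loc (t + 1) x := by
  rw [rev_loc, map_swap_map_swap, Nat.sub_sub_self hlt]

lemma Swaps.root_or_path_or_nook (h : R.Swaps t p q) :
    (∃ r, R.loc t p = .root ∧ R.loc t q = pathVtx r 0) ∨
    (∃ r d, R.loc t p = pathVtx r d ∧ R.loc t q = pathVtx r (d + 1)) ∨
    ∃ l, R.loc t p = pathVtx (some l) (R.k - 1) ∧ R.loc t q = .nook l := by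
  have harc := h.arc
  generalize R.loc t p = u at harc
  generalize R.loc t q = v at harc
  cases harc with
  | top r => exact .inl ⟨r, rfl, rfl⟩
  | path r d => exact .inr (.inl ⟨r, d, rfl, rfl⟩)
  | side l => exact .inr (.inr ⟨l, rfl, rfl⟩)

lemma Swaps.rev (h : R.Swaps t p q) :
    R.rev.Swaps (R.N - (t + 1)) (q.map id Sum.swap) (p.map id Sum.swap) := by
  have hlt := h.lt
  have hpred : R.N - (R.N - (t + 1)) = t + 1 := by omega
  have hsucc : R.N - (R.N - (t + 1) + 1) = t := by omega
  refine ⟨by simp only [rev_N]; omega, ?_, fun hqp => ?_, ?_, ?_, fun x hxq hxp => ?_⟩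
  · simpa only [rev_k, rev_loc, map_swap_map_swap, hpred, h.down, h.up] using h.arc
  · exact h.ne (by rw [← map_swap_map_swap p, ← hqp, map_swap_map_swap])
  · simp only [rev_loc, map_swap_map_swap, hpred, hsucc, h.down]
  · simp only [rev_loc, map_swap_map_swap, hpred, hsucc, h.up]
  · simp only [rev_loc, hpred, hsucc]
    refine (h.other _ (fun hx => hxp ?_) fun hx => hxq ?_).symm <;>
      rw [← hx, map_swap_map_swap]

end Run

namespace Run

variable {m : ℕ} {ι : Type*} [Fintype ι] (R : Run m ι) {a : ι ⊕ ι} {x : Token m ι}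
  {r : Option (Fin m)} {l : Fin m} {t t' : ℕ}

/-- The initial region of a non-item token. -/
def home : ι ⊕ ι → Option (Fin m)
  | .inl _ => none
  | .inr b => some (R.slot b)

/-- The final region of a non-item token. -/
def goal : ι ⊕ ι → Option (Fin m)
  | .inl b => some (R.slot b)
  | .inr _ => none

/-- The token has not left its initial region up to time `t`. -/
def AtHome (a : ι ⊕ ι) (t : ℕ) : Prop :=
  ∀ t' ≤ t, region (R.loc t' (.inr a)) = some (R.home a)

/-- The token stays in its final region from time `t` on. -/
def Settled (a : ι ⊕ ι) (t : ℕ) : Prop :=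
  ∀ t', t ≤ t' → t' ≤ R.N → region (R.loc t' (.inr a)) = some (R.goal a)

lemma home_ne_goal (a : ι ⊕ ι) : R.home a ≠ R.goal a := by
  rcases a with b | b <;> simp [home, goal]

lemma rev_home (a : ι ⊕ ι) : R.rev.home a = R.goal a.swap := by rcases a with b | b <;> rfl

lemma rev_goal (a : ι ⊕ ι) : R.rev.goal a = R.home a.swap := by rcases a with b | b <;> rfl

lemma rev_atHome (a : ι ⊕ ι) (ht : t ≤ R.N) :
    R.rev.AtHome a t ↔ R.Settled a.swap (R.N - t) := by
  refine ⟨fun h s hs hsN => ?_, fun h s hs => ?_⟩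
  · simpa only [rev_loc, rev_home, Sum.map_inr, Nat.sub_sub_self hsN] using
      h (R.N - s) (by omega)
  · simpa only [rev_home] using! h (R.N - s) (by omega) (by omega)

lemma rev_settled (a : ι ⊕ ι) (ht : t ≤ R.N) :
    R.rev.Settled a t ↔ R.AtHome a.swap (R.N - t) := by
  refine ⟨fun h s hs => ?_, fun h s hs _ => ?_⟩
  · simpa only [rev_loc, rev_goal, Sum.map_inr, Nat.sub_sub_self (hs.trans (Nat.sub_le _ _))] using
      h (R.N - s) (by omega) (by simp)
  · simpa only [rev_goal] using! h (R.N - s) (by omega)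

lemma atHome_zero (a : ι ⊕ ι) : R.AtHome a 0 := by
  intro t ht
  obtain rfl := Nat.le_zero.1 ht
  rcases a with b | b
  · rw [R.init_X]; rfl
  · rw [R.init_Y]; rfl

lemma settled_N (a : ι ⊕ ι) : R.Settled a R.N := by
  simpa using (R.rev_atHome a.swap (Nat.zero_le _)).1 (R.rev.atHome_zero _)

variable {R}

lemma AtHome.mono (h : R.AtHome a t) (ht : t' ≤ t) : R.AtHome a t' :=
  fun s hs => h s (hs.trans ht)

lemma Settled.mono (h : R.Settled a t) (ht : t ≤ t') : R.Settled a t' :=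
  fun s hs => h s (ht.trans hs)

lemma AtHome.region (h : R.AtHome a t) : region (R.loc t (.inr a)) = some (R.home a) :=
  h t le_rfl

lemma Settled.region (h : R.Settled a t) (ht : t ≤ R.N) :
    region (R.loc t (.inr a)) = some (R.goal a) :=
  h t le_rfl ht

lemma AtHome.not_settled (h : R.AtHome a t) (ht : t ≤ R.N) : ¬R.Settled a t := fun h' =>
  R.home_ne_goal a (Option.some_injective _ (h.region.symm.trans (h'.region ht)))

lemma atHome_succ :
    R.AtHome a (t + 1) ↔ R.AtHome a t ∧ region (R.loc (t + 1) (.inr a)) = some (R.home a) := by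
  refine ⟨fun h => ⟨h.mono t.le_succ, h.region⟩, fun ⟨h, h'⟩ s hs => ?_⟩
  rcases Nat.le_succ_iff.1 hs with hs | rfl
  · exact h s hs
  · exact h'

lemma settled_iff_succ (ht : t < R.N) :
    R.Settled a t ↔ R.Settled a (t + 1) ∧ region (R.loc t (.inr a)) = some (R.goal a) := by
  refine ⟨fun h => ⟨h.mono t.le_succ, h.region ht.le⟩, fun ⟨h, h'⟩ s hs hsN => ?_⟩
  rcases hs.eq_or_lt with rfl | hs
  · exact h'
  · exact h s hs hsN

lemma atHome_succ_iff (h : region (R.loc (t + 1) (.inr a)) = region (R.loc t (.inr a))) :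
    R.AtHome a (t + 1) ↔ R.AtHome a t := by
  rw [atHome_succ]
  exact ⟨fun h' => h'.1, fun h' => ⟨h', h.trans h'.region⟩⟩

lemma settled_succ_iff (ht : t < R.N)
    (h : region (R.loc (t + 1) (.inr a)) = region (R.loc t (.inr a))) :
    R.Settled a (t + 1) ↔ R.Settled a t := by
  rw [settled_iff_succ ht]
  exact ⟨fun h' => ⟨h', h.symm.trans (h'.region ht)⟩, fun h' => h'.1⟩

lemma not_atHome_of_root (h : R.loc t (.inr a) = .root) : ¬R.AtHome a t := fun h' => by
  simpa [h] using h'.region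

lemma not_settled_of_root (ht : t ≤ R.N) (h : R.loc t (.inr a) = .root) : ¬R.Settled a t :=
  fun h' => by simpa [h] using h'.region ht

lemma AtHome.home_eq (h : R.AtHome a t) (hr : UnweightedTS.region (R.loc t (.inr a)) = some r) :
    R.home a = r :=
  Option.some_injective _ (h.region.symm.trans hr)

lemma Settled.goal_eq (h : R.Settled a t) (ht : t ≤ R.N)
    (hr : UnweightedTS.region (R.loc t (.inr a)) = some r) : R.goal a = r :=
  Option.some_injective _ ((h.region ht).symm.trans hr)

variable (R)

lemma not_settled_zero (a : ι ⊕ ι) : ¬R.Settled a 0 :=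
  (R.atHome_zero a).not_settled (Nat.zero_le _)

lemma not_atHome_N (a : ι ⊕ ι) : ¬R.AtHome a R.N := fun h => h.not_settled le_rfl (R.settled_N a)

open Classical in
/-- The charge of a token: `-1` before its departure, `1` after its arrival, `0` otherwise. -/
noncomputable def charge : Token m ι → ℕ → ℤ
  | .inl _, _ => 0
  | .inr a, t => if R.AtHome a t then -1 else if R.Settled a t then 1 else 0

@[simp] lemma charge_inl (e : Option (Fin m)) (t : ℕ) : R.charge (.inl e) t = 0 := rfl

variable {R}

lemma charge_inr_eq_neg_one : R.charge (.inr a) t = -1 ↔ R.AtHome a t := by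
  simp only [charge]
  split_ifs <;> simp_all

lemma charge_inr_eq_one (ht : t ≤ R.N) : R.charge (.inr a) t = 1 ↔ R.Settled a t := by
  simp only [charge]
  split_ifs with h
  · simp [h.not_settled ht]
  all_goals simp_all

lemma charge_inr_eq_zero : R.charge (.inr a) t = 0 ↔ ¬R.AtHome a t ∧ ¬R.Settled a t := by
  simp only [charge]
  split_ifs <;> simp_all

lemma charge_eq_neg_one : R.charge x t = -1 ↔ ∃ a, x = .inr a ∧ R.AtHome a t := by
  rcases x with e | a <;> simp [charge_inr_eq_neg_one]

lemma charge_eq_one (ht : t ≤ R.N) : R.charge x t = 1 ↔ ∃ a, x = .inr a ∧ R.Settled a t := by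
  rcases x with e | a <;> simp [charge_inr_eq_one ht]

variable (R) in
lemma charge_cases (x : Token m ι) (t : ℕ) :
    R.charge x t = -1 ∨ R.charge x t = 0 ∨ R.charge x t = 1 := by
  rcases x with e | a
  · simp
  · simp only [charge]
    split_ifs <;> simp

lemma charge_eq_zero_of_root (ht : t ≤ R.N) (h : R.loc t x = .root) : R.charge x t = 0 := by
  rcases x with e | a
  · rfl
  · exact charge_inr_eq_zero.2 ⟨not_atHome_of_root h, not_settled_of_root ht h⟩

lemma charge_succ (ht : t < R.N) (h : region (R.loc (t + 1) x) = region (R.loc t x)) :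
    R.charge x (t + 1) = R.charge x t := by
  classical
  rcases x with e | a
  · rfl
  · simp only [charge, atHome_succ_iff h, settled_succ_iff ht h]

lemma rev_charge (x : Token m ι) (ht : t ≤ R.N) :
    R.rev.charge x t = -R.charge (x.map id Sum.swap) (R.N - t) := by
  classical
  rcases x with e | a
  · rfl
  · simp only [charge, rev_atHome R a ht, rev_settled R a ht, Sum.map_inr]
    by_cases h : R.AtHome a.swap (R.N - t)
    · simp [h, h.not_settled (Nat.sub_le _ _)]
    · split_ifs <;> simp_all

variable (R)

open Classical in
/-- The number of tokens that have left their initial region `r`. -/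
noncomputable def departed (r : Option (Fin m)) (t : ℕ) : ℕ :=
  (Finset.univ.filter fun a => R.home a = r ∧ ¬R.AtHome a t).card

open Classical in
/-- The number of tokens that have arrived for good in their final region `r`. -/
noncomputable def arrived (r : Option (Fin m)) (t : ℕ) : ℕ :=
  (Finset.univ.filter fun a => R.goal a = r ∧ R.Settled a t).card

open Classical in
/-- The number of tokens bound for slot gadget `l` that have left the ordering gadget. -/
noncomputable def departedFor (l : Fin m) (t : ℕ) : ℕ :=
  (Finset.univ.filter fun b => R.slot b = l ∧ ¬R.AtHome (.inl b) t).card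

open Classical in
/-- The number of tokens from slot gadget `l` that have arrived for good in the ordering gadget. -/
noncomputable def arrivedFrom (l : Fin m) (t : ℕ) : ℕ :=
  (Finset.univ.filter fun b => R.slot b = l ∧ R.Settled (.inr b) t).card

lemma card_filter_univ_sum {α β : Type*} [Fintype α] [Fintype β] (p : α ⊕ β → Prop)
    [DecidablePred p] :
    (Finset.univ.filter p).card = (Finset.univ.filter fun a => p (.inl a)).card +
      (Finset.univ.filter fun b => p (.inr b)).card := by
  rw [← Finset.univ_disjSum_univ]
  simp only [Finset.card_filter, Finset.sum_disjSum]

open Classical in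
lemma departed_none (t : ℕ) :
    R.departed none t = (Finset.univ.filter fun b => ¬R.AtHome (.inl b) t).card := by
  rw [departed, card_filter_univ_sum]
  simp [home]

open Classical in
lemma departed_some (l : Fin m) (t : ℕ) : R.departed (some l) t =
    (Finset.univ.filter fun b => R.slot b = l ∧ ¬R.AtHome (.inr b) t).card := by
  rw [departed, card_filter_univ_sum]
  simp [home]

open Classical in
lemma arrived_some (l : Fin m) (t : ℕ) : R.arrived (some l) t =
    (Finset.univ.filter fun b => R.slot b = l ∧ R.Settled (.inl b) t).card := by
  rw [arrived, card_filter_univ_sum]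
  simp [goal]

lemma card_home (r : Option (Fin m)) :
    (Finset.univ.filter fun a => R.home a = r).card = R.regionLen r := by
  rw [card_filter_univ_sum]
  cases r <;> simp [home, regionLen, R.L_eq, R.len_eq]

lemma departed_zero (r : Option (Fin m)) : R.departed r 0 = 0 := by
  simp [departed, R.atHome_zero]

lemma departed_N (r : Option (Fin m)) : R.departed r R.N = R.regionLen r := by
  simp [departed, R.not_atHome_N, R.card_home]

variable {R}

lemma arrived_add_rev_departed (r : Option (Fin m)) (ht : t ≤ R.N) :
    R.arrived r t + R.rev.departed r (R.N - t) = R.regionLen r := by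
  classical
  have hhome : (Finset.univ.filter fun a => R.rev.home a = r).card = R.regionLen r := by
    rw [R.rev.card_home]
    cases r <;> rfl
  rw [← hhome, ← Finset.card_filter_add_card_filter_not fun a => R.rev.AtHome a (R.N - t)]
  simp only [Finset.filter_filter]
  congr 1
  refine Finset.card_equiv (Equiv.sumComm ι ι) fun a => ?_
  simp [rev_home, rev_atHome, Nat.sub_sub_self ht]

lemma arrived_zero (r : Option (Fin m)) : R.arrived r 0 = 0 := by
  simp [arrived, R.not_settled_zero]

lemma arrived_N (r : Option (Fin m)) : R.arrived r R.N = R.regionLen r := by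
  simpa [departed_zero] using R.arrived_add_rev_departed r le_rfl

lemma departed_mono (r : Option (Fin m)) (h : t ≤ t') : R.departed r t ≤ R.departed r t' := by
  classical
  exact Finset.card_le_card <| Finset.monotone_filter_right _ fun a _ ha =>
    ⟨ha.1, fun h' => ha.2 (h'.mono h)⟩

lemma arrived_mono (r : Option (Fin m)) (h : t ≤ t') : R.arrived r t ≤ R.arrived r t' := by
  classical
  exact Finset.card_le_card <| Finset.monotone_filter_right _ fun a _ ha => ⟨ha.1, ha.2.mono h⟩

lemma departedFor_mono (l : Fin m) (h : t ≤ t') : R.departedFor l t ≤ R.departedFor l t' := by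
  classical
  exact Finset.card_le_card <| Finset.monotone_filter_right _ fun a _ ha =>
    ⟨ha.1, fun h' => ha.2 (h'.mono h)⟩

lemma arrived_le_departedFor (l : Fin m) (ht : t ≤ R.N) :
    R.arrived (some l) t ≤ R.departedFor l t := by
  classical
  rw [arrived_some]
  exact Finset.card_le_card <| Finset.monotone_filter_right _ fun b _ hb =>
    ⟨hb.1, fun h => h.not_settled ht hb.2⟩

lemma arrivedFrom_le_departed (l : Fin m) (ht : t ≤ R.N) :
    R.arrivedFrom l t ≤ R.departed (some l) t := by
  classical
  rw [departed_some]
  exact Finset.card_le_card <| Finset.monotone_filter_right _ fun b _ hb =>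
    ⟨hb.1, fun h => h.not_settled ht hb.2⟩

variable (R)

open Classical in
/-- The tokens in transit located in region `r`. -/
noncomputable def transit (r : Option (Fin m)) (t : ℕ) : Finset (Token m ι) :=
  Finset.univ.filter fun x => R.charge x t = 0 ∧ region (R.loc t x) = some r

variable {R}

lemma mem_transit : x ∈ R.transit r t ↔ R.charge x t = 0 ∧ region (R.loc t x) = some r := by
  simp [transit]

lemma image_loc_region (r : Option (Fin m)) (ht : t ≤ R.N) :
    (Finset.univ.filter fun x => region (R.loc t x) = some r).image (R.loc t) =
      (Finset.range (R.regionLen r)).image (pathVtx r) ∪ r.elim ∅ fun l => {.nook l} := by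
  ext v
  simp only [Finset.mem_image, Finset.mem_filter, Finset.mem_univ, true_and, Finset.mem_union,
    Finset.mem_range]
  constructor
  · rintro ⟨x, hx, rfl⟩
    have hv := R.inTree_loc ht x
    rcases UnweightedTS.root_or_path_or_nook (R.loc t x) with h | ⟨r', d, h⟩ | ⟨l, h⟩ <;>
      rw [h] at hx hv ⊢
    · simp at hx
    · obtain rfl : r' = r := by simpa using hx
      exact .inl ⟨d, (R.inTree_pathVtx _ _).1 hv, rfl⟩
    · obtain rfl : some l = r := by simpa using hx
      simp
  · rintro (⟨d, hd, rfl⟩ | hv)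
    · obtain ⟨x, hx⟩ := R.exists_loc_eq ht ((R.inTree_pathVtx r d).2 hd)
      exact ⟨x, by simp [hx], hx⟩
    · cases r with
      | none => simp at hv
      | some l =>
        obtain rfl : v = .nook l := by simpa using hv
        obtain ⟨x, hx⟩ := R.exists_loc_eq ht (v := .nook l) trivial
        exact ⟨x, by simp [hx], hx⟩

lemma card_region (r : Option (Fin m)) (ht : t ≤ R.N) :
    (Finset.univ.filter fun x => region (R.loc t x) = some r).card =
      R.regionLen r + if r = none then 0 else 1 := by
  rw [← Finset.card_image_of_injective _ (R.loc_injective ht), image_loc_region r ht,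
    Finset.card_union_of_disjoint, Finset.card_image_of_injective _ fun a b h => (pathVtx_inj h).2,
    Finset.card_range]
  · cases r <;> simp
  · cases r with
    | none => simp
    | some l => simp [Finset.disjoint_left, pathVtx_ne_nook]

lemma card_region_charge_neg_one (r : Option (Fin m)) (t : ℕ) :
    (Finset.univ.filter fun x => region (R.loc t x) = some r ∧ R.charge x t = -1).card +
      R.departed r t = R.regionLen r := by
  classical
  rw [card_filter_univ_sum, ← R.card_home r, departed,
    ← Finset.card_filter_add_card_filter_not (s := Finset.univ.filter fun a => R.home a = r)
      fun a => R.AtHome a t]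
  simp only [Finset.filter_filter, charge_inr_eq_neg_one, charge_inl, zero_eq_neg, one_ne_zero,
    and_false, Finset.filter_false, Finset.card_empty, zero_add]
  congr! 3 with a
  exact and_congr_left fun h => by rw [h.region, Option.some_inj]

lemma card_region_charge_one (r : Option (Fin m)) (ht : t ≤ R.N) :
    (Finset.univ.filter fun x => region (R.loc t x) = some r ∧ R.charge x t = 1).card =
      R.arrived r t := by
  classical
  rw [card_filter_univ_sum, arrived]
  simp only [charge_inr_eq_one ht, charge_inl, zero_ne_one, and_false, Finset.filter_false,
    Finset.card_empty, zero_add]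
  congr! 2 with a
  exact and_congr_left fun h => by rw [h.region ht, Option.some_inj]

lemma card_transit (r : Option (Fin m)) (ht : t ≤ R.N) :
    (R.transit r t).card + R.arrived r t = R.departed r t + if r = none then 0 else 1 := by
  have hsum : (Finset.univ.filter fun x => region (R.loc t x) = some r).card =
      ∑ c ∈ {-1, 0, 1}, (Finset.univ.filter fun x =>
        region (R.loc t x) = some r ∧ R.charge x t = c).card := by
    simp only [← Finset.filter_filter]
    exact Finset.card_eq_sum_card_fiberwise fun x _ => by simpa using R.charge_cases x t
  have htransit : (R.transit r t).card =
      (Finset.univ.filter fun x => region (R.loc t x) = some r ∧ R.charge x t = 0).card := by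
    rw [transit]
    congr! 2
    exact and_comm
  have hneg := card_region_charge_neg_one (R := R) r t
  have hone := card_region_charge_one r ht
  rw [card_region r ht, Finset.sum_insert (by simp), Finset.sum_insert (by simp),
    Finset.sum_singleton] at hsum
  omega

end Run

namespace Run

lemma card_filter_eq_add_one {α : Type*} [Fintype α] {p p' : α → Prop} [DecidablePred p]
    [DecidablePred p'] {a₀ : α} (h : ∀ a, p' a ↔ p a ∨ a = a₀) (h₀ : ¬p a₀) :
    (Finset.univ.filter p').card = (Finset.univ.filter p).card + 1 := by
  classical
  have hinsert : Finset.univ.filter p' = insert a₀ (Finset.univ.filter p) := by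
    ext a
    simp [h, or_comm]
  rw [hinsert, Finset.card_insert_of_notMem (by simpa using h₀)]

variable {m : ℕ} {ι : Type*} [Fintype ι] {R : Run m ι} {t : ℕ} {p q : Token m ι}
  {r r' : Option (Fin m)}

namespace Swaps

lemma region_eq (h : R.Swaps t p q) (hr : region (R.loc t p) = region (R.loc t q)) (x : Token m ι) :
    region (R.loc (t + 1) x) = region (R.loc t x) := by
  by_cases hp : x = p
  · rw [hp, h.down, hr]
  by_cases hq : x = q
  · rw [hq, h.up, hr]
  rw [h.other x hp hq]

lemma charge_eq (h : R.Swaps t p q) (hr : region (R.loc t p) = region (R.loc t q)) (x : Token m ι) :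
    R.charge x (t + 1) = R.charge x t :=
  charge_succ h.lt (h.region_eq hr x)

lemma departed_eq (h : R.Swaps t p q) (hr : region (R.loc t p) = region (R.loc t q))
    (r : Option (Fin m)) :
    R.departed r (t + 1) = R.departed r t := by
  classical
  simp only [departed, atHome_succ_iff (h.region_eq hr _)]

lemma arrived_eq (h : R.Swaps t p q) (hr : region (R.loc t p) = region (R.loc t q))
    (r : Option (Fin m)) :
    R.arrived r (t + 1) = R.arrived r t := by
  classical
  simp only [arrived, settled_succ_iff h.lt (h.region_eq hr _)]

lemma atHome_succ_iff_of_root (h : R.Swaps t p q) (hp : R.loc t p = .root) (a : ι ⊕ ι) :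
    R.AtHome a (t + 1) ↔ R.AtHome a t ∧ .inr a ≠ q := by
  rcases eq_or_ne (.inr a) q with rfl | haq
  · simpa using not_atHome_of_root (h.up.trans hp)
  rcases eq_or_ne (.inr a) p with rfl | hap
  · have hnot := not_atHome_of_root hp
    simpa only [hnot, false_and, iff_false] using fun h' => hnot (h'.mono t.le_succ)
  · simp [Run.atHome_succ_iff (congrArg region (h.other _ hap haq)), haq]

lemma charge_succ_up (h : R.Swaps t p q) (hp : R.loc t p = .root) : R.charge q (t + 1) = 0 :=
  charge_eq_zero_of_root h.lt (h.up.trans hp)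

lemma charge_up (h : R.Swaps t p q) (hp : R.loc t p = .root) :
    R.charge q t = -1 ∨ R.charge q t = 0 := by
  rcases R.charge_cases q t with hq | hq | hq
  · exact .inl hq
  · exact .inr hq
  · obtain ⟨a, rfl, ha⟩ := (charge_eq_one h.lt.le).1 hq
    exact absurd (ha.mono t.le_succ) (not_settled_of_root h.lt (h.up.trans hp))

lemma charge_succ_down (h : R.Swaps t p q) (hp : R.loc t p = .root) :
    R.charge p (t + 1) = 0 ∨ R.charge p (t + 1) = 1 := by
  rcases R.charge_cases p (t + 1) with hp' | hp' | hp'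
  · obtain ⟨a, rfl, ha⟩ := charge_eq_neg_one.1 hp'
    exact absurd (ha.mono t.le_succ) (not_atHome_of_root hp)
  · exact .inl hp'
  · exact .inr hp'

lemma departed_succ_of_root (h : R.Swaps t p q) (hp : R.loc t p = .root)
    (hq : R.loc t q = pathVtx r 0) :
    R.departed r (t + 1) = R.departed r t + if R.charge q t = -1 then 1 else 0 := by
  classical
  simp only [departed, h.atHome_succ_iff_of_root hp]
  split_ifs with hv
  · obtain ⟨a, rfl, ha⟩ := charge_eq_neg_one.1 hv
    have hr : R.home a = r := ha.home_eq (by simp [hq])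
    refine card_filter_eq_add_one (a₀ := a) (fun a' => ?_) (by simp [ha])
    rcases eq_or_ne a' a with rfl | hne
    · simp [hr]
    · simp [hne]
  · have hne (a : ι ⊕ ι) (ha : R.AtHome a t) : .inr a ≠ q := by
      rintro rfl
      exact hv (charge_inr_eq_neg_one.2 ha)
    simp only [and_iff_left_of_imp (hne _), add_zero]

lemma departed_succ_of_root_of_ne (h : R.Swaps t p q) (hp : R.loc t p = .root)
    (hq : R.loc t q = pathVtx r 0) (hr : r' ≠ r) : R.departed r' (t + 1) = R.departed r' t := by
  have hne (a : ι ⊕ ι) (ha : R.home a = r') : R.AtHome a t → .inr a ≠ q := by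
    rintro hat rfl
    exact hr (ha.symm.trans (hat.home_eq (by simp [hq])))
  classical
  simp only [departed, h.atHome_succ_iff_of_root hp]
  congr! 2 with a
  exact and_congr_right fun ha => not_congr (and_iff_left_of_imp (hne a ha))

lemma arrived_add_succ_rev_departed (h : R.Swaps t p q) (r : Option (Fin m)) :
    R.arrived r (t + 1) + R.rev.departed r (R.N - (t + 1)) =
      R.arrived r t + R.rev.departed r (R.N - (t + 1) + 1) := by
  have hlt := h.lt
  rw [arrived_add_rev_departed r h.lt, show R.N - (t + 1) + 1 = R.N - t by omega,
    arrived_add_rev_departed r h.lt.le]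

lemma arrived_succ_of_root (h : R.Swaps t p q) (hp : R.loc t p = .root)
    (hq : R.loc t q = pathVtx r 0) :
    R.arrived r (t + 1) = R.arrived r t + if R.charge p (t + 1) = 1 then 1 else 0 := by
  have hadd := h.arrived_add_succ_rev_departed r
  rw [h.rev.departed_succ_of_root (by rw [rev_loc_pred h.lt, h.up, hp])
    (by rw [rev_loc_pred h.lt, h.down, hq]), rev_charge _ (by omega), map_swap_map_swap,
    Nat.sub_sub_self h.lt] at hadd
  simp only [neg_inj, Nat.succ_eq_add_one] at hadd
  omega

lemma arrived_succ_of_root_of_ne (h : R.Swaps t p q) (hp : R.loc t p = .root)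
    (hq : R.loc t q = pathVtx r 0) (hr : r' ≠ r) : R.arrived r' (t + 1) = R.arrived r' t := by
  have hadd := h.arrived_add_succ_rev_departed r'
  rw [h.rev.departed_succ_of_root_of_ne (by rw [rev_loc_pred h.lt, h.up, hp])
    (by rw [rev_loc_pred h.lt, h.down, hq]) hr] at hadd
  omega

end Swaps

lemma departed_succ_le (r : Option (Fin m)) (ht : t < R.N) :
    R.departed r (t + 1) ≤ R.departed r t + 1 := by
  obtain ⟨p, q, h⟩ := R.exists_swaps ht
  rcases h.root_or_path_or_nook with ⟨r', hp, hq⟩ | ⟨r', d, hp, hq⟩ | ⟨l, hp, hq⟩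
  · rcases eq_or_ne r r' with rfl | hr
    · rw [h.departed_succ_of_root hp hq]
      split_ifs <;> omega
    · rw [h.departed_succ_of_root_of_ne hp hq hr]
      omega
  · rw [h.departed_eq (by simp [hp, hq])]
    omega
  · rw [h.departed_eq (by simp [hp, hq])]
    omega

end Run

namespace Run

variable {m : ℕ} {ι : Type*} [Fintype ι] (R : Run m ι) {r r' : Option (Fin m)} {l : Fin m}
  {d d' t t' : ℕ} {x p q : Token m ι}

open Classical in
/-- The tokens in transit located in region `r` at depth more than `d`. -/
noncomputable def deepTransit (r : Option (Fin m)) (d t : ℕ) : Finset (Token m ι) :=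
  Finset.univ.filter fun x =>
    R.charge x t = 0 ∧ region (R.loc t x) = some r ∧ d < depth R.k (R.loc t x)

/-- The number of tokens that have to be in transit at depth more than `d` for the bonus at that
depth: two above a nook, since one token in transit may rest at the nook itself. -/
def threshold (r : Option (Fin m)) (d : ℕ) : ℕ :=
  if r = none then 1 else if d < R.k then 2 else 1

/-- Indicator that the tokens in transit at depth more than `d` reach their threshold. -/
noncomputable def bonus (r : Option (Fin m)) (d t : ℕ) : ℤ :=
  if R.threshold r d ≤ (R.deepTransit r d t).card then 1 else 0

/-- The weight of a vertex in the potential: twice the depth, with negative sign, corrected by the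
bonus. -/
noncomputable def weight (v : Vtx m) (t : ℕ) : ℤ :=
  match v with
  | .root => 0
  | .ord d => 2 * (R.bonus none (d + 1) t - (d + 1))
  | .slot l d => 2 * (R.bonus (some l) (d + 1) t - (d + 1))
  | .nook _ => 1 - 2 * R.k

/-- The potential of the configuration at time `t`. -/
noncomputable def potential (t : ℕ) : ℤ := ∑ x, R.charge x t * R.weight (R.loc t x) t

/-- Step `t` completes a departure from and an arrival to region `r`, at a moment when the region
holds at most the minimal number of tokens in transit. -/
def Merges (r : Option (Fin m)) (t : ℕ) : Prop :=
  R.departed r t < R.departed r (t + 1) ∧ R.arrived r t < R.arrived r (t + 1) ∧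
    R.departed r t ≤ R.arrived r t

open Classical in
/-- The slack of step `t`: the part of its cost that is not paid for by the change of the
potential, by departures and arrivals, or by merges. -/
noncomputable def slack (t : ℕ) : ℤ :=
  4 + (R.potential (t + 1) - R.potential t)
    - 2 * ∑ r, (((R.departed r (t + 1) : ℤ) - R.departed r t) +
        ((R.arrived r (t + 1) : ℤ) - R.arrived r t))
    + 4 * ∑ r, (if R.Merges r t then (1 : ℤ) else 0)

lemma weight_pathVtx (r : Option (Fin m)) (d t : ℕ) :
    R.weight (pathVtx r d) t = 2 * (R.bonus r (d + 1) t - (d + 1)) := by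
  cases r <;> rfl

lemma bonus_cases (r : Option (Fin m)) (d t : ℕ) : R.bonus r d t = 0 ∨ R.bonus r d t = 1 := by
  unfold bonus
  split_ifs <;> simp

variable {R}

lemma mem_deepTransit : x ∈ R.deepTransit r d t ↔
    R.charge x t = 0 ∧ region (R.loc t x) = some r ∧ d < depth R.k (R.loc t x) := by
  simp [deepTransit]

lemma bonus_congr (h : (R.deepTransit r d t).card = (R.deepTransit r d t').card) :
    R.bonus r d t = R.bonus r d t' := by
  rw [bonus, bonus, h]

lemma weight_congr {v : Vtx m}
    (h : ∀ r d, v = pathVtx r d → R.bonus r (d + 1) t = R.bonus r (d + 1) t') :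
    R.weight v t = R.weight v t' := by
  rcases root_or_path_or_nook v with rfl | ⟨r, d, rfl⟩ | ⟨l, rfl⟩
  · rfl
  · rw [weight_pathVtx, weight_pathVtx, h r d rfl]
  · rfl

lemma depth_pos (h : region (R.loc t x) = some r) : 0 < depth R.k (R.loc t x) := by
  have hk := R.two_le_k
  rcases root_or_path_or_nook (R.loc t x) with h' | ⟨r', d, h'⟩ | ⟨l, h'⟩ <;> rw [h'] at h ⊢
  · simp at h
  · simp
  · exact Nat.lt_of_succ_lt hk

lemma depth_eq_of_region (hx : region (R.loc t x) = some r) :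
    R.loc t x = pathVtx r (depth R.k (R.loc t x) - 1) ∨ ∃ l, r = some l ∧ R.loc t x = .nook l := by
  rcases root_or_path_or_nook (R.loc t x) with h | ⟨r', d, h⟩ | ⟨l, h⟩ <;> rw [h] at hx ⊢
  · simp at hx
  · obtain rfl : r' = r := by simpa using hx
    simp
  · exact .inr ⟨l, (Option.some_injective _ hx).symm, rfl⟩

namespace Swaps

lemma potential_succ_sub (h : R.Swaps t p q)
    (ho : ∀ x, x ≠ p → x ≠ q → R.weight (R.loc t x) (t + 1) = R.weight (R.loc t x) t) :
    R.potential (t + 1) - R.potential t =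
      (R.charge p (t + 1) * R.weight (R.loc t q) (t + 1) -
        R.charge p t * R.weight (R.loc t p) t) +
      (R.charge q (t + 1) * R.weight (R.loc t p) (t + 1) -
        R.charge q t * R.weight (R.loc t q) t) := by
  classical
  unfold potential
  rw [← Finset.sum_sub_distrib, Finset.sum_eq_add p q h.ne, h.down, h.up]
  · rintro x - ⟨hp, hq⟩
    rw [h.other x hp hq, ho x hp hq, charge_succ h.lt (by rw [h.other x hp hq]), sub_self]
  · simp
  · simp

/-! ### Slack of swaps at the root -/

lemma deepTransit_succ_of_root (h : R.Swaps t p q) (hp : R.loc t p = .root)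
    (hq : R.loc t q = pathVtx r 0)
    (hd : 1 ≤ d) : R.deepTransit r' d (t + 1) = R.deepTransit r' d t := by
  ext x
  rw [mem_deepTransit, mem_deepTransit]
  rcases eq_or_ne x p with rfl | hxp
  · simp only [h.down, hp, hq, depth_pathVtx, depth_root]
    omega
  rcases eq_or_ne x q with rfl | hxq
  · simp only [h.up, hp, hq, depth_pathVtx, depth_root]
    omega
  · rw [h.other x hxp hxq, charge_succ h.lt (by rw [h.other x hxp hxq])]

lemma slack_of_root (h : R.Swaps t p q) (hp : R.loc t p = .root) (hq : R.loc t q = pathVtx r 0)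
    [Decidable (R.Merges r t)] :
    R.slack t = 4 + (R.charge p (t + 1) - R.charge q t) * (2 * R.bonus r 1 t - 4) +
      4 * (if R.Merges r t then 1 else 0) := by
  classical
  have hbonus (r' : Option (Fin m)) (d : ℕ) : R.bonus r' (d + 1) (t + 1) = R.bonus r' (d + 1) t :=
    bonus_congr (by rw [h.deepTransit_succ_of_root hp hq (Nat.le_add_left 1 d)])
  have hpot := h.potential_succ_sub fun x _ _ => weight_congr fun r' d _ => hbonus r' d
  rw [h.charge_succ_up hp, charge_eq_zero_of_root h.lt.le hp, hq, weight_pathVtx, weight_pathVtx,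
    hbonus] at hpot
  have hcount : ∑ r, (((R.departed r (t + 1) : ℤ) - R.departed r t) +
      ((R.arrived r (t + 1) : ℤ) - R.arrived r t)) = R.charge p (t + 1) - R.charge q t := by
    rw [Finset.sum_eq_single r]
    · rw [h.departed_succ_of_root hp hq, h.arrived_succ_of_root hp hq]
      rcases h.charge_up hp with h1 | h1 <;> rcases h.charge_succ_down hp with h2 | h2 <;>
        simp [h1, h2]
    · intro r' _ hr
      rw [h.departed_succ_of_root_of_ne hp hq hr, h.arrived_succ_of_root_of_ne hp hq hr]
      ring
    · simp
  have hmerges : ∑ r', (if R.Merges r' t then (1 : ℤ) else 0) =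
      if R.Merges r t then 1 else 0 := by
    rw [Finset.sum_eq_single r]
    · congr
    · intro r' _ hr
      rw [if_neg]
      exact fun hm => (h.departed_succ_of_root_of_ne hp hq hr ▸ hm.1).false
    · simp
  rw [slack, hpot, hcount, hmerges]
  push_cast
  ring_nf

lemma deepTransit_one_eq_transit (h : R.Swaps t p q) (hq : R.loc t q = pathVtx r 0)
    (hv : R.charge q t ≠ 0) :
    R.deepTransit r 1 t = R.transit r t := by
  ext x
  rw [mem_deepTransit, mem_transit]
  refine ⟨fun hx => ⟨hx.1, hx.2.1⟩, fun ⟨h0, hr⟩ => ⟨h0, hr, ?_⟩⟩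
  rcases depth_eq_of_region hr with hx | ⟨l, -, hx⟩
  · by_contra! hd
    have hpos := depth_pos hr
    rw [show depth R.k (R.loc t x) - 1 = 0 by omega, ← hq] at hx
    exact hv (R.loc_injective h.lt.le hx ▸ h0)
  · rw [hx, depth_nook]
    exact R.two_le_k

lemma bonus_one (h : R.Swaps t p q) (hq : R.loc t q = pathVtx r 0) (hv : R.charge q t ≠ 0) :
    R.bonus r 1 t = if R.arrived r t < R.departed r t then 1 else 0 := by
  have hcard := card_transit r h.lt.le
  have hk : 1 < R.k := R.two_le_k
  rw [bonus, h.deepTransit_one_eq_transit hq hv, threshold, if_pos hk]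
  congr 1
  split_ifs at hcard ⊢ <;> simp only [eq_iff_iff] <;> omega

lemma slack_nonneg_of_root (h : R.Swaps t p q) (hp : R.loc t p = .root)
    (hq : R.loc t q = pathVtx r 0) :
    0 ≤ R.slack t := by
  classical
  rw [h.slack_of_root hp hq]
  have hm : (0 : ℤ) ≤ if R.Merges r t then 1 else 0 := by split_ifs <;> simp
  by_cases hpq : R.charge q t = -1 ∧ R.charge p (t + 1) = 1
  · obtain ⟨h1, h2⟩ := hpq
    rw [h1, h2, h.bonus_one hq (by simp [h1])]
    by_cases hlt : R.arrived r t < R.departed r t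
    · rw [if_pos hlt]
      linarith
    · rw [if_neg hlt, if_pos ⟨by simp [h.departed_succ_of_root hp hq, h1],
        by simp [h.arrived_succ_of_root hp hq, h2], not_lt.1 hlt⟩]
      norm_num
  · rcases h.charge_up hp with h1 | h1 <;> rcases h.charge_succ_down hp with h2 | h2 <;>
      rcases R.bonus_cases r 1 t with h3 | h3 <;> rw [h1, h2] at hpq ⊢ <;> rw [h3] <;> omega

lemma two_le_slack_of_departed_lt (h : R.Swaps t p q) (hp : R.loc t p = .root)
    (hq : R.loc t q = pathVtx r 0)
    (ho : R.departed r t < R.departed r (t + 1)) (hi : R.arrived r (t + 1) = R.arrived r t)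
    (hlt : R.arrived r t < R.departed r t) : 2 ≤ R.slack t := by
  classical
  rw [h.slack_of_root hp hq]
  have hm : (0 : ℤ) ≤ if R.Merges r t then 1 else 0 := by split_ifs <;> simp
  rw [h.departed_succ_of_root hp hq] at ho
  rw [h.arrived_succ_of_root hp hq] at hi
  have h1 : R.charge q t = -1 := by
    by_contra h1
    simp [h1] at ho
  have h2 : R.charge p (t + 1) = 0 := (h.charge_succ_down hp).resolve_right fun h2 => by
    simp [h2] at hi
  rw [h.bonus_one hq (by simp [h1]), if_pos hlt, h1, h2]
  linarith

/-! ### Slack of swaps at a nook -/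

lemma slack_of_region_eq (h : R.Swaps t p q) (hr : region (R.loc t p) = region (R.loc t q)) :
    R.slack t = 4 + (R.potential (t + 1) - R.potential t) := by
  simp [slack, Merges, h.departed_eq hr, h.arrived_eq hr]

lemma deepTransit_succ_of_nook (h : R.Swaps t p q) (hp : R.loc t p = pathVtx (some l) (R.k - 1))
    (hq : R.loc t q = .nook l) (r : Option (Fin m)) (d : ℕ) :
    R.deepTransit r d (t + 1) = R.deepTransit r d t := by
  have hk : R.k - 1 + 1 = R.k := Nat.sub_add_cancel (Nat.le_of_succ_le R.two_le_k)
  have hr : region (R.loc t p) = region (R.loc t q) := by simp [hp, hq]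
  ext x
  rw [mem_deepTransit, mem_deepTransit, h.charge_eq hr, h.region_eq hr]
  rcases eq_or_ne x p with rfl | hxp
  · rw [h.down, hp, hq, depth_pathVtx, depth_nook, hk]
  rcases eq_or_ne x q with rfl | hxq
  · rw [h.up, hp, hq, depth_pathVtx, depth_nook, hk]
  rw [h.other x hxp hxq]

lemma two_le_slack_of_nook (h : R.Swaps t p q) (hp : R.loc t p = pathVtx (some l) (R.k - 1))
    (hq : R.loc t q = .nook l) : 2 ≤ R.slack t := by
  have hr : region (R.loc t p) = region (R.loc t q) := by simp [hp, hq]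
  have hbonus (r : Option (Fin m)) (d : ℕ) : R.bonus r d (t + 1) = R.bonus r d t :=
    bonus_congr (by rw [h.deepTransit_succ_of_nook hp hq])
  rw [h.slack_of_region_eq hr, h.potential_succ_sub fun x _ _ => weight_congr fun r d _ =>
    hbonus r _, hp, hq, weight_pathVtx, weight_pathVtx, h.charge_eq hr, h.charge_eq hr, hbonus]
  simp only [weight, Nat.cast_sub (Nat.le_of_succ_le R.two_le_k), Nat.cast_one]
  rcases R.bonus_cases (some l) (R.k - 1 + 1) t with h3 | h3 <;>
    rcases R.charge_cases p t with h1 | h1 | h1 <;>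
    rcases R.charge_cases q t with h2 | h2 | h2 <;> rw [h1, h2, h3] <;> linarith

/-! ### Slack of swaps along a path -/

lemma deepTransit_succ_of_path (h : R.Swaps t p q) (hp : R.loc t p = pathVtx r d)
    (hq : R.loc t q = pathVtx r (d + 1))
    (hne : ¬(r' = r ∧ d' = d + 1)) : R.deepTransit r' d' (t + 1) = R.deepTransit r' d' t := by
  have hr : region (R.loc t p) = region (R.loc t q) := by simp [hp, hq]
  ext x
  rw [mem_deepTransit, mem_deepTransit, h.charge_eq hr, h.region_eq hr]
  rcases eq_or_ne x p with rfl | hxp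
  · simp only [h.down, hp, hq, depth_pathVtx, region_pathVtx, Option.some_inj]
    have hd : r = r' → d' ≠ d + 1 := fun hr hd => hne ⟨hr.symm, hd⟩
    refine and_congr_right fun _ => and_congr_right fun hr => ?_
    have := hd hr
    omega
  rcases eq_or_ne x q with rfl | hxq
  · simp only [h.up, hp, hq, depth_pathVtx, region_pathVtx, Option.some_inj]
    have hd : r = r' → d' ≠ d + 1 := fun hr hd => hne ⟨hr.symm, hd⟩
    refine and_congr_right fun _ => and_congr_right fun hr => ?_
    have := hd hr
    omega
  rw [h.other x hxp hxq]

lemma card_deepTransit_succ (h : R.Swaps t p q) (hr : region (R.loc t p) = region (R.loc t q))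
    (hv : R.charge p t = 0 ↔ R.charge q t = 0) (r : Option (Fin m)) (d : ℕ) :
    (R.deepTransit r d (t + 1)).card = (R.deepTransit r d t).card := by
  classical
  refine Finset.card_equiv (Equiv.swap p q) fun x => ?_
  rw [mem_deepTransit, mem_deepTransit, h.charge_eq hr]
  rcases eq_or_ne x p with rfl | hxp
  · rw [Equiv.swap_apply_left, h.down, hv]
  rcases eq_or_ne x q with rfl | hxq
  · rw [Equiv.swap_apply_right, h.up, hv]
  rw [Equiv.swap_apply_of_ne_of_ne hxp hxq, h.other x hxp hxq]

lemma slack_of_path (h : R.Swaps t p q) (hp : R.loc t p = pathVtx r d)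
    (hq : R.loc t q = pathVtx r (d + 1)) :
    R.slack t = 4 + 2 * (R.charge p t * (R.bonus r (d + 2) t - 1 - R.bonus r (d + 1) t) +
      R.charge q t * (R.bonus r (d + 1) (t + 1) + 1 - R.bonus r (d + 2) t)) := by
  have hr : region (R.loc t p) = region (R.loc t q) := by simp [hp, hq]
  have hbonus : R.bonus r (d + 2) (t + 1) = R.bonus r (d + 2) t :=
    bonus_congr (by rw [h.deepTransit_succ_of_path hp hq (by omega)])
  rw [h.slack_of_region_eq hr, h.potential_succ_sub, h.charge_eq hr, h.charge_eq hr, hp, hq]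
  · simp only [weight_pathVtx, hbonus]
    push_cast
    ring
  · intro x hxp _
    refine weight_congr fun r' d' hx => bonus_congr ?_
    rw [h.deepTransit_succ_of_path hp hq]
    rintro ⟨rfl, hd⟩
    obtain rfl : d' = d := Nat.succ_injective hd
    exact hxp (R.loc_injective h.lt.le (hx.trans hp.symm))

lemma slack_of_path_of_charge_eq (h : R.Swaps t p q) (hp : R.loc t p = pathVtx r d)
    (hq : R.loc t q = pathVtx r (d + 1)) (hv : R.charge p t = R.charge q t) : R.slack t = 4 := by
  rw [h.slack_of_path hp hq,
    bonus_congr (h.card_deepTransit_succ (by simp [hp, hq]) (by rw [hv]) r (d + 1)), hv]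
  ring

lemma four_le_slack_of_path (h : R.Swaps t p q) (hp : R.loc t p = pathVtx r d)
    (hq : R.loc t q = pathVtx r (d + 1))
    (hv : R.charge p t = -1 ∨ R.charge q t = 1) : 4 ≤ R.slack t := by
  by_cases heq : R.charge p t = R.charge q t
  · exact (h.slack_of_path_of_charge_eq hp hq heq).ge
  rw [h.slack_of_path hp hq]
  have h3 := R.bonus_cases r (d + 1) t
  have h4 := R.bonus_cases r (d + 1) (t + 1)
  have h5 := R.bonus_cases r (d + 2) t
  rcases R.charge_cases p t with h1 | h1 | h1 <;> rcases R.charge_cases q t with h2 | h2 | h2 <;>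
    rw [h1, h2] at hv heq ⊢ <;> omega

lemma mem_deepTransit_succ_or_nook (h : R.Swaps t p q) (hq : R.loc t q = pathVtx r (d + 1))
    (hv : R.charge q t ≠ 0) (hx : x ∈ R.deepTransit r (d + 1) t) : x ∈ R.deepTransit r (d + 2) t ∨
      R.k = d + 2 ∧ ∃ l, r = some l ∧ R.loc t x = .nook l := by
  obtain ⟨h0, hr, hd⟩ := mem_deepTransit.1 hx
  rw [mem_deepTransit]
  rcases depth_eq_of_region hr with hloc | ⟨l, rfl, hloc⟩
  · refine .inl ⟨h0, hr, lt_of_le_of_ne hd fun hd => hv ?_⟩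
    rw [← hd, Nat.add_succ_sub_one, ← hq] at hloc
    rwa [← R.loc_injective h.lt.le hloc]
  · by_cases hk : R.k = d + 2
    · exact .inr ⟨hk, l, rfl, hloc⟩
    · rw [hloc, depth_nook] at hd ⊢
      exact .inl ⟨h0, rfl, by omega⟩

lemma bonus_le_bonus_succ (h : R.Swaps t p q) (hq : R.loc t q = pathVtx r (d + 1))
    (hv : R.charge q t ≠ 0) :
    R.bonus r (d + 1) t ≤ R.bonus r (d + 2) t := by
  suffices hle : R.threshold r (d + 1) ≤ (R.deepTransit r (d + 1) t).card →
      R.threshold r (d + 2) ≤ (R.deepTransit r (d + 2) t).card by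
    unfold bonus
    split_ifs <;> simp_all
  intro hle
  by_cases hc : R.k = d + 2 ∧ ∃ l, r = some l
  · classical
    obtain ⟨hk, l, rfl⟩ := hc
    obtain ⟨y, hy⟩ := R.exists_loc_eq h.lt.le (v := .nook l) trivial
    have hcard : (R.deepTransit (some l) (d + 1) t).card ≤
        (R.deepTransit (some l) (d + 2) t).card + 1 := by
      refine (Finset.card_le_card fun x hx => Finset.mem_insert.2 ?_).trans
        (Finset.card_insert_le y _)
      rcases h.mem_deepTransit_succ_or_nook hq hv hx with hx | ⟨-, l', hl, hx⟩
      · exact .inr hx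
      · rw [← Option.some_injective _ hl, ← hy] at hx
        exact .inl (R.loc_injective h.lt.le hx)
    simp only [threshold, hk, reduceCtorEq, if_false, Nat.lt_succ_self, lt_self_iff_false,
      if_true] at hle ⊢
    omega
  · have hcard : (R.deepTransit r (d + 1) t).card ≤ (R.deepTransit r (d + 2) t).card :=
      Finset.card_le_card fun x hx => (h.mem_deepTransit_succ_or_nook hq hv hx).resolve_right
        fun ⟨hk, l, hl, _⟩ => hc ⟨hk, l, hl⟩
    have hthr : R.threshold r (d + 2) ≤ R.threshold r (d + 1) := by
      unfold threshold
      split_ifs <;> omega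
    omega

lemma slack_nonneg_of_path (h : R.Swaps t p q) (hp : R.loc t p = pathVtx r d)
    (hq : R.loc t q = pathVtx r (d + 1)) :
    0 ≤ R.slack t := by
  by_cases hw : R.charge p t = -1 ∨ R.charge q t = 1
  · exact (by norm_num : (0 : ℤ) ≤ 4).trans (h.four_le_slack_of_path hp hq hw)
  rw [h.slack_of_path hp hq]
  by_cases hpq : R.charge p t = 1 ∧ R.charge q t = -1
  · obtain ⟨h1, h2⟩ := hpq
    have hle := h.bonus_le_bonus_succ hq (by simp [h2])
    rw [bonus_congr (h.card_deepTransit_succ (by simp [hp, hq]) (by simp [h1, h2]) r (d + 1)),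
      h1, h2]
    linarith
  · have h3 := R.bonus_cases r (d + 1) t
    have h4 := R.bonus_cases r (d + 1) (t + 1)
    have h5 := R.bonus_cases r (d + 2) t
    rcases R.charge_cases p t with h1 | h1 | h1 <;> rcases R.charge_cases q t with h2 | h2 | h2 <;>
      rw [h1, h2] at hpq hw ⊢ <;> omega

lemma two_le_slack_of_card_deepTransit_le_one (h : R.Swaps t p q)
    (hp : R.loc t p = pathVtx (some l) d)
    (hq : R.loc t q = pathVtx (some l) (d + 1)) (hd : d + 1 < R.k) (hv : R.charge q t = 0)
    (hcard : (R.deepTransit (some l) (d + 1) t).card ≤ 1) : 2 ≤ R.slack t := by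
  have hlt : (R.deepTransit (some l) (d + 2) t).card < (R.deepTransit (some l) (d + 1) t).card := by
    refine Finset.card_lt_card (Finset.ssubset_iff_subset_ne.2 ⟨fun x hx => ?_, fun heq => ?_⟩)
    · rw [mem_deepTransit] at hx ⊢
      exact ⟨hx.1, hx.2.1, Nat.lt_of_succ_lt hx.2.2⟩
    · have hmem : q ∈ R.deepTransit (some l) (d + 1) t := by simp [mem_deepTransit, hv, hq]
      simp [← heq, mem_deepTransit, hq] at hmem
  have h1 : R.bonus (some l) (d + 1) t = 0 := by
    simp only [bonus, threshold, reduceCtorEq, if_false, if_pos hd]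
    rw [if_neg (by omega)]
  have h2 : R.bonus (some l) (d + 2) t = 0 := by
    have hthr : 1 ≤ R.threshold (some l) (d + 2) := by
      unfold threshold
      split_ifs <;> omega
    rw [bonus, if_neg (by omega)]
  rw [h.slack_of_path hp hq, h1, h2, hv]
  rcases R.charge_cases p t with h3 | h3 | h3 <;> rw [h3] <;> norm_num

end Swaps

lemma slack_nonneg (ht : t < R.N) : 0 ≤ R.slack t := by
  obtain ⟨p, q, h⟩ := R.exists_swaps ht
  rcases h.root_or_path_or_nook with ⟨r', hp, hq⟩ | ⟨r', d, hp, hq⟩ | ⟨l, hp, hq⟩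
  · exact h.slack_nonneg_of_root hp hq
  · exact h.slack_nonneg_of_path hp hq
  · exact (by norm_num : (0 : ℤ) ≤ 2).trans (h.two_le_slack_of_nook hp hq)

end Run

/-! ### The queue of the ordering gadget -/

namespace Run

variable {m : ℕ} {ι : Type*} [Fintype ι] (R : Run m ι) {p q p' q' : Token m ι} {b b' c : ι}
  {t : ℕ}

/-- At step `t` two tokens that have not yet departed from the ordering gadget are exchanged, with
`b` moving away from the root. -/
def QueueSwap (t : ℕ) (b c : ι) : Prop :=
  R.Swaps t (.inr (.inl b)) (.inr (.inl c)) ∧ R.AtHome (.inl b) t ∧ R.AtHome (.inl c) t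

open Classical in
/-- The distance from the root of a token waiting to depart from the ordering gadget, and `0` after
its departure. -/
noncomputable def queuePos (b : ι) (t : ℕ) : ℕ :=
  if R.AtHome (.inl b) t then depth R.k (R.loc t (.inr (.inl b))) else 0

/-- The tokens ahead of `b` in the queue of the ordering gadget. -/
noncomputable def ahead (b : ι) (t : ℕ) : Finset ι :=
  Finset.univ.filter fun c => R.queuePos c t < R.queuePos b t

/-- The number of tokens ahead of `b` in the queue of the ordering gadget; `0` after the departure
of `b`. -/
noncomputable def rank (b : ι) (t : ℕ) : ℕ := (R.ahead b t).card

variable {R}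

lemma Swaps.unique (h : R.Swaps t p q) (h' : R.Swaps t p' q') : p = p' ∧ q = q' := by
  have hinj := R.loc_injective h.lt.le
  have hmove : R.loc (t + 1) p ≠ R.loc t p := fun he => h.ne (hinj (he.symm.trans h.down))
  rcases eq_or_ne p p' with rfl | hp
  · exact ⟨rfl, hinj (h.down.symm.trans h'.down)⟩
  rcases eq_or_ne p q' with rfl | hq
  · obtain rfl : q = p' := hinj (h.down.symm.trans h'.up)
    exact absurd h'.arc h.arc.asymm
  · exact absurd (h'.other p hp hq) hmove

lemma mem_ahead : c ∈ R.ahead b t ↔ R.queuePos c t < R.queuePos b t := by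
  simp [ahead]

lemma queuePos_of_atHome (h : R.AtHome (.inl b) t) :
    R.queuePos b t = depth R.k (R.loc t (.inr (.inl b))) := if_pos h

lemma queuePos_eq_zero : R.queuePos b t = 0 ↔ ¬R.AtHome (.inl b) t := by
  refine ⟨fun h hb => ?_, fun h => if_neg h⟩
  rw [queuePos_of_atHome hb] at h
  exact (depth_pos hb.region).ne' h

lemma AtHome.loc_eq_pathVtx (h : R.AtHome (.inl b) t) :
    R.loc t (.inr (.inl b)) = pathVtx none (R.queuePos b t - 1) := by
  rw [queuePos_of_atHome h]
  exact (depth_eq_of_region h.region).resolve_right fun ⟨_, hl, _⟩ => Option.some_ne_none _ hl.symm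

lemma AtHome.eq_of_queuePos_eq (h : R.AtHome (.inl b) t) (ht : t ≤ R.N)
    (hpos : R.queuePos b t = R.queuePos c t) : b = c := by
  have hc : R.AtHome (.inl c) t := by
    by_contra hc
    exact queuePos_eq_zero.1 (hpos.trans (queuePos_eq_zero.2 hc)) h
  have hloc : R.loc t (.inr (.inl b)) = R.loc t (.inr (.inl c)) := by
    rw [h.loc_eq_pathVtx, hc.loc_eq_pathVtx, hpos]
  simpa using R.loc_injective ht hloc

lemma Swaps.queuePos_succ_cases (h : R.Swaps t p q) (hb : R.AtHome (.inl b) t) :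
    R.queuePos b (t + 1) = R.queuePos b t ∨
      .inr (.inl b) = p ∧ R.queuePos b (t + 1) = R.queuePos b t + 1 ∨
      .inr (.inl b) = q ∧ R.queuePos b t = R.queuePos b (t + 1) + 1 := by
  have hr := hb.region
  by_cases hmove : .inr (.inl b) ≠ p ∧ .inr (.inl b) ≠ q
  · have hloc := h.other _ hmove.1 hmove.2
    left
    rw [queuePos_of_atHome hb, queuePos_of_atHome ((atHome_succ_iff (by rw [hloc])).2 hb), hloc]
  rcases h.root_or_path_or_nook with ⟨r, hp, hq⟩ | ⟨r, d, hp, hq⟩ | ⟨l, hp, hq⟩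
  · have hbp : .inr (.inl b) ≠ p := by
      rintro rfl
      exact not_atHome_of_root hp hb
    obtain rfl : .inr (.inl b) = q := by simpa [hbp] using hmove
    have hb' := not_atHome_of_root (h.up.trans hp)
    exact .inr (.inr ⟨rfl, by simp [queuePos_of_atHome hb, queuePos_eq_zero.2 hb', hq]⟩)
  · have hb' : R.AtHome (.inl b) (t + 1) :=
      (atHome_succ_iff (h.region_eq (by simp [hp, hq]) _)).2 hb
    rw [queuePos_of_atHome hb, queuePos_of_atHome hb']
    by_cases hbp : .inr (.inl b) = p
    · exact .inr (.inl ⟨hbp, by simp [hbp, h.down, hp, hq]⟩)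
    · obtain rfl : .inr (.inl b) = q := by simpa [hbp] using hmove
      exact .inr (.inr ⟨rfl, by simp [h.up, hp, hq]⟩)
  · have hbp : .inr (.inl b) ≠ p := by
      rintro rfl
      simp [hp, home] at hr
    obtain rfl : .inr (.inl b) = q := by simpa [hbp] using hmove
    simp [hq, home] at hr

lemma queuePos_succ_lt_iff (ht : t < R.N) (hb : R.AtHome (.inl b) (t + 1))
    (hbc : ¬R.QueueSwap t b c) (hcb : ¬R.QueueSwap t c b) :
    R.queuePos c (t + 1) < R.queuePos b (t + 1) ↔ R.queuePos c t < R.queuePos b t := by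
  obtain ⟨p, q, h⟩ := R.exists_swaps ht
  have hb0 := hb.mono (Nat.le_succ t)
  have hposb := mt queuePos_eq_zero.1 (not_not.2 hb)
  have hposb0 := mt queuePos_eq_zero.1 (not_not.2 hb0)
  by_cases hc0 : R.AtHome (.inl c) t
  · rcases eq_or_ne b c with rfl | hne
    · simp
    have hne' := mt (hb.eq_of_queuePos_eq ht) hne
    have hne0 := mt (hb0.eq_of_queuePos_eq ht.le) hne
    rcases h.queuePos_succ_cases hb0 with hb1 | ⟨hbp, hb1⟩ | ⟨hbq, hb1⟩ <;>
      rcases h.queuePos_succ_cases hc0 with hc1 | ⟨hcp, hc1⟩ | ⟨hcq, hc1⟩ <;>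
      first
      | omega
      | exact absurd ⟨by rwa [hbp, hcq], hb0, hc0⟩ hbc
      | exact absurd ⟨by rwa [hbq, hcp], hc0, hb0⟩ hcb
  · rw [queuePos_eq_zero.2 hc0, queuePos_eq_zero.2 (mt (·.mono (Nat.le_succ t)) hc0)]
    omega

lemma rank_succ (ht : t < R.N) (hb : R.AtHome (.inl b) (t + 1))
    (hn : ∀ c, ¬R.QueueSwap t b c ∧ ¬R.QueueSwap t c b) : R.rank b (t + 1) = R.rank b t := by
  rw [rank, rank]
  congr 1
  ext c
  rw [mem_ahead, mem_ahead, queuePos_succ_lt_iff ht hb (hn c).1 (hn c).2]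

lemma rank_lt_departed_succ (ht : t < R.N) (h : R.AtHome (.inl b) t)
    (h' : ¬R.AtHome (.inl b) (t + 1)) : R.rank b t < R.departed none (t + 1) := by
  obtain ⟨p, q, hs⟩ := R.exists_swaps ht
  have hpos := queuePos_eq_zero.2 h'
  have hone := hs.queuePos_succ_cases h
  rw [departed_none, rank]
  refine Finset.card_lt_card ((Finset.ssubset_iff_of_subset fun c hc => ?_).2 ?_)
  · rw [mem_ahead] at hc
    have hc0 : ¬R.AtHome (.inl c) t := queuePos_eq_zero.1 (by omega)
    simpa using mt (·.mono (Nat.le_succ t)) hc0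
  · exact ⟨b, by simpa using h', by simp [mem_ahead]⟩

lemma departed_le_rank (h : R.AtHome (.inl b) t) : R.departed none t ≤ R.rank b t := by
  rw [departed_none, rank]
  refine Finset.card_le_card fun c hc => ?_
  rw [mem_ahead, queuePos_eq_zero.2 (by simpa using hc)]
  exact Nat.pos_of_ne_zero (mt queuePos_eq_zero.1 (not_not.2 h))

lemma rank_eq_zero (h : ¬R.AtHome (.inl b) t) : R.rank b t = 0 := by
  simp [rank, ahead, queuePos_eq_zero.2 h]

lemma departed_pos (h : ¬R.AtHome (.inl b) t) : 0 < R.departed none t := by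
  rw [departed_none]
  exact Finset.card_pos.2 ⟨b, by simpa using h⟩

lemma queuePos_zero (b : ι) : R.queuePos b 0 = R.ordPos b + 1 := by
  rw [queuePos_of_atHome (R.atHome_zero _), R.init_X]
  rfl

lemma rank_zero (b : ι) : R.rank b 0 = R.ordPos b := by
  have himage : (R.ahead b 0).image R.ordPos = Finset.range (R.ordPos b) := by
    ext d
    simp only [Finset.mem_image, mem_ahead, queuePos_zero, Nat.add_lt_add_iff_right,
      Finset.mem_range]
    refine ⟨fun ⟨_, hc, hd⟩ => hd ▸ hc, fun hd => ?_⟩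
    obtain ⟨c, rfl⟩ := R.exists_ordPos_eq (hd.trans (R.ordPos_lt b))
    exact ⟨c, hd, rfl⟩
  rw [rank, ← Finset.card_image_of_injective _ R.ordPos_injective, himage, Finset.card_range]

namespace QueueSwap

lemma unique {c' : ι} (h : R.QueueSwap t b b') (h' : R.QueueSwap t c c') : b = c ∧ b' = c' := by
  simpa using h.1.unique h'.1

lemma exists_loc_eq (h : R.QueueSwap t b b') : ∃ d, R.loc t (.inr (.inl b)) = pathVtx none d ∧
    R.loc t (.inr (.inl b')) = pathVtx none (d + 1) := by
  obtain ⟨hs, hb, hb'⟩ := h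
  have hr := hb.region
  have hr' := hb'.region
  rcases hs.root_or_path_or_nook with ⟨r, hp, -⟩ | ⟨r, d, hp, hq⟩ | ⟨l, -, hq⟩
  · simp [hp] at hr
  · obtain rfl : r = none := by simpa [hp, home] using hr
    exact ⟨d, hp, hq⟩
  · simp [hq, home] at hr'

lemma atHome_succ_iff (h : R.QueueSwap t b b') (a : ι ⊕ ι) : R.AtHome a (t + 1) ↔ R.AtHome a t := by
  obtain ⟨d, hp, hq⟩ := h.exists_loc_eq
  exact Run.atHome_succ_iff (h.1.region_eq (by simp [hp, hq]) _)

lemma queuePos_left (h : R.QueueSwap t b b') : R.queuePos b' t = R.queuePos b t + 1 := by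
  obtain ⟨d, hp, hq⟩ := h.exists_loc_eq
  simp [queuePos_of_atHome h.2.1, queuePos_of_atHome h.2.2, hp, hq]

lemma queuePos_succ_left (h : R.QueueSwap t b b') : R.queuePos b (t + 1) = R.queuePos b' t := by
  rw [queuePos_of_atHome h.2.2, queuePos_of_atHome ((h.atHome_succ_iff _).2 h.2.1), h.1.down]

lemma queuePos_succ_right (h : R.QueueSwap t b b') : R.queuePos b' (t + 1) = R.queuePos b t := by
  rw [queuePos_of_atHome h.2.1, queuePos_of_atHome ((h.atHome_succ_iff _).2 h.2.2), h.1.up]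

lemma queuePos_succ_of_ne (h : R.QueueSwap t b b') (hb : c ≠ b) (hb' : c ≠ b') :
    R.queuePos c (t + 1) = R.queuePos c t := by
  classical
  have hloc := h.1.other (.inr (.inl c)) (by simpa using hb) (by simpa using hb')
  simp only [queuePos, h.atHome_succ_iff, hloc]

lemma rank_right (h : R.QueueSwap t b b') : R.rank b' t = R.rank b t + 1 := by
  classical
  have hahead : R.ahead b' t = insert b (R.ahead b t) := by
    ext c
    rw [mem_ahead, Finset.mem_insert, mem_ahead, h.queuePos_left, Nat.lt_succ_iff_lt_or_eq, or_comm,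
      eq_comm]
    refine or_congr_left ⟨fun hc => (h.2.1.eq_of_queuePos_eq h.1.lt.le hc).symm, ?_⟩
    rintro rfl
    rfl
  rw [rank, hahead, Finset.card_insert_of_notMem (by simp [mem_ahead]), rank]

lemma rank_succ_right (h : R.QueueSwap t b b') : R.rank b' (t + 1) = R.rank b t := by
  rw [rank, rank]
  congr 1
  ext c
  rw [mem_ahead, mem_ahead, h.queuePos_succ_right]
  rcases eq_or_ne c b with rfl | hb
  · simp [h.queuePos_succ_left, h.queuePos_left]
  rcases eq_or_ne c b' with rfl | hb'
  · simp [h.queuePos_succ_right, h.queuePos_left]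
  rw [h.queuePos_succ_of_ne hb hb']

lemma rank_succ_left (h : R.QueueSwap t b b') : R.rank b (t + 1) = R.rank b t + 1 := by
  classical
  rw [← h.rank_right, rank, rank]
  refine Finset.card_equiv (Equiv.swap b b') fun c => ?_
  rw [mem_ahead, mem_ahead, h.queuePos_succ_left]
  rcases eq_or_ne c b with rfl | hb
  · simp [h.queuePos_succ_left]
  rcases eq_or_ne c b' with rfl | hb'
  · simp [h.queuePos_succ_right]
  rw [h.queuePos_succ_of_ne hb hb', Equiv.swap_apply_of_ne_of_ne hb hb']

end QueueSwap

end Run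

/-! ### Departures from the ordering gadget and crossed cuts -/

namespace Run

variable {m : ℕ} {ι : Type*} [Fintype ι] (R : Run m ι)

/-- The number of tokens of slot `l` among the first `a` tokens of the ordering gadget. -/
noncomputable def prefixCount (l : Fin m) (a : ℕ) : ℕ :=
  (Finset.univ.filter fun b => R.slot b = l ∧ R.ordPos b < a).card

open Classical in
/-- The steps that exchange two tokens of different slots across the cut between the first `a`
tokens of the queue and the others, where departed tokens still count. -/
noncomputable def cutSwaps (a : ℕ) : Finset ℕ :=
  (Finset.range R.N).filter fun t =>
    ∃ b b', R.QueueSwap t b b' ∧ R.slot b ≠ R.slot b' ∧ R.rank b t + 1 = a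

/-- The tokens of slot `l` that have departed or are among the first `a` of the queue, where
departed tokens still count. -/
noncomputable def queue (a : ℕ) (l : Fin m) (t : ℕ) : Finset ι :=
  Finset.univ.filter fun b => R.slot b = l ∧ R.rank b t < a

variable {R} {t a : ℕ} {l : Fin m} {b c : ι}

lemma mem_cutSwaps : t ∈ R.cutSwaps a ↔
    ∃ b b', R.QueueSwap t b b' ∧ R.slot b ≠ R.slot b' ∧ R.rank b t + 1 = a := by
  classical
  rw [cutSwaps, Finset.mem_filter, Finset.mem_range, and_iff_right_iff_imp]
  exact fun ⟨_, _, h, _⟩ => h.1.lt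

lemma mem_queue : b ∈ R.queue a l t ↔ R.slot b = l ∧ R.rank b t < a := by
  simp [queue]

lemma card_queue_zero (a : ℕ) (l : Fin m) : (R.queue a l 0).card = R.prefixCount l a := by
  simp only [queue, prefixCount, rank_zero]

lemma card_queue_departed (l : Fin m) (t : ℕ) :
    (R.queue (R.departed none t) l t).card = R.departedFor l t := by
  classical
  rw [queue, departedFor]
  congr 1
  refine Finset.filter_congr fun b _ => and_congr_right fun _ => ⟨fun h hb => ?_, fun h => ?_⟩
  · exact h.not_ge (departed_le_rank hb)
  · rw [rank_eq_zero h]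
    exact departed_pos h

lemma rank_succ_lt_iff (ht : t < R.N) (ha : R.departed none (t + 1) ≤ a)
    (hup : ∀ c, R.QueueSwap t b c → R.rank b t + 1 ≠ a)
    (hdown : ∀ c, R.QueueSwap t c b → R.rank c t + 1 ≠ a) :
    R.rank b (t + 1) < a ↔ R.rank b t < a := by
  by_cases hb : R.AtHome (.inl b) (t + 1)
  · by_cases hleft : ∃ c, R.QueueSwap t b c
    · obtain ⟨c, h⟩ := hleft
      have hsucc := h.rank_succ_left
      have hne := hup c h
      omega
    by_cases hright : ∃ c, R.QueueSwap t c b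
    · obtain ⟨c, h⟩ := hright
      have hsucc := h.rank_succ_right
      have hrank := h.rank_right
      have hne := hdown c h
      omega
    rw [rank_succ ht hb fun c => ⟨fun h => hleft ⟨c, h⟩, fun h => hright ⟨c, h⟩⟩]
  · refine iff_of_true ?_ ?_
    · rw [rank_eq_zero hb]
      exact (departed_pos hb).trans_le ha
    · by_cases hb' : R.AtHome (.inl b) t
      · exact (rank_lt_departed_succ ht hb' hb).trans_le ha
      · rw [rank_eq_zero hb']
        exact (departed_pos hb).trans_le ha

lemma QueueSwap.rank_succ_lt_iff {b' : ι} (h : R.QueueSwap t b b')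
    (ha : R.departed none (t + 1) ≤ a) (hb : c ≠ b) (hb' : c ≠ b') :
    R.rank c (t + 1) < a ↔ R.rank c t < a :=
  Run.rank_succ_lt_iff h.1.lt ha (fun _ h' => absurd (h'.unique h).1 hb)
    fun _ h' => absurd (h'.unique h).2 hb'

lemma card_queue_succ (l : Fin m) (ht : t < R.N) (ha : R.departed none (t + 1) ≤ a)
    (hcut : t ∉ R.cutSwaps a) : (R.queue a l (t + 1)).card = (R.queue a l t).card := by
  classical
  by_cases hswap : ∃ b b', R.QueueSwap t b b' ∧ R.rank b t + 1 = a
  · obtain ⟨b, b', h, hrank⟩ := hswap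
    have hslot : R.slot b = R.slot b' := by
      by_contra hne
      exact hcut (mem_cutSwaps.2 ⟨b, b', h, hne, hrank⟩)
    refine Finset.card_equiv (Equiv.swap b b') fun c => ?_
    rw [mem_queue, mem_queue]
    rcases eq_or_ne c b with rfl | hb
    · rw [Equiv.swap_apply_left, hslot, h.rank_succ_left, h.rank_right]
    rcases eq_or_ne c b' with rfl | hb'
    · rw [Equiv.swap_apply_right, hslot, h.rank_succ_right]
    rw [Equiv.swap_apply_of_ne_of_ne hb hb', h.rank_succ_lt_iff ha hb hb']
  · congr 1
    ext c
    rw [mem_queue, mem_queue, rank_succ_lt_iff ht ha (fun d h hr => hswap ⟨c, d, h, hr⟩)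
      fun d h hr => hswap ⟨d, c, h, hr⟩]

lemma card_queue_succ_of_mem_cutSwaps (l : Fin m) (ha : R.departed none (t + 1) ≤ a)
    (hcut : t ∈ R.cutSwaps a) : (R.queue a l (t + 1)).card ≤ (R.queue a l t).card + 1 ∧
      (R.queue a l t).card ≤ (R.queue a l (t + 1)).card + 1 := by
  classical
  obtain ⟨b, b', h, -, hrank⟩ := mem_cutSwaps.1 hcut
  have hother (c) (hb : c ≠ b) (hb' : c ≠ b') : c ∈ R.queue a l (t + 1) ↔ c ∈ R.queue a l t := by
    rw [mem_queue, mem_queue, h.rank_succ_lt_iff ha hb hb']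
  have hb : b ∉ R.queue a l (t + 1) := by
    rw [mem_queue, h.rank_succ_left, hrank]
    simp
  have hb' : b' ∉ R.queue a l t := by
    rw [mem_queue, h.rank_right, hrank]
    simp
  constructor
  · refine (Finset.card_le_card fun c hc => ?_).trans (Finset.card_insert_le b' _)
    by_cases hcb' : c = b'
    · simp [hcb']
    · exact Finset.mem_insert_of_mem ((hother c (ne_of_mem_of_not_mem hc hb) hcb').1 hc)
  · refine (Finset.card_le_card fun c hc => ?_).trans (Finset.card_insert_le b _)
    by_cases hcb : c = b
    · simp [hcb]
    · exact Finset.mem_insert_of_mem ((hother c hcb (ne_of_mem_of_not_mem hc hb')).2 hc)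

lemma card_queue_bounds (l : Fin m) (ht : t ≤ R.N) (ha : R.departed none t ≤ a) :
    (R.queue a l t).card ≤ R.prefixCount l a + (R.cutSwaps a ∩ Finset.range t).card ∧
      R.prefixCount l a ≤ (R.queue a l t).card + (R.cutSwaps a ∩ Finset.range t).card := by
  induction t with
  | zero => simp [card_queue_zero]
  | succ t ih =>
    have ih := ih (by lia) ((departed_mono none (Nat.le_succ t)).trans ha)
    rw [Finset.range_add_one]
    by_cases hcut : t ∈ R.cutSwaps a
    · have hstep := card_queue_succ_of_mem_cutSwaps l ha hcut
      rw [Finset.inter_insert_of_mem hcut, Finset.card_insert_of_notMem (by simp)]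
      lia
    · rwa [Finset.inter_insert_of_notMem hcut, card_queue_succ l ht ha hcut]

lemma departedFor_bounds (l : Fin m) (ht : t ≤ R.N) :
    R.departedFor l t ≤
        R.prefixCount l (R.departed none t) + (R.cutSwaps (R.departed none t)).card ∧
      R.prefixCount l (R.departed none t) ≤
        R.departedFor l t + (R.cutSwaps (R.departed none t)).card := by
  have hbounds := card_queue_bounds (R := R) l ht le_rfl
  rw [card_queue_departed] at hbounds
  have hcard := Finset.card_le_card
    (Finset.inter_subset_left (s₁ := R.cutSwaps (R.departed none t)) (s₂ := Finset.range t))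
  omega

lemma arrived_none_add_rev_departed (ht : t ≤ R.N) :
    R.arrived none t + R.rev.departed none (R.N - t) = R.L :=
  arrived_add_rev_departed none ht

lemma arrivedFrom_add_rev_departedFor (l : Fin m) (ht : t ≤ R.N) :
    R.arrivedFrom l t + R.rev.departedFor l (R.N - t) = R.len l := by
  classical
  rw [arrivedFrom, departedFor, R.len_eq, ← Finset.card_filter_add_card_filter_not
    (s := Finset.univ.filter fun b => R.slot b = l) (fun b => R.Settled (.inr b) t),
    Finset.filter_filter, Finset.filter_filter]
  simp [rev_atHome, Nat.sub_sub_self ht]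

lemma prefixCount_add_rev_prefixCount (l : Fin m) (ha : a ≤ R.L) :
    R.prefixCount l a + R.rev.prefixCount l (R.L - a) = R.len l := by
  rw [prefixCount, prefixCount, R.len_eq, ← Finset.card_filter_add_card_filter_not
    (s := Finset.univ.filter fun b => R.slot b = l) (fun b => R.ordPos b < a),
    Finset.filter_filter, Finset.filter_filter]
  refine congrArg (_ + ·) (congrArg Finset.card (Finset.filter_congr fun b _ => ?_))
  have hlt := R.ordPos_lt b
  rw [rev_slot, rev_ordPos]
  refine and_congr_right fun _ => ?_
  omega

lemma arrivedFrom_bounds (l : Fin m) (ht : t ≤ R.N) :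
    R.arrivedFrom l t ≤
        R.prefixCount l (R.arrived none t) + (R.rev.cutSwaps (R.L - R.arrived none t)).card ∧
      R.prefixCount l (R.arrived none t) ≤
        R.arrivedFrom l t + (R.rev.cutSwaps (R.L - R.arrived none t)).card := by
  have hnone := arrived_none_add_rev_departed ht
  have hslot := arrivedFrom_add_rev_departedFor l ht
  have hprefix := prefixCount_add_rev_prefixCount (R := R) l (a := R.arrived none t) (by omega)
  have hbounds := departedFor_bounds (R := R.rev) l (t := R.N - t) (Nat.sub_le _ _)
  rw [← hnone, Nat.add_sub_cancel_left] at hprefix ⊢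
  omega

lemma departed_none_eq_sum (t : ℕ) : R.departed none t = ∑ l, R.departedFor l t := by
  classical
  rw [departed_none, Finset.card_eq_sum_card_fiberwise (f := R.slot) (t := Finset.univ) (by simp)]
  simp only [departedFor, Finset.filter_filter, and_comm]

end Run

/-! ### Slack and merges -/

lemma exists_first_switch (p : ℕ → Prop) {t t' : ℕ} (ht : t ≤ t') (h : ¬p t) (h' : p t') :
    ∃ s, t ≤ s ∧ s < t' ∧ (∀ r, t ≤ r → r ≤ s → ¬p r) ∧ p (s + 1) := by
  classical
  have hex : ∃ s, p (t + s) := ⟨t' - t, by rwa [Nat.add_sub_cancel' ht]⟩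
  obtain ⟨d, hd⟩ := Nat.exists_eq_add_one_of_ne_zero (mt (Nat.find_eq_zero hex).1 h)
  have hspec := Nat.find_spec hex
  have hle : Nat.find hex ≤ t' - t := Nat.find_min' hex (by rwa [Nat.add_sub_cancel' ht])
  refine ⟨t + d, Nat.le_add_right t d, by lia, fun r hr hrd hp => ?_, by rwa [hd] at hspec⟩
  exact Nat.find_min hex (m := r - t) (by lia) (by rwa [Nat.add_sub_cancel' hr])

lemma eq_of_monotone_of_lt_succ {f : ℕ → ℕ} (hf : Monotone f) {t t' : ℕ} (h : f t < f (t + 1))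
    (h' : f t' < f (t' + 1)) (heq : f (t + 1) = f (t' + 1)) : t = t' := by
  rcases lt_trichotomy t t' with hlt | rfl | hlt
  · exact absurd (hf (Nat.succ_le_of_lt hlt)) (by lia)
  · rfl
  · exact absurd (hf (Nat.succ_le_of_lt hlt)) (by lia)

section SumIncrements

variable {α : Type*} [Fintype α] {f g : α → ℕ}

lemma sum_sub_le_one (hfg : f ≤ g) (h : ∑ a, g a ≤ ∑ a, f a + 1) : ∑ a, (g a - f a) ≤ 1 := by
  rw [Finset.sum_tsub_distrib _ fun a _ => hfg a]
  lia

lemma le_add_one_of_sum_le (hfg : f ≤ g) (h : ∑ a, g a ≤ ∑ a, f a + 1) (a : α) :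
    g a ≤ f a + 1 := by
  have hle := (Finset.single_le_sum (f := fun a => g a - f a) (fun _ _ => Nat.zero_le _)
    (Finset.mem_univ a)).trans (sum_sub_le_one hfg h)
  lia

lemma eq_of_lt_of_sum_le (hfg : f ≤ g) (h : ∑ a, g a ≤ ∑ a, f a + 1) {a b : α} (ha : f a < g a)
    (hb : f b < g b) : a = b := by
  by_contra hne
  have hle := (Finset.add_le_sum (f := fun a => g a - f a) (fun _ _ => Nat.zero_le _)
    (Finset.mem_univ a) (Finset.mem_univ b) hne).trans (sum_sub_le_one hfg h)
  lia

end SumIncrements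

namespace Run

variable {m : ℕ} {ι : Type*} [Fintype ι] (R : Run m ι) {r r' : Option (Fin m)} {l l' : Fin m}
  {a c d t t' : ℕ}

/-- The run exceeds the trivial lower bound on its length by at most `c`. -/
def Budget (c : ℕ) : Prop :=
  2 * R.N ≤
    ∑ a : ι ⊕ ι, (depth R.k (R.loc 0 (.inr a)) + depth R.k (R.loc R.N (.inr a)) + 1) + 2 * c

open Classical in
/-- The steps and regions at which a departure merges with an arrival. -/
noncomputable def merges : Finset (ℕ × Option (Fin m)) :=
  (Finset.range R.N ×ˢ Finset.univ).filter fun x => R.Merges x.2 x.1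

lemma sum_regionLen : ∑ r, R.regionLen r = 2 * R.L := by
  simp only [← card_home]
  rw [← Finset.card_eq_sum_card_fiberwise (by simp), Finset.card_univ, Fintype.card_sum, R.L_eq,
    two_mul]

variable {R}

lemma mem_merges {x : ℕ × Option (Fin m)} : x ∈ R.merges ↔ x.1 < R.N ∧ R.Merges x.2 x.1 := by
  simp [merges]

lemma Budget.rev (h : R.Budget c) : R.rev.Budget c := by
  refine h.trans (le_of_eq (congrArg (· + 2 * c) ?_))
  refine Fintype.sum_equiv (Equiv.sumComm ι ι) _ _ fun a => ?_
  simp only [rev_k, rev_N, rev_loc, Sum.map_inr, Nat.sub_zero, Nat.sub_self, Equiv.sumComm_apply,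
    Sum.swap_swap]
  rw [Nat.add_comm (depth _ _)]

section Boundary

lemma bonus_eq_zero
    (hitem : ∃ ρ : Equiv.Perm (Option (Fin m)), ∀ e, R.loc t (.inl e) = itemVtx (ρ e))
    (hcharge : ∀ a, R.charge (.inr a) t ≠ 0) (r : Option (Fin m)) (d : ℕ) :
    R.bonus r d t = 0 := by
  obtain ⟨ρ, hρ⟩ := hitem
  have hmem {x} (hx : x ∈ R.deepTransit r d t) :
      ∃ l, r = some l ∧ d < R.k ∧ x = .inl (ρ.symm (some l)) := by
    obtain ⟨hx0, hxr, hxd⟩ := mem_deepTransit.1 hx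
    rcases x with e | a
    · rw [hρ] at hxr hxd
      cases he : ρ e with
      | none => simp [he, itemVtx] at hxr
      | some l =>
        rw [he] at hxr hxd
        exact ⟨l, (Option.some_injective _ hxr).symm, hxd, by simp [← he]⟩
    · exact absurd hx0 (hcharge a)
  refine if_neg (not_le.2 ?_)
  rcases (R.deepTransit r d t).eq_empty_or_nonempty with hempty | ⟨x, hx⟩
  · rw [hempty, threshold, Finset.card_empty]
    split_ifs <;> simp
  · obtain ⟨l, rfl, hd, -⟩ := hmem hx
    rw [threshold, if_neg (Option.some_ne_none l), if_pos hd, Nat.lt_succ_iff, Finset.card_le_one]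
    intro y hy z hz
    obtain ⟨_, hl, -, rfl⟩ := hmem hy
    obtain ⟨_, hl', -, rfl⟩ := hmem hz
    rw [← hl, ← hl']

lemma potential_eq
    (hitem : ∃ ρ : Equiv.Perm (Option (Fin m)), ∀ e, R.loc t (.inl e) = itemVtx (ρ e)) {ε : ℤ}
    (hε : ε ≠ 0) (hcharge : ∀ a, R.charge (.inr a) t = ε)
    (hpath : ∀ a : ι ⊕ ι, ∃ r d, R.loc t (.inr a) = pathVtx r d) :
    R.potential t = -2 * ε * ∑ a : ι ⊕ ι, (depth R.k (R.loc t (.inr a)) : ℤ) := by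
  unfold potential
  rw [Fintype.sum_sum_type]
  simp only [charge_inl, zero_mul, Finset.sum_const_zero, zero_add, hcharge]
  rw [Finset.mul_sum]
  refine Finset.sum_congr rfl fun a _ => ?_
  obtain ⟨r, d, hd⟩ := hpath a
  rw [hd, weight_pathVtx, bonus_eq_zero hitem (fun a => by rwa [hcharge]), depth_pathVtx]
  push_cast
  ring

end Boundary

lemma potential_zero :
    R.potential 0 = 2 * ∑ a : ι ⊕ ι, (depth R.k (R.loc 0 (.inr a)) : ℤ) := by
  rw [potential_eq R.init_item (ε := -1) (by norm_num)
    fun a => charge_inr_eq_neg_one.2 (R.atHome_zero a)]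
  · ring
  · rintro (b | b)
    · exact ⟨none, _, R.init_X b⟩
    · exact ⟨some _, _, R.init_Y b⟩

lemma potential_N :
    R.potential R.N = -2 * ∑ a : ι ⊕ ι, (depth R.k (R.loc R.N (.inr a)) : ℤ) := by
  rw [potential_eq R.final_item (ε := 1) one_ne_zero
    fun a => (charge_inr_eq_one le_rfl).2 (R.settled_N a)]
  · ring
  · rintro (b | b)
    · exact ⟨some _, _, R.final_X b⟩
    · exact ⟨none, _, R.final_Y b⟩

lemma card_merges :
    (R.merges.card : ℤ) =
      ∑ t ∈ Finset.range R.N, ∑ r, open Classical in if R.Merges r t then (1 : ℤ) else 0 := by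
  rw [merges, Finset.card_filter, Finset.sum_product]
  push_cast
  rfl

lemma sum_departed_add_arrived (r : Option (Fin m)) :
    ∑ t ∈ Finset.range R.N, (((R.departed r (t + 1) : ℤ) - R.departed r t) +
      ((R.arrived r (t + 1) : ℤ) - R.arrived r t)) = 2 * R.regionLen r := by
  rw [Finset.sum_add_distrib, Finset.sum_range_sub (fun t => (R.departed r t : ℤ)),
    Finset.sum_range_sub (fun t => (R.arrived r t : ℤ)), departed_N, arrived_N, departed_zero,
    arrived_zero]
  push_cast
  ring

lemma sum_slack_eq :
    ∑ t ∈ Finset.range R.N, R.slack t =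
      4 * R.N + (R.potential R.N - R.potential 0) - 8 * R.L + 4 * R.merges.card := by
  have hlen : ∑ r, (R.regionLen r : ℤ) = 2 * R.L := by exact_mod_cast R.sum_regionLen
  unfold slack
  rw [Finset.sum_add_distrib, Finset.sum_sub_distrib, Finset.sum_add_distrib,
    Finset.sum_range_sub, ← Finset.mul_sum, ← Finset.mul_sum, Finset.sum_comm, card_merges]
  simp only [sum_departed_add_arrived, Finset.sum_const, Finset.card_range, nsmul_eq_mul]
  rw [← Finset.mul_sum, hlen]
  ring

lemma Budget.sum_slack_le (h : R.Budget c) :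
    ∑ t ∈ Finset.range R.N, R.slack t + 4 * R.L ≤ 4 * c + 4 * R.merges.card := by
  have hcard : Fintype.card (ι ⊕ ι) = 2 * R.L := by rw [Fintype.card_sum, R.L_eq, two_mul]
  have hbudget : (2 * R.N : ℤ) ≤ ∑ a : ι ⊕ ι, (depth R.k (R.loc 0 (.inr a)) : ℤ) +
      ∑ a : ι ⊕ ι, (depth R.k (R.loc R.N (.inr a)) : ℤ) + 2 * R.L + 2 * c := by
    simp only [Budget, Finset.sum_add_distrib, Finset.sum_const, Finset.card_univ, hcard,
      smul_eq_mul, mul_one] at h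
    exact_mod_cast h
  rw [sum_slack_eq, potential_zero, potential_N]
  linarith

lemma departed_lt_unique (ht : t < R.N) (h : R.departed r t < R.departed r (t + 1))
    (h' : R.departed r' t < R.departed r' (t + 1)) : r = r' := by
  obtain ⟨p, q, hs⟩ := R.exists_swaps ht
  rcases hs.root_or_path_or_nook with ⟨r₀, hp, hq⟩ | ⟨r₀, d, hp, hq⟩ | ⟨l, hp, hq⟩
  · have heq {r} (h : R.departed r t < R.departed r (t + 1)) : r = r₀ := by
      by_contra hr
      exact h.ne' (hs.departed_succ_of_root_of_ne hp hq hr)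
    rw [heq h, heq h']
  · exact absurd (hs.departed_eq (by simp [hp, hq]) r) h.ne'
  · exact absurd (hs.departed_eq (by simp [hp, hq]) r) h.ne'

lemma sum_departedFor_succ_le (ht : t < R.N) :
    ∑ l, R.departedFor l (t + 1) ≤ ∑ l, R.departedFor l t + 1 := by
  rw [← departed_none_eq_sum, ← departed_none_eq_sum]
  exact departed_succ_le none ht

lemma departedFor_le_succ (R : Run m ι) (t : ℕ) :
    (R.departedFor · t) ≤ (R.departedFor · (t + 1)) :=
  fun l => departedFor_mono l (Nat.le_succ t)

lemma departedFor_succ_le (l : Fin m) (ht : t < R.N) :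
    R.departedFor l (t + 1) ≤ R.departedFor l t + 1 :=
  le_add_one_of_sum_le (R.departedFor_le_succ t) (sum_departedFor_succ_le ht) l

lemma departedFor_lt_unique (ht : t < R.N) (h : R.departedFor l t < R.departedFor l (t + 1))
    (h' : R.departedFor l' t < R.departedFor l' (t + 1)) : l = l' :=
  eq_of_lt_of_sum_le (R.departedFor_le_succ t) (sum_departedFor_succ_le ht) h h'

lemma departed_lt_of_departedFor_lt (h : R.departedFor l t < R.departedFor l (t + 1)) :
    R.departed none t < R.departed none (t + 1) := by
  rw [departed_none_eq_sum, departed_none_eq_sum]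
  exact Finset.sum_lt_sum (fun l _ => departedFor_mono l (Nat.le_succ t)) ⟨l, Finset.mem_univ _, h⟩

lemma arrived_none_le_departed_none (ht : t ≤ R.N) : R.arrived none t ≤ R.departed none t := by
  have hcard := card_transit none ht
  rw [if_pos rfl] at hcard
  lia

lemma departed_none_succ_mem_Icc (ht : t < R.N)
    (h : R.departed none t < R.departed none (t + 1)) :
    R.departed none (t + 1) ∈ Finset.Icc 1 R.L := by
  have hle := departed_mono (R := R) none (Nat.succ_le_of_lt ht)
  rw [departed_N] at hle
  exact Finset.mem_Icc.2 ⟨Nat.one_le_of_lt h, hle⟩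

lemma Merges.exists_departure (h : R.Merges (some l) t) (ht : t < R.N) :
    ∃ s < t, R.departedFor l s < R.departedFor l (s + 1) ∧
      R.departedFor l (s + 1) = R.arrived (some l) (t + 1) := by
  obtain ⟨hdep, harr, -⟩ := h
  have hzero : R.departedFor l 0 = 0 := by simp [departedFor, R.atHome_zero]
  obtain ⟨s, -, hst, hbelow, hreach⟩ := exists_first_switch
    (fun s => R.arrived (some l) (t + 1) ≤ R.departedFor l s) (Nat.zero_le (t + 1))
    (by lia) (arrived_le_departedFor l ht)
  have hs := hbelow s (Nat.zero_le s) le_rfl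
  have hle := departedFor_succ_le (R := R) l (t := s) (by lia)
  refine ⟨s, ?_, by lia, by lia⟩
  rcases Nat.lt_succ_iff_lt_or_eq.1 hst with hlt | rfl
  · exact hlt
  · exact absurd (departed_lt_unique ht hdep (departed_lt_of_departedFor_lt (l := l) (by lia)))
      (Option.some_ne_none l)

variable (R)

/-- The cuts crossed by an exchange of two tokens of different slots, in the run or its reversal. -/
noncomputable def crossedCuts : Finset ℕ :=
  (Finset.Icc 1 R.L).filter fun a =>
    (R.cutSwaps a).Nonempty ∨ (R.rev.cutSwaps (R.L - a)).Nonempty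

/-- The cut `a` is assigned to a merge at step `t`. A merge at the ordering gadget is assigned the
number of tokens departed from there. For a merge at slot `l`, count the tokens arrived at slot `l`:
the assigned cut is the number of tokens departed from the ordering gadget once as many tokens of
slot `l` are among them. -/
def MergeCut (a t : ℕ) : Option (Fin m) → Prop
  | none => R.departed none (t + 1) = a
  | some l => ∃ s < t, R.departedFor l s < R.departedFor l (s + 1) ∧
      R.departedFor l (s + 1) = R.arrived (some l) (t + 1) ∧ R.departed none (s + 1) = a

open Classical in
/-- The cuts assigned to merges at the regions satisfying `P`. -/
noncomputable def mergeCuts (P : Option (Fin m) → Prop) : Finset ℕ :=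
  (Finset.Icc 1 R.L).filter fun a => ∃ x ∈ R.merges, P x.2 ∧ R.MergeCut a x.1 x.2

variable {R}

lemma Merges.exists_mergeCut (h : R.Merges r t) (ht : t < R.N) :
    ∃ a ∈ Finset.Icc 1 R.L, R.MergeCut a t r := by
  cases r with
  | none => exact ⟨_, departed_none_succ_mem_Icc ht h.1, rfl⟩
  | some l =>
    obtain ⟨s, hst, hdep, hcount⟩ := h.exists_departure ht
    exact ⟨_, departed_none_succ_mem_Icc (hst.trans ht) (departed_lt_of_departedFor_lt hdep),
      s, hst, hdep, hcount, rfl⟩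

lemma MergeCut.eq_of_none (h : R.MergeCut a t none) (h' : R.MergeCut a t' none)
    (hm : R.Merges none t) (hm' : R.Merges none t') : t = t' :=
  eq_of_monotone_of_lt_succ (fun _ _ => departed_mono none) hm.1 hm'.1 (h.trans h'.symm)

lemma MergeCut.eq_of_some (h : R.MergeCut a t (some l)) (h' : R.MergeCut a t' (some l'))
    (hm : R.Merges (some l) t) (hm' : R.Merges (some l') t') (ht : t < R.N) :
    t = t' ∧ l = l' := by
  obtain ⟨s, hst, hdep, hcount, hs⟩ := h
  obtain ⟨s', -, hdep', hcount', hs'⟩ := h'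
  obtain rfl : s = s' := eq_of_monotone_of_lt_succ (fun _ _ => departed_mono none)
    (departed_lt_of_departedFor_lt hdep) (departed_lt_of_departedFor_lt hdep') (hs.trans hs'.symm)
  obtain rfl : l = l' := departedFor_lt_unique (hst.trans ht) hdep hdep'
  exact ⟨eq_of_monotone_of_lt_succ (fun _ _ => arrived_mono (some l)) hm.2.1 hm'.2.1
    (hcount.symm.trans hcount'), rfl⟩

/- If no exchange crossed the cut `a`, then right after the merge at the ordering gadget, the `a`
departed and the `a` arrived tokens would be distributed among the slots in the same way, and slot
`l` would be too balanced for its merge. -/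
lemma MergeCut.mem_crossedCuts (h : R.MergeCut a t none) (h' : R.MergeCut a t' (some l))
    (hm : R.Merges none t) (hm' : R.Merges (some l) t') (ht : t < R.N) :
    a ∈ R.crossedCuts := by
  obtain ⟨s, hst, hdep, hcount, hs⟩ := h'
  obtain rfl : s = t := eq_of_monotone_of_lt_succ (fun _ _ => departed_mono none)
    (departed_lt_of_departedFor_lt hdep) hm.1 (hs.trans h.symm)
  have hle := arrived_none_le_departed_none (R := R) (Nat.succ_le_of_lt ht)
  have hsucc := departed_succ_le (R := R) none ht
  obtain ⟨hdep₀, harr₀, hmerge₀⟩ := hm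
  have hbalanced : R.arrived none (s + 1) = a := by lia
  have hfrom := arrivedFrom_le_departed (R := R) l (Nat.succ_le_of_lt ht)
  have hmono := departed_mono (R := R) (some l) (Nat.succ_le_of_lt hst)
  obtain ⟨-, harr', hmerge'⟩ := hm'
  rw [crossedCuts, Finset.mem_filter]
  refine ⟨hs ▸ departed_none_succ_mem_Icc ht hdep₀, ?_⟩
  by_contra! hempty
  have hdepFor := departedFor_bounds (R := R) l (Nat.succ_le_of_lt ht)
  have harrFrom := arrivedFrom_bounds (R := R) l (Nat.succ_le_of_lt ht)
  rw [hs, hempty.1, Finset.card_empty] at hdepFor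
  rw [hbalanced, hempty.2, Finset.card_empty] at harrFrom
  lia

lemma mem_mergeCuts {P : Option (Fin m) → Prop} :
    a ∈ R.mergeCuts P ↔
      a ∈ Finset.Icc 1 R.L ∧ ∃ x ∈ R.merges, P x.2 ∧ R.MergeCut a x.1 x.2 := by
  classical exact Finset.mem_filter

lemma card_merges_le_card_mergeCuts {P : Option (Fin m) → Prop} [DecidablePred P]
    (hP : ∀ a, ∀ x ∈ R.merges, ∀ y ∈ R.merges, P x.2 → P y.2 → R.MergeCut a x.1 x.2 →
      R.MergeCut a y.1 y.2 → x = y) :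
    (R.merges.filter fun x => P x.2).card ≤ (R.mergeCuts P).card := by
  refine Finset.card_le_card_of_forall_subsingleton (fun x a => R.MergeCut a x.1 x.2)
    (fun x hx => ?_) fun a _ x hx y hy => ?_
  · obtain ⟨hx, hPx⟩ := Finset.mem_filter.1 hx
    obtain ⟨a, ha, hcut⟩ := (mem_merges.1 hx).2.exists_mergeCut (mem_merges.1 hx).1
    exact ⟨a, mem_mergeCuts.2 ⟨ha, x, hx, hPx, hcut⟩, hcut⟩
  · obtain ⟨hxm, hPx⟩ := Finset.mem_filter.1 hx.1
    obtain ⟨hym, hPy⟩ := Finset.mem_filter.1 hy.1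
    exact hP a x hxm y hym hPx hPy hx.2 hy.2

lemma card_merges_le : R.merges.card ≤ R.L + R.crossedCuts.card := by
  classical
  have hnone : (R.merges.filter fun x => x.2 = none).card ≤ (R.mergeCuts (· = none)).card := by
    refine card_merges_le_card_mergeCuts (P := (· = none)) ?_
    rintro a ⟨t, _⟩ hx ⟨t', _⟩ hy rfl rfl h h'
    obtain rfl := h.eq_of_none h' (mem_merges.1 hx).2 (mem_merges.1 hy).2
    rfl
  have hsome : (R.merges.filter fun x => x.2 ≠ none).card ≤ (R.mergeCuts (· ≠ none)).card := by
    refine card_merges_le_card_mergeCuts (P := (· ≠ none)) ?_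
    rintro a ⟨t, _ | l⟩ hx ⟨t', _ | l'⟩ hy hx0 hy0 h h'
    · exact absurd rfl hx0
    · exact absurd rfl hx0
    · exact absurd rfl hy0
    obtain ⟨rfl, rfl⟩ := h.eq_of_some h' (mem_merges.1 hx).2 (mem_merges.1 hy).2 (mem_merges.1 hx).1
    rfl
  have hunion : R.mergeCuts (· = none) ∪ R.mergeCuts (· ≠ none) ⊆ Finset.Icc 1 R.L :=
    Finset.union_subset (fun _ h => (mem_mergeCuts.1 h).1) fun _ h => (mem_mergeCuts.1 h).1
  have hinter : R.mergeCuts (· = none) ∩ R.mergeCuts (· ≠ none) ⊆ R.crossedCuts := by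
    intro a ha
    obtain ⟨ha, ha'⟩ := Finset.mem_inter.1 ha
    obtain ⟨-, ⟨t, _⟩, hx, rfl, h⟩ := mem_mergeCuts.1 ha
    obtain ⟨-, ⟨t', r⟩, hy, hr, h'⟩ := mem_mergeCuts.1 ha'
    obtain ⟨l, rfl⟩ := Option.ne_none_iff_exists'.1 hr
    rw [mem_merges] at hx hy
    exact h.mem_crossedCuts h' hx.2 hy.2 hx.1
  have hcards := Finset.card_union_add_card_inter (R.mergeCuts (· = none)) (R.mergeCuts (· ≠ none))
  have hsplit := Finset.card_filter_add_card_filter_not (s := R.merges) fun x => x.2 = none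
  have hL := Finset.card_le_card hunion
  have hcrossed := Finset.card_le_card hinter
  rw [Nat.card_Icc, Nat.add_sub_cancel] at hL
  lia

end Run

/-! ### Wasted swaps -/

namespace Run

variable {m : ℕ} {ι : Type*} [Fintype ι] (R : Run m ι) {p q : Token m ι} {b b' : ι} {l : Fin m}
  {r : Option (Fin m)} {a a' c t : ℕ}

open Classical in
/-- The steps exchanging two tokens waiting to depart from the ordering gadget. -/
noncomputable def departureSwaps : Finset ℕ :=
  (Finset.range R.N).filter fun t => ∃ b b', R.QueueSwap t b b'

/-- The steps exchanging two tokens settled in the ordering gadget. -/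
noncomputable def arrivalSwaps : Finset ℕ :=
  R.rev.departureSwaps.image fun t => R.N - (t + 1)

open Classical in
/-- The departure swaps of two tokens of the same slot. -/
noncomputable def sameSlotSwaps : Finset ℕ :=
  R.departureSwaps.filter fun t => ∃ b b', R.QueueSwap t b b' ∧ R.slot b = R.slot b'

open Classical in
/-- The cuts crossed by a departure swap. -/
noncomputable def departureCuts : Finset ℕ :=
  (Finset.Icc 1 R.L).filter fun a => (R.cutSwaps a).Nonempty

/-- The steps within the ordering gadget that the slack does not control: its tokens may be
reordered without an effect on the potential. -/
noncomputable def quietSteps : Finset ℕ := R.departureSwaps ∪ R.arrivalSwaps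

/-- The steps before step `t` with slack at least two, except for the quiet ones. -/
noncomputable def wasteSteps (t : ℕ) : Finset ℕ :=
  (Finset.range t).filter fun s => s ∉ R.quietSteps ∧ 2 ≤ R.slack s

variable {R}

lemma mem_departureSwaps : t ∈ R.departureSwaps ↔ ∃ b b', R.QueueSwap t b b' := by
  classical
  rw [departureSwaps, Finset.mem_filter, Finset.mem_range, and_iff_right_iff_imp]
  exact fun ⟨_, _, h⟩ => h.1.lt

lemma mem_arrivalSwaps :
    t ∈ R.arrivalSwaps ↔ t < R.N ∧ R.N - (t + 1) ∈ R.rev.departureSwaps := by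
  rw [arrivalSwaps, Finset.mem_image]
  constructor
  · rintro ⟨s, hs, rfl⟩
    obtain ⟨_, _, h⟩ := mem_departureSwaps.1 hs
    have hlt : s < R.N := h.1.lt
    have hpred : R.N - (R.N - (s + 1) + 1) = s := by lia
    exact ⟨by lia, by rwa [hpred]⟩
  · rintro ⟨hlt, hs⟩
    exact ⟨_, hs, by lia⟩

lemma mem_sameSlotSwaps :
    t ∈ R.sameSlotSwaps ↔ ∃ b b', R.QueueSwap t b b' ∧ R.slot b = R.slot b' := by
  classical
  rw [sameSlotSwaps, Finset.mem_filter, mem_departureSwaps, and_iff_right_iff_imp]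
  exact fun ⟨_, _, h, _⟩ => ⟨_, _, h⟩

lemma card_rev_departureSwaps : R.rev.departureSwaps.card = R.arrivalSwaps.card := by
  refine (Finset.card_image_of_injOn fun s hs s' hs' heq => ?_).symm
  obtain ⟨_, _, h⟩ := mem_departureSwaps.1 hs
  obtain ⟨_, _, h'⟩ := mem_departureSwaps.1 hs'
  have hlt : s < R.N := h.1.lt
  have hlt' : s' < R.N := h'.1.lt
  lia

lemma exists_swaps_of_mem_departureSwaps (h : t ∈ R.departureSwaps) :
    ∃ p q d, R.Swaps t p q ∧ R.loc t p = pathVtx none d ∧ R.loc t q = pathVtx none (d + 1) ∧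
      R.charge p t = -1 ∧ R.charge q t = -1 := by
  obtain ⟨b, b', h⟩ := mem_departureSwaps.1 h
  obtain ⟨d, hb, hb'⟩ := h.exists_loc_eq
  exact ⟨_, _, d, h.1, hb, hb', charge_inr_eq_neg_one.2 h.2.1, charge_inr_eq_neg_one.2 h.2.2⟩

lemma exists_swaps_of_mem_arrivalSwaps (h : t ∈ R.arrivalSwaps) :
    ∃ p q d, R.Swaps t p q ∧ R.loc t p = pathVtx none d ∧ R.loc t q = pathVtx none (d + 1) ∧
      R.charge p t = 1 ∧ R.charge q t = 1 := by
  obtain ⟨hlt, h⟩ := mem_arrivalSwaps.1 h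
  obtain ⟨p', q', d, hs', hp', hq', hcharge, hcharge'⟩ := exists_swaps_of_mem_departureSwaps h
  obtain ⟨p, q, hs⟩ := R.exists_swaps hlt
  obtain ⟨rfl, rfl⟩ := hs'.unique hs.rev
  have hregion : region (R.loc t p) = region (R.loc t q) := by
    rw [← hs.up, ← hs.down, ← rev_loc_pred hlt, ← rev_loc_pred hlt, hp', hq']
    simp
  rw [rev_loc_pred hlt] at hp' hq'
  rw [rev_charge _ (Nat.sub_le _ _), map_swap_map_swap, Nat.sub_sub_self hlt, neg_inj,
    hs.charge_eq hregion] at hcharge hcharge'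
  exact ⟨p, q, d, hs, hs.up ▸ hp', hs.down ▸ hq', hcharge', hcharge⟩

lemma disjoint_departureSwaps_arrivalSwaps : Disjoint R.departureSwaps R.arrivalSwaps := by
  refine Finset.disjoint_left.2 fun t h h' => ?_
  obtain ⟨p, q, -, hs, -, -, hp, -⟩ := exists_swaps_of_mem_departureSwaps h
  obtain ⟨p', q', -, hs', -, -, hp', -⟩ := exists_swaps_of_mem_arrivalSwaps h'
  rw [(hs.unique hs').1, hp'] at hp
  norm_num at hp

lemma exists_swaps_of_mem_quietSteps (h : t ∈ R.quietSteps) :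
    ∃ p q d, R.Swaps t p q ∧ R.loc t p = pathVtx none d ∧ R.loc t q = pathVtx none (d + 1) ∧
      R.charge p t = R.charge q t := by
  rcases Finset.mem_union.1 h with h | h
  · obtain ⟨p, q, d, hs, hp, hq, hcharge, hcharge'⟩ := exists_swaps_of_mem_departureSwaps h
    exact ⟨p, q, d, hs, hp, hq, hcharge.trans hcharge'.symm⟩
  · obtain ⟨p, q, d, hs, hp, hq, hcharge, hcharge'⟩ := exists_swaps_of_mem_arrivalSwaps h
    exact ⟨p, q, d, hs, hp, hq, hcharge.trans hcharge'.symm⟩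

lemma slack_of_mem_quietSteps (h : t ∈ R.quietSteps) : R.slack t = 4 := by
  obtain ⟨p, q, d, hs, hp, hq, hcharge⟩ := exists_swaps_of_mem_quietSteps h
  exact hs.slack_of_path_of_charge_eq hp hq hcharge

lemma Swaps.notMem_quietSteps (h : R.Swaps t p q) (hp : region (R.loc t p) ≠ some none) :
    t ∉ R.quietSteps := by
  intro ht
  obtain ⟨p', q', d, h', hd, -⟩ := exists_swaps_of_mem_quietSteps ht
  rw [(h.unique h').1, hd] at hp
  exact hp (region_pathVtx _ _)

lemma quietSteps_subset : R.quietSteps ⊆ Finset.range R.N := by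
  intro t ht
  obtain ⟨p, q, d, h, -⟩ := exists_swaps_of_mem_quietSteps ht
  exact Finset.mem_range.2 h.lt

lemma cutSwaps_subset (a : ℕ) : R.cutSwaps a ⊆ R.departureSwaps \ R.sameSlotSwaps := by
  intro t ht
  obtain ⟨b, b', h, hne, -⟩ := mem_cutSwaps.1 ht
  refine Finset.mem_sdiff.2 ⟨mem_departureSwaps.2 ⟨b, b', h⟩, fun hsame => ?_⟩
  obtain ⟨d, d', h', heq⟩ := mem_sameSlotSwaps.1 hsame
  obtain ⟨rfl, rfl⟩ := h.unique h'
  exact hne heq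

lemma disjoint_cutSwaps (h : a ≠ a') : Disjoint (R.cutSwaps a) (R.cutSwaps a') := by
  refine Finset.disjoint_left.2 fun t ht ht' => h ?_
  obtain ⟨b, b', hswap, -, rfl⟩ := mem_cutSwaps.1 ht
  obtain ⟨d, d', hswap', -, rfl⟩ := mem_cutSwaps.1 ht'
  rw [(hswap.unique hswap').1]

lemma sum_card_cutSwaps_le (s : Finset ℕ) :
    ∑ a ∈ s, (R.cutSwaps a).card ≤ (R.departureSwaps \ R.sameSlotSwaps).card := by
  rw [← Finset.card_biUnion fun a _ a' _ h => disjoint_cutSwaps h]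
  exact Finset.card_le_card (Finset.biUnion_subset.2 fun a _ => cutSwaps_subset a)

lemma card_le_sum_card_cutSwaps {s : Finset ℕ} (hs : s ⊆ R.departureCuts) :
    s.card ≤ ∑ a ∈ s, (R.cutSwaps a).card := by
  classical
  rw [Finset.card_eq_sum_ones]
  exact Finset.sum_le_sum fun a ha => Finset.card_pos.2 (Finset.mem_filter.1 (hs ha)).2

lemma card_departureCuts_add_card_sameSlotSwaps_le :
    R.departureCuts.card + R.sameSlotSwaps.card ≤ R.departureSwaps.card := by
  classical
  have hsub : R.sameSlotSwaps ⊆ R.departureSwaps := Finset.filter_subset _ _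
  rw [← Finset.card_sdiff_add_card_eq_card hsub]
  exact Nat.add_le_add_right
    ((card_le_sum_card_cutSwaps subset_rfl).trans (sum_card_cutSwaps_le _)) _

lemma card_departureCuts_add_card_cutSwaps_le (a : ℕ) :
    R.departureCuts.card + (R.cutSwaps a).card ≤ R.departureSwaps.card + 1 := by
  have hcuts := card_le_sum_card_cutSwaps (R.departureCuts.erase_subset a)
  have hsum := sum_card_cutSwaps_le (R := R) (insert a (R.departureCuts.erase a))
  rw [Finset.sum_insert (by simp)] at hsum
  have hle := Finset.card_le_card (Finset.sdiff_subset : R.departureSwaps \ R.sameSlotSwaps ⊆ _)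
  have herase := Finset.pred_card_le_card_erase (s := R.departureCuts) (a := a)
  lia

lemma card_departureCuts_le : R.departureCuts.card ≤ R.departureSwaps.card :=
  (Nat.le_add_right _ _).trans card_departureCuts_add_card_sameSlotSwaps_le

lemma card_crossedCuts_le :
    R.crossedCuts.card ≤ R.departureCuts.card + R.rev.departureCuts.card := by
  classical
  refine (Finset.card_le_card (t := R.departureCuts ∪ R.rev.departureCuts.image (R.L - ·))
    fun a ha => ?_).trans ((Finset.card_union_le _ _).trans
      (Nat.add_le_add_left Finset.card_image_le _))
  obtain ⟨haL, ha⟩ := Finset.mem_filter.1 ha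
  have hbound := Finset.mem_Icc.1 haL
  rw [Finset.mem_union]
  refine ha.imp (fun hne => Finset.mem_filter.2 ⟨haL, hne⟩) fun hne => ?_
  refine Finset.mem_image.2 ⟨R.L - a, Finset.mem_filter.2 ⟨Finset.mem_Icc.2 ?_, hne⟩, by lia⟩
  obtain ⟨t, ht⟩ := hne
  obtain ⟨b, -, -, -, hrank⟩ := mem_cutSwaps.1 ht
  exact ⟨by lia, Nat.sub_le _ _⟩

lemma Budget.sum_slack_sdiff_quietSteps_le (h : R.Budget c) :
    ∑ t ∈ Finset.range R.N \ R.quietSteps, R.slack t +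
      4 * (R.departureSwaps.card + R.arrivalSwaps.card) ≤ 4 * c + 4 * R.crossedCuts.card := by
  have hslack := h.sum_slack_le
  have hmerges : (R.merges.card : ℤ) ≤ R.L + R.crossedCuts.card := by
    exact_mod_cast R.card_merges_le
  rw [← Finset.sum_sdiff quietSteps_subset,
    Finset.sum_congr rfl fun t ht => slack_of_mem_quietSteps ht, Finset.sum_const, quietSteps,
    Finset.card_union_of_disjoint disjoint_departureSwaps_arrivalSwaps, nsmul_eq_mul] at hslack
  push_cast at hslack
  rw [quietSteps]
  linarith

lemma sum_slack_sdiff_quietSteps_nonneg :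
    0 ≤ ∑ t ∈ Finset.range R.N \ R.quietSteps, R.slack t :=
  Finset.sum_nonneg fun _ ht => slack_nonneg (Finset.mem_range.1 (Finset.mem_sdiff.1 ht).1)

lemma Budget.card_swaps_le (h : R.Budget c) :
    R.departureSwaps.card + R.arrivalSwaps.card ≤ c + R.crossedCuts.card := by
  have hsum := h.sum_slack_sdiff_quietSteps_le
  have hnonneg := R.sum_slack_sdiff_quietSteps_nonneg
  lia

lemma Budget.card_sameSlotSwaps_le (h : R.Budget c) : R.sameSlotSwaps.card ≤ c := by
  have hswaps := h.card_swaps_le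
  have hcrossed := R.card_crossedCuts_le
  have hcuts := R.card_departureCuts_add_card_sameSlotSwaps_le
  have hrev := R.rev.card_departureCuts_le
  rw [card_rev_departureSwaps] at hrev
  lia

lemma Budget.card_cutSwaps_le (h : R.Budget c) (a : ℕ) : (R.cutSwaps a).card ≤ c + 1 := by
  have hswaps := h.card_swaps_le
  have hcrossed := R.card_crossedCuts_le
  have hcuts := R.card_departureCuts_add_card_cutSwaps_le a
  have hrev := R.rev.card_departureCuts_le
  rw [card_rev_departureSwaps] at hrev
  lia

lemma mem_wasteSteps {s : ℕ} : s ∈ R.wasteSteps t ↔ s < t ∧ s ∉ R.quietSteps ∧ 2 ≤ R.slack s := by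
  rw [wasteSteps, Finset.mem_filter, Finset.mem_range]

lemma Budget.card_wasteSteps_le (h : R.Budget c) (ht : t ≤ R.N) :
    (R.wasteSteps t).card ≤ 2 * c := by
  have hsub : R.wasteSteps t ⊆ Finset.range R.N \ R.quietSteps := by
    intro s hs
    obtain ⟨hst, hquiet, -⟩ := mem_wasteSteps.1 hs
    exact Finset.mem_sdiff.2 ⟨Finset.mem_range.2 (hst.trans_le ht), hquiet⟩
  have hle : ∑ s ∈ R.wasteSteps t, R.slack s ≤ ∑ s ∈ Finset.range R.N \ R.quietSteps, R.slack s :=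
    Finset.sum_le_sum_of_subset_of_nonneg hsub fun s hs _ =>
      slack_nonneg (Finset.mem_range.1 (Finset.mem_sdiff.1 hs).1)
  have hcard := Finset.card_nsmul_le_sum _ _ (2 : ℤ) fun s (hs : s ∈ R.wasteSteps t) =>
    (mem_wasteSteps.1 hs).2.2
  have hsum := h.sum_slack_sdiff_quietSteps_le
  have hcrossed := R.card_crossedCuts_le
  have hcuts := R.card_departureCuts_le
  have hcuts' := R.rev.card_departureCuts_le
  rw [card_rev_departureSwaps] at hcuts'
  rw [nsmul_eq_mul] at hcard
  lia

lemma card_wasteSteps_mono (R : Run m ι) (t : ℕ) :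
    (R.wasteSteps t).card ≤ (R.wasteSteps (t + 1)).card :=
  Finset.card_le_card
    (Finset.filter_subset_filter _ (Finset.range_subset_range.2 (Nat.le_succ t)))

lemma card_wasteSteps_succ (h : t ∉ R.quietSteps) (h' : 2 ≤ R.slack t) :
    (R.wasteSteps (t + 1)).card = (R.wasteSteps t).card + 1 := by
  rw [wasteSteps, Finset.range_add_one, Finset.filter_insert, if_pos ⟨h, h'⟩,
    Finset.card_insert_of_notMem (by simp), wasteSteps]

end Run

/-! ### Synchronization of the gadgets -/

namespace Run

variable {m : ℕ} {ι : Type*} [Fintype ι] {R : Run m ι} {x p q : Token m ι} {l : Fin m}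
  {r : Option (Fin m)} {a a' c d t : ℕ}

lemma mem_transit_succ (ht : t < R.N) (hx : x ∈ R.transit r t)
    (hr : region (R.loc (t + 1) x) = some r) : x ∈ R.transit r (t + 1) := by
  obtain ⟨hcharge, hregion⟩ := mem_transit.1 hx
  exact mem_transit.2 ⟨by rwa [charge_succ ht (hr.trans hregion.symm)], hr⟩

-- If `q` is the only token in transit this deep, then moving it up is a wasted swap.
lemma Swaps.exists_mem_transit_succ_of_path (h : R.Swaps t p q)
    (hp : R.loc t p = pathVtx (some l) d) (hq : R.loc t q = pathVtx (some l) (d + 1))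
    (hmem : q ∈ R.transit (some l) t) :
    ∃ x ∈ R.transit (some l) (t + 1), min R.k (depth R.k (R.loc t q)) +
      (R.wasteSteps t).card ≤ depth R.k (R.loc (t + 1) x) + (R.wasteSteps (t + 1)).card := by
  have hmono := R.card_wasteSteps_mono t
  have hmem' : q ∈ R.transit (some l) (t + 1) :=
    mem_transit_succ h.lt hmem (by rw [h.up, hp, region_pathVtx])
  have hdepth : depth R.k (R.loc (t + 1) q) = d + 1 := by rw [h.up, hp, depth_pathVtx]
  rw [hq, depth_pathVtx]
  rcases le_or_gt R.k (d + 1) with hdk | hdk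
  · exact ⟨q, hmem', by lia⟩
  rcases le_or_gt (R.deepTransit (some l) (d + 1) t).card 1 with hcard | hcard
  · have hslack := h.two_le_slack_of_card_deepTransit_le_one hp hq hdk (mem_transit.1 hmem).1 hcard
    have hwaste := card_wasteSteps_succ (h.notMem_quietSteps (by simp [hp])) hslack
    exact ⟨q, hmem', by lia⟩
  · obtain ⟨x, hx, hxq⟩ := Finset.exists_mem_ne hcard q
    obtain ⟨hcharge, hregion, hdeep⟩ := mem_deepTransit.1 hx
    have hxp : x ≠ p := by
      rintro rfl
      simp [hp] at hdeep
    have hloc := h.other x hxp hxq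
    exact ⟨x, mem_transit_succ h.lt (mem_transit.2 ⟨hcharge, hregion⟩) (by rw [hloc, hregion]),
      by rw [hloc]; lia⟩

lemma exists_mem_transit_succ (ht : t < R.N) (hx : x ∈ R.transit (some l) t)
    (hd : 1 < depth R.k (R.loc t x)) :
    ∃ y ∈ R.transit (some l) (t + 1), min R.k (depth R.k (R.loc t x)) +
      (R.wasteSteps t).card ≤ depth R.k (R.loc (t + 1) y) + (R.wasteSteps (t + 1)).card := by
  obtain ⟨p, q, hs⟩ := R.exists_swaps ht
  have hmono := R.card_wasteSteps_mono t
  have hregion := (mem_transit.1 hx).2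
  have of_le (hr : region (R.loc (t + 1) x) = some (some l))
      (hle : min R.k (depth R.k (R.loc t x)) ≤ depth R.k (R.loc (t + 1) x)) :
      ∃ y ∈ R.transit (some l) (t + 1), min R.k (depth R.k (R.loc t x)) +
        (R.wasteSteps t).card ≤ depth R.k (R.loc (t + 1) y) + (R.wasteSteps (t + 1)).card :=
    ⟨x, mem_transit_succ ht hx hr, Nat.add_le_add hle hmono⟩
  by_cases hxpq : x ≠ p ∧ x ≠ q
  · have hloc := hs.other x hxpq.1 hxpq.2
    exact of_le (by rw [hloc, hregion]) (by rw [hloc]; exact min_le_right _ _)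
  rcases hs.root_or_path_or_nook with ⟨r, hp, hq⟩ | ⟨r, d, hp, hq⟩ | ⟨l', hp, hq⟩
  · exfalso
    obtain rfl | rfl : x = p ∨ x = q := by tauto
    · simp [hp] at hregion
    · simp [hq] at hd
  · obtain rfl | rfl : x = p ∨ x = q := by tauto
    · obtain rfl : r = some l := by simpa [hp] using hregion
      exact of_le (by simp [hs.down, hq]) (by simp [hs.down, hp, hq])
    · obtain rfl : r = some l := by simpa [hq] using hregion
      exact hs.exists_mem_transit_succ_of_path hp hq hx
  · have hk : R.k - 1 + 1 = R.k := Nat.sub_add_cancel (Nat.le_of_succ_le R.two_le_k)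
    have hr : region (R.loc t p) = region (R.loc t q) := by simp [hp, hq]
    refine of_le (by rw [hs.region_eq hr, hregion]) ?_
    obtain rfl | rfl : x = p ∨ x = q := by tauto
    · simp [hs.down, hp, hq, hk]
    · simp [hs.up, hp, hq, hk]

namespace Budget

lemma exists_depth_add_card_wasteSteps (h : R.Budget c) (hk : 2 * c + 1 < R.k) (l : Fin m)
    (ht : t ≤ R.N) :
    ∃ x ∈ R.transit (some l) t, R.k ≤ depth R.k (R.loc t x) + (R.wasteSteps t).card := by
  induction t with
  | zero =>
    obtain ⟨σ, hσ⟩ := R.init_item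
    exact ⟨.inl (σ.symm (some l)), by simp [mem_transit, hσ, itemVtx], by simp [hσ, itemVtx]⟩
  | succ t ih =>
    obtain ⟨x, hx, hd⟩ := ih (Nat.le_of_succ_le ht)
    have hwaste := h.card_wasteSteps_le (Nat.le_of_succ_le ht)
    obtain ⟨y, hy, hle⟩ := exists_mem_transit_succ ht hx (by lia)
    exact ⟨y, hy, by lia⟩

lemma exists_depth (h : R.Budget c) (hk : 2 * c + 1 < R.k) (l : Fin m) (ht : t ≤ R.N) :
    ∃ x ∈ R.transit (some l) t, R.k ≤ depth R.k (R.loc t x) + 2 * c := by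
  obtain ⟨x, hx, hd⟩ := h.exists_depth_add_card_wasteSteps hk l ht
  exact ⟨x, hx, hd.trans (Nat.add_le_add_left (h.card_wasteSteps_le ht) _)⟩

end Budget

lemma departed_le_arrived_add_card_wasteSteps (r : Option (Fin m)) (ht : t ≤ R.N) :
    R.departed r t ≤ R.arrived r t + 1 + (R.wasteSteps t).card := by
  induction t with
  | zero => rw [departed_zero]; exact Nat.zero_le _
  | succ t ih =>
    have hle := ih (Nat.le_of_succ_le ht)
    have hsucc := R.departed_succ_le r ht
    have harrived : R.arrived r t ≤ R.arrived r (t + 1) := R.arrived_mono r (Nat.le_succ t)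
    have hmono := R.card_wasteSteps_mono t
    by_contra! hgt
    have hlt : R.departed r t < R.departed r (t + 1) := by lia
    obtain ⟨p, q, hs⟩ := R.exists_swaps ht
    rcases hs.root_or_path_or_nook with ⟨r', hp, hq⟩ | ⟨r', d, hp, hq⟩ | ⟨l, hp, hq⟩
    · obtain rfl | hr := eq_or_ne r r'
      · have hslack := hs.two_le_slack_of_departed_lt hp hq hlt (by lia) (by lia)
        have hwaste := card_wasteSteps_succ (hs.notMem_quietSteps (by simp [hp])) hslack
        lia
      · exact hlt.ne' (hs.departed_succ_of_root_of_ne hp hq hr)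
    · exact hlt.ne' (hs.departed_eq (by simp [hp, hq]) r)
    · exact hlt.ne' (hs.departed_eq (by simp [hp, hq]) r)

lemma prefixCount_mono (R : Run m ι) (l : Fin m) : Monotone (R.prefixCount l) := by
  classical
  exact fun a a' h => Finset.card_le_card
    (Finset.monotone_filter_right _ fun b _ hb => ⟨hb.1, hb.2.trans_le h⟩)

lemma prefixCount_le_add_sub (R : Run m ι) (l : Fin m) (a a' : ℕ) :
    R.prefixCount l a' ≤ R.prefixCount l a + (a' - a) := by
  classical
  have hsub : (Finset.univ.filter fun b => R.slot b = l ∧ R.ordPos b < a') ⊆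
      (Finset.univ.filter fun b => R.slot b = l ∧ R.ordPos b < a) ∪
        Finset.univ.filter fun b => R.ordPos b ∈ Finset.Ico a a' := by
    intro b hb
    simp only [Finset.mem_union, Finset.mem_filter, Finset.mem_univ, true_and,
      Finset.mem_Ico] at hb ⊢
    lia
  have hcard : (Finset.univ.filter fun b => R.ordPos b ∈ Finset.Ico a a').card ≤ a' - a := by
    rw [← Nat.card_Ico]
    exact Finset.card_le_card_of_injOn R.ordPos (fun b hb => (Finset.mem_filter.1 hb).2)
      R.ordPos_injective.injOn
  exact (Finset.card_le_card hsub).trans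
    ((Finset.card_union_le _ _).trans (Nat.add_le_add_left hcard _))

namespace Budget

lemma departed_le_arrived (h : R.Budget c) (r : Option (Fin m)) (ht : t ≤ R.N) :
    R.departed r t ≤ R.arrived r t + 1 + 2 * c :=
  (departed_le_arrived_add_card_wasteSteps r ht).trans
    (Nat.add_le_add_left (h.card_wasteSteps_le ht) _)

lemma prefixCount_departed_le (h : R.Budget c) (l : Fin m) (ht : t ≤ R.N) :
    R.prefixCount l (R.departed none t) ≤ R.prefixCount l (R.arrived none t) + 2 * c + 1 := by
  have hle := h.departed_le_arrived none ht
  have hlip := R.prefixCount_le_add_sub l (R.arrived none t) (R.departed none t)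
  lia

lemma departedFor_le (h : R.Budget c) (l : Fin m) (ht : t ≤ R.N) :
    R.departedFor l t ≤ R.prefixCount l (R.departed none t) + c + 1 := by
  have hbounds := departedFor_bounds (R := R) l ht
  have hcut := h.card_cutSwaps_le (R.departed none t)
  lia

lemma departed_some_le (h : R.Budget c) (l : Fin m) (ht : t ≤ R.N) :
    R.departed (some l) t ≤ R.prefixCount l (R.departed none t) + 3 * c + 2 := by
  have harrived := h.departed_le_arrived (some l) ht
  have hle := R.arrived_le_departedFor l ht
  have hfor := h.departedFor_le l ht
  lia

lemma prefixCount_le_departed_some (h : R.Budget c) (l : Fin m) (ht : t ≤ R.N) :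
    R.prefixCount l (R.departed none t) ≤ R.departed (some l) t + 3 * c + 2 := by
  have hcount := h.prefixCount_departed_le l ht
  have hbounds := arrivedFrom_bounds (R := R) l ht
  have hcut := h.rev.card_cutSwaps_le (R.L - R.arrived none t)
  have hle := R.arrivedFrom_le_departed l ht
  lia

lemma prefixCount_le_arrived_some (h : R.Budget c) (l : Fin m) (ht : t ≤ R.N) :
    R.prefixCount l (R.departed none t) ≤ R.arrived (some l) t + 5 * c + 3 := by
  have hcount := h.prefixCount_le_departed_some l ht
  have harrived := h.departed_le_arrived (some l) ht
  lia

end Budget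

end Run

/-! ### Derailed tokens -/

namespace Run

variable {m : ℕ} {ι : Type*} [Fintype ι] {R : Run m ι} {x p q : Token m ι} {a : ι ⊕ ι}
  {l : Fin m} {r : Option (Fin m)} {c t t' : ℕ}

/-- A step inside a slot gadget that uses the nook, or moves a token waiting to depart away from the
root or a settled token towards the root. -/
def OffStep (R : Run m ι) (t : ℕ) (p q : Token m ι) : Prop :=
  R.Swaps t p q ∧ ((∃ l, R.loc t p = pathVtx (some l) (R.k - 1) ∧ R.loc t q = .nook l) ∨
    ∃ l d, R.loc t p = pathVtx (some l) d ∧ R.loc t q = pathVtx (some l) (d + 1) ∧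
      (R.charge p t = -1 ∨ R.charge q t = 1))

open Classical in
/-- The tokens moved by an off-step. All other tokens move monotonically in the slot gadgets while
they wait to depart and once they have settled. -/
noncomputable def derailed (R : Run m ι) : Finset (Token m ι) :=
  Finset.univ.filter fun x => ∃ t y, R.OffStep t x y ∨ R.OffStep t y x

lemma mem_derailed : x ∈ R.derailed ↔ ∃ t y, R.OffStep t x y ∨ R.OffStep t y x := by
  simp [derailed]

lemma OffStep.mem_wasteSteps (h : R.OffStep t p q) : t ∈ R.wasteSteps R.N := by
  obtain ⟨h, ⟨l, hp, hq⟩ | ⟨l, d, hp, hq, hv⟩⟩ := h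
  · exact Run.mem_wasteSteps.2
      ⟨h.lt, h.notMem_quietSteps (by simp [hp]), h.two_le_slack_of_nook hp hq⟩
  · have hslack := h.four_le_slack_of_path hp hq hv
    exact Run.mem_wasteSteps.2
      ⟨h.lt, h.notMem_quietSteps (by simp [hp]), by lia⟩

lemma OffStep.of_rev (h : R.rev.OffStep t p q) :
    R.OffStep (R.N - (t + 1)) (q.map id Sum.swap) (p.map id Sum.swap) := by
  obtain ⟨hs', hoff⟩ := h
  obtain ⟨s, hlt, rfl⟩ : ∃ s < R.N, t = R.N - (s + 1) :=
    have hlt : t < R.N := hs'.lt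
    ⟨R.N - (t + 1), by lia, by lia⟩
  obtain ⟨p', q', hs⟩ := R.exists_swaps hlt
  obtain ⟨rfl, rfl⟩ := hs'.unique hs.rev
  have hpred : R.N - (R.N - (s + 1) + 1) = s := by lia
  rw [rev_charge _ (Nat.sub_le _ _), rev_charge _ (Nat.sub_le _ _), rev_loc_pred hlt,
    rev_loc_pred hlt, Nat.sub_sub_self hlt, map_swap_map_swap, map_swap_map_swap, hs.up,
    hs.down] at hoff
  rw [hpred, map_swap_map_swap, map_swap_map_swap]
  refine ⟨hs, hoff.imp id fun ⟨l, d, hp, hq, hv⟩ => ⟨l, d, hp, hq, ?_⟩⟩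
  have hr : region (R.loc s p') = region (R.loc s q') := by simp [hp, hq]
  rw [hs.charge_eq hr, hs.charge_eq hr] at hv
  lia

lemma map_swap_notMem_rev_derailed (hx : x ∉ R.derailed) :
    x.map id Sum.swap ∉ R.rev.derailed := by
  intro hmem
  obtain ⟨t, y, h⟩ := mem_derailed.1 hmem
  refine hx (mem_derailed.2 ⟨R.N - (t + 1), y.map id Sum.swap, ?_⟩)
  rw [← map_swap_map_swap x]
  exact h.symm.imp OffStep.of_rev OffStep.of_rev

lemma Budget.card_derailed_le (h : R.Budget c) : R.derailed.card ≤ 4 * c := by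
  classical
  have hsub : R.derailed ⊆ (R.wasteSteps R.N).biUnion fun t =>
      Finset.univ.filter fun x => ∃ y, R.OffStep t x y ∨ R.OffStep t y x := by
    intro x hx
    obtain ⟨t, y, hoff⟩ := mem_derailed.1 hx
    exact Finset.mem_biUnion.2 ⟨t, hoff.elim OffStep.mem_wasteSteps OffStep.mem_wasteSteps,
      Finset.mem_filter.2 ⟨Finset.mem_univ _, y, hoff⟩⟩
  have htwo : ∀ t ∈ R.wasteSteps R.N,
      (Finset.univ.filter fun x => ∃ y, R.OffStep t x y ∨ R.OffStep t y x).card ≤ 2 := by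
    intro t ht
    obtain ⟨p, q, hs⟩ := R.exists_swaps (mem_wasteSteps.1 ht).1
    refine (Finset.card_le_card (t := {p, q}) fun x hx => ?_).trans Finset.card_le_two
    obtain ⟨-, y, hoff | hoff⟩ := Finset.mem_filter.1 hx
    · exact Finset.mem_insert.2 (.inl (hoff.1.unique hs).1)
    · exact Finset.mem_insert.2 (.inr (Finset.mem_singleton.2 (hoff.1.unique hs).2))
  have hcard := (Finset.card_le_card hsub).trans (Finset.card_biUnion_le_card_mul _ _ 2 htwo)
  have hwaste := h.card_wasteSteps_le le_rfl
  lia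

lemma loc_ne_nook (ha : .inr a ∉ R.derailed) (ht : t ≤ R.N) (l : Fin m) :
    R.loc t (.inr a) ≠ .nook l := by
  induction t with
  | zero => rcases a with b | b <;> simp [R.init_X, R.init_Y]
  | succ t ih =>
    obtain ⟨p, q, hs⟩ := R.exists_swaps ht
    by_cases hp : .inr a = p
    · rw [hp, hs.down]
      rcases hs.root_or_path_or_nook with ⟨r, -, hq⟩ | ⟨r, d, -, hq⟩ | ⟨l', hp', hq⟩
      · exact hq ▸ pathVtx_ne_nook _ _ _
      · exact hq ▸ pathVtx_ne_nook _ _ _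
      · exact absurd (mem_derailed.2 ⟨t, q, .inl (hp ▸ ⟨hs, .inl ⟨l', hp', hq⟩⟩)⟩) ha
    by_cases hq : .inr a = q
    · rw [hq, hs.up]
      rcases hs.root_or_path_or_nook with ⟨r, hp, -⟩ | ⟨r, d, hp, -⟩ | ⟨l', hp, -⟩
      · simp [hp]
      · exact hp ▸ pathVtx_ne_nook _ _ _
      · exact hp ▸ pathVtx_ne_nook _ _ _
    rw [hs.other _ hp hq]
    exact ih (Nat.le_of_succ_le ht)

lemma exists_loc_eq_pathVtx (ha : .inr a ∉ R.derailed) (ht : t ≤ R.N)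
    (hr : region (R.loc t (.inr a)) = some r) : ∃ d, R.loc t (.inr a) = pathVtx r d := by
  rcases depth_eq_of_region hr with h | ⟨l, -, h⟩
  · exact ⟨_, h⟩
  · exact absurd h (loc_ne_nook ha ht l)

lemma Swaps.loc_succ_of_root (h : R.Swaps t p q) (hp : R.loc t p = .root)
    (hx : region (R.loc t x) ≠ none) (hx' : region (R.loc (t + 1) x) ≠ none) :
    R.loc (t + 1) x = R.loc t x := by
  refine h.other x ?_ ?_
  · rintro rfl; simp [hp] at hx
  · rintro rfl; simp [h.up, hp] at hx'

lemma Swaps.depth_succ_of_nook (h : R.Swaps t p q) (hp : R.loc t p = pathVtx (some l) (R.k - 1))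
    (hq : R.loc t q = .nook l) (x : Token m ι) :
    depth R.k (R.loc (t + 1) x) = depth R.k (R.loc t x) := by
  have hk : R.k - 1 + 1 = R.k := Nat.sub_add_cancel (Nat.le_of_succ_le R.two_le_k)
  rcases eq_or_ne x p with rfl | hxp
  · simp [h.down, hp, hq, hk]
  rcases eq_or_ne x q with rfl | hxq
  · simp [h.up, hp, hq, hk]
  rw [h.other x hxp hxq]

lemma Swaps.depth_le_depth_succ_of_path (h : R.Swaps t p q) {d : ℕ} {y : Token m ι}
    (hp : R.loc t p = pathVtx r d) (hq : R.loc t q = pathVtx r (d + 1)) (hx : x ≠ p)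
    (hpath : ∃ r' e, R.loc t x = pathVtx r' e) (hr : region (R.loc t x) = region (R.loc t y))
    (hle : depth R.k (R.loc t x) ≤ depth R.k (R.loc t y)) :
    depth R.k (R.loc (t + 1) x) ≤ depth R.k (R.loc (t + 1) y) := by
  obtain ⟨r', e, he⟩ := hpath
  rcases eq_or_ne y q with rfl | hyq
  · rcases eq_or_ne x y with rfl | hxy
    · exact le_rfl
    obtain rfl : r' = r := by simpa [he, hq] using hr
    have hne : e ≠ d + 1 := fun heq => hxy (R.loc_injective h.lt.le (by rw [he, hq, heq]))
    rw [h.other x hx hxy, h.up, he, hp, depth_pathVtx, depth_pathVtx]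
    rw [he, hq, depth_pathVtx, depth_pathVtx] at hle
    lia
  have hx_le : depth R.k (R.loc (t + 1) x) ≤ depth R.k (R.loc t x) := by
    rcases eq_or_ne x q with rfl | hxq
    · simp [h.up, hp, hq]
    · rw [h.other x hx hxq]
  have hy_le : depth R.k (R.loc t y) ≤ depth R.k (R.loc (t + 1) y) := by
    rcases eq_or_ne y p with rfl | hyp
    · simp [h.down, hp, hq]
    · rw [h.other y hyp hyq]
  exact hx_le.trans (hle.trans hy_le)

lemma AtHome.depth_le_depth_succ (hat : R.AtHome a (t + 1)) (ha : .inr a ∉ R.derailed)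
    (ht : t < R.N) (hl : R.home a = some l) (hx : UnweightedTS.region (R.loc t x) = some (some l))
    (hx' : UnweightedTS.region (R.loc (t + 1) x) = some (some l))
    (hle : depth R.k (R.loc t (.inr a)) ≤ depth R.k (R.loc t x)) :
    depth R.k (R.loc (t + 1) (.inr a)) ≤ depth R.k (R.loc (t + 1) x) := by
  have hat0 := hat.mono (Nat.le_succ t)
  have hr := hat0.region
  have hr' := hat.region
  rw [hl] at hr hr'
  obtain ⟨p, q, hs⟩ := R.exists_swaps ht
  rcases hs.root_or_path_or_nook with ⟨r, hp, -⟩ | ⟨r, d, hp, hq⟩ | ⟨l', hp, hq⟩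
  · rwa [hs.loc_succ_of_root hp (by simp [hr]) (by simp [hr']),
      hs.loc_succ_of_root hp (by simp [hx]) (by simp [hx'])]
  · refine hs.depth_le_depth_succ_of_path hp hq ?_ ?_ (hr.trans hx.symm) hle
    · rintro rfl
      obtain rfl : r = some l := by simpa [hp] using hr
      exact ha (mem_derailed.2
        ⟨t, q, .inl ⟨hs, .inr ⟨l, d, hp, hq, .inl (charge_inr_eq_neg_one.2 hat0)⟩⟩⟩)
    · exact ⟨_, exists_loc_eq_pathVtx ha ht.le hr⟩
  · rwa [hs.depth_succ_of_nook hp hq, hs.depth_succ_of_nook hp hq]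

/-- The token `x` stays in region `r` from step `t` to step `t'`. -/
def Stays (R : Run m ι) (r : Option (Fin m)) (x : Token m ι) (t t' : ℕ) : Prop :=
  ∀ s, t ≤ s → s ≤ t' → region (R.loc s x) = some r

lemma AtHome.depth_le_depth (hat : R.AtHome a t') (ha : .inr a ∉ R.derailed)
    (hl : R.home a = some l) (h : t ≤ t') (ht : t' ≤ R.N)
    (hx : R.Stays (some l) x t t')
    (hle : depth R.k (R.loc t (.inr a)) ≤ depth R.k (R.loc t x)) :
    depth R.k (R.loc t' (.inr a)) ≤ depth R.k (R.loc t' x) := by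
  induction t', h using Nat.le_induction with
  | base => exact hle
  | succ t' htt ih =>
    exact hat.depth_le_depth_succ ha ht hl (hx t' htt (Nat.le_succ _))
      (hx _ (Nat.le_succ_of_le htt) le_rfl) (ih (hat.mono (Nat.le_succ _)) (Nat.le_of_succ_le ht)
        fun s hs hs' => hx s hs (Nat.le_succ_of_le hs'))

lemma Settled.depth_lt_depth (hset : R.Settled a t) (ha : .inr a ∉ R.derailed)
    (hl : R.goal a = some l) (h : t ≤ t') (ht : t' ≤ R.N)
    (hx : R.Stays (some l) x t t')
    (hlt : depth R.k (R.loc t x) < depth R.k (R.loc t (.inr a))) :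
    depth R.k (R.loc t' x) < depth R.k (R.loc t' (.inr a)) := by
  by_contra! hle
  refine hlt.not_ge ?_
  have hsub : R.N - (R.N - t) = t := Nat.sub_sub_self (h.trans ht)
  have hsub' : R.N - (R.N - t') = t' := Nat.sub_sub_self ht
  have hrev := AtHome.depth_le_depth (R := R.rev) (a := a.swap) (x := x.map id Sum.swap)
    (t := R.N - t') (t' := R.N - t) (l := l)
    ((rev_atHome _ _ (Nat.sub_le _ _)).2 (by rwa [hsub, Sum.swap_swap]))
    (map_swap_notMem_rev_derailed ha) (by rwa [rev_home, Sum.swap_swap]) (Nat.sub_le_sub_left h _)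
    (Nat.sub_le _ _) (fun s hs hs' => by
      rw [rev_loc, map_swap_map_swap]
      exact hx _ (by lia) (by lia))
  simpa [rev_loc, hsub] using hrev (by simpa [rev_loc, hsub'] using hle)

end Run

/-! ### The time tokens spend in transit -/

namespace Run

variable {m : ℕ} {ι : Type*} [Fintype ι] {R : Run m ι} {x : Token m ι} {a : ι ⊕ ι} {b b' : ι}
  {r : Option (Fin m)} {c t t₁ t₂ : ℕ}

lemma root_or_pathVtx_of_region_ne (ht : t < R.N)
    (h : region (R.loc (t + 1) x) ≠ region (R.loc t x)) :
    (R.loc t x = .root ∧ ∃ r, R.loc (t + 1) x = pathVtx r 0) ∨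
      R.loc (t + 1) x = .root ∧ ∃ r, R.loc t x = pathVtx r 0 := by
  obtain ⟨p, q, hs⟩ := R.exists_swaps ht
  rcases hs.root_or_path_or_nook with ⟨r, hp, hq⟩ | ⟨r, d, hp, hq⟩ | ⟨l, hp, hq⟩
  · rcases eq_or_ne x p with rfl | hxp
    · exact .inl ⟨hp, r, hs.down.trans hq⟩
    rcases eq_or_ne x q with rfl | hxq
    · exact .inr ⟨hs.up.trans hp, r, hq⟩
    exact absurd (congrArg region (hs.other x hxp hxq)) h
  · exact absurd (hs.region_eq (by simp [hp, hq]) x) h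
  · exact absurd (hs.region_eq (by simp [hp, hq]) x) h

lemma loc_succ_eq_pathVtx_zero (ht : t < R.N) (h : region (R.loc t x) ≠ some r)
    (h' : region (R.loc (t + 1) x) = some r) : R.loc (t + 1) x = pathVtx r 0 := by
  rcases root_or_pathVtx_of_region_ne ht (h' ▸ h.symm) with ⟨-, r', hx⟩ | ⟨hx, -⟩
  · obtain rfl : r' = r := by simpa [hx] using h'
    exact hx
  · simp [hx] at h'

lemma loc_eq_pathVtx_zero (ht : t < R.N) (h : region (R.loc t x) = some r)
    (h' : region (R.loc (t + 1) x) ≠ some r) : R.loc t x = pathVtx r 0 := by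
  rcases root_or_pathVtx_of_region_ne ht (h ▸ h') with ⟨hx, -⟩ | ⟨-, r', hx⟩
  · simp [hx] at h
  · obtain rfl : r' = r := by simpa [hx] using h
    exact hx

lemma exists_settled_succ (ht : t ≤ R.N) (h : ¬R.Settled a t) :
    ∃ s, t ≤ s ∧ s < R.N ∧ R.Settled a (s + 1) ∧
      R.loc (s + 1) (.inr a) = pathVtx (R.goal a) 0 := by
  obtain ⟨s, hts, hsN, hbefore, hs⟩ := exists_first_switch (R.Settled a) ht h (R.settled_N a)
  refine ⟨s, hts, hsN, hs, loc_succ_eq_pathVtx_zero hsN (fun hr => ?_) (hs.region hsN)⟩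
  exact hbefore s hts le_rfl ((settled_iff_succ hsN).2 ⟨hs, hr⟩)

lemma exists_queueSwap (ht : t ≤ R.N) (hlt : R.ordPos b < R.ordPos b')
    (hb : R.AtHome (.inl b) t) (hb' : ¬R.AtHome (.inl b') t) :
    ∃ s, R.QueueSwap s b b' ∨ R.QueueSwap s b' b := by
  by_contra! hno
  have hkeep : ∀ s ≤ t, ¬R.queuePos b' s < R.queuePos b s := by
    intro s hs
    induction s with
    | zero => simpa [queuePos_zero] using hlt.le
    | succ s ih =>
      rw [queuePos_succ_lt_iff (hs.trans ht) (hb.mono hs) (hno s).1 (hno s).2]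
      exact ih (Nat.le_of_succ_le hs)
  refine hkeep t le_rfl ?_
  rw [queuePos_eq_zero.2 hb']
  exact Nat.pos_of_ne_zero fun h => queuePos_eq_zero.1 h hb

open Classical in
lemma card_filter_atHome_le_card_sameSlotSwaps (ht : t ≤ R.N) (hb : ¬R.AtHome (.inl b) t) :
    (Finset.univ.filter fun b' => (R.slot b' = R.slot b ∧ R.ordPos b' < R.ordPos b) ∧
      R.AtHome (.inl b') t).card ≤ R.sameSlotSwaps.card := by
  have hswap (b' : ι) : ∃ s, (R.slot b' = R.slot b ∧ R.ordPos b' < R.ordPos b) ∧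
      R.AtHome (.inl b') t → R.QueueSwap s b' b ∨ R.QueueSwap s b b' := by
    by_cases h : (R.slot b' = R.slot b ∧ R.ordPos b' < R.ordPos b) ∧ R.AtHome (.inl b') t
    · exact (exists_queueSwap ht h.1.2 h.2 hb).imp fun s hs _ => hs
    · exact ⟨0, fun h' => absurd h' h⟩
  choose f hf using hswap
  refine Finset.card_le_card_of_injOn f (fun d hd => ?_) fun d hd d' hd' heq => ?_
  · have hd := (Finset.mem_filter.1 hd).2
    refine mem_sameSlotSwaps.2 ?_
    rcases hf d hd with h | h
    · exact ⟨d, b, h, hd.1.1⟩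
    · exact ⟨b, d, h, hd.1.1.symm⟩
  · have hd := (Finset.mem_filter.1 hd).2
    have hd' := (Finset.mem_filter.1 hd').2
    have hne : d ≠ b := fun h => hd.1.2.ne (by rw [h])
    have hne' : d' ≠ b := fun h => hd'.1.2.ne (by rw [h])
    rcases hf d hd with h | h <;> rcases heq ▸ hf d' hd' with h' | h'
    · exact (h.unique h').1
    · exact absurd (h.unique h').1 hne
    · exact absurd (h.unique h').1.symm hne'
    · exact (h.unique h').2

lemma mem_derailed_of_settled (ht : t ≤ R.N) (hslot : R.slot b' = R.slot b)
    (hlt : R.ordPos b < R.ordPos b') (hb : ¬R.Settled (.inl b) t) (hb' : R.Settled (.inl b') t) :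
    .inr (.inl b') ∈ R.derailed := by
  by_contra hderailed
  obtain ⟨s, hts, hsN, hs, hloc⟩ := exists_settled_succ ht hb
  have hs' := hb'.mono (Nat.le_succ_of_le hts)
  have hgoal : R.goal (.inl b') = some (R.slot b) := congrArg some hslot
  obtain ⟨d, hd⟩ := exists_loc_eq_pathVtx hderailed hsN (hs'.region hsN)
  rw [hgoal] at hd
  have hd0 : d ≠ 0 := by
    rintro rfl
    obtain rfl : b = b' := by simpa using R.loc_injective hsN (hloc.trans hd.symm)
    exact lt_irrefl _ hlt
  have hdepth := hs'.depth_lt_depth (x := .inr (.inl b)) hderailed hgoal hsN le_rfl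
    (fun r hr hrN => (hs.mono hr).region hrN)
    (by rw [hloc, hd, depth_pathVtx, depth_pathVtx]; lia)
  rw [R.final_X, R.final_X] at hdepth
  have hpos := R.slotPos_lt_slotPos b b' hslot.symm hlt
  have hbound := R.slotPos_lt b'
  simp only [depth, hslot] at hdepth hbound
  lia

open Classical in
lemma card_filter_settled_le_card_derailed (ht : t ≤ R.N) (hb : ¬R.Settled (.inl b) t) :
    (Finset.univ.filter fun b' => (R.slot b' = R.slot b ∧ R.ordPos b < R.ordPos b') ∧
      R.Settled (.inl b') t).card ≤ R.derailed.card := by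
  refine Finset.card_le_card_of_injOn (fun b' => .inr (.inl b')) (fun b' hb' => ?_)
    (Sum.inr_injective.comp Sum.inl_injective).injOn
  obtain ⟨⟨hslot, hlt⟩, hset⟩ := (Finset.mem_filter.1 hb').2
  exact mem_derailed_of_settled ht hslot hlt hb hset

lemma prefixCount_ordPos_le (ht : t ≤ R.N) (hb : ¬R.AtHome (.inl b) t) :
    R.prefixCount (R.slot b) (R.ordPos b) ≤ R.departedFor (R.slot b) t + R.sameSlotSwaps.card := by
  classical
  refine le_trans ?_ (Nat.add_le_add_left (card_filter_atHome_le_card_sameSlotSwaps ht hb) _)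
  refine (Finset.card_le_card fun b' hb' => ?_).trans (Finset.card_union_le _ _)
  simp only [Finset.mem_union, Finset.mem_filter, Finset.mem_univ, true_and] at hb' ⊢
  tauto

lemma arrived_slot_le (ht : t ≤ R.N) (hb : ¬R.Settled (.inl b) t) :
    R.arrived (some (R.slot b)) t ≤
      R.prefixCount (R.slot b) (R.ordPos b) + R.derailed.card := by
  classical
  refine le_trans ?_ (Nat.add_le_add_left (card_filter_settled_le_card_derailed ht hb) _)
  rw [arrived_some]
  refine (Finset.card_le_card fun b' hb' => ?_).trans (Finset.card_union_le _ _)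
  simp only [Finset.mem_union, Finset.mem_filter, Finset.mem_univ, true_and] at hb' ⊢
  rcases lt_trichotomy (R.ordPos b') (R.ordPos b) with hlt | heq | hlt
  · exact .inl ⟨hb'.1, hlt⟩
  · exact absurd (R.ordPos_injective heq ▸ hb'.2) hb
  · exact .inr ⟨⟨hb'.1, hlt⟩, hb'.2⟩

lemma Budget.prefixCount_le_of_charge_inl_eq_zero (h : R.Budget c) (h₁₂ : t₁ ≤ t₂) (h₂ : t₂ ≤ R.N)
    (hcharge₁ : R.charge (.inr (.inl b)) t₁ = 0) (hcharge₂ : R.charge (.inr (.inl b)) t₂ = 0) :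
    R.prefixCount (R.slot b) (R.departed none t₂) ≤
      R.prefixCount (R.slot b) (R.departed none t₁) + 11 * c + 4 := by
  have h₁ := h₁₂.trans h₂
  have hstart := prefixCount_ordPos_le h₁ (charge_inr_eq_zero.1 hcharge₁).1
  have hend := arrived_slot_le h₂ (charge_inr_eq_zero.1 hcharge₂).2
  have hsame := h.card_sameSlotSwaps_le
  have hderailed := h.card_derailed_le
  have hdeparted := h.departedFor_le (R.slot b) h₁
  have harrived := h.prefixCount_le_arrived_some (R.slot b) h₂
  lia

lemma Budget.prefixCount_le_of_charge_inr_eq_zero (h : R.Budget c) (h₁₂ : t₁ ≤ t₂) (h₂ : t₂ ≤ R.N)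
    (hcharge₁ : R.charge (.inr (.inr b)) t₁ = 0) (hcharge₂ : R.charge (.inr (.inr b)) t₂ = 0) :
    R.prefixCount (R.slot b) (R.departed none t₂) ≤
      R.prefixCount (R.slot b) (R.departed none t₁) + 13 * c + 5 := by
  have h₁ := h₁₂.trans h₂
  have hcharge {t : ℕ} (ht : t ≤ R.N) (h : R.charge (.inr (.inr b)) t = 0) :
      R.rev.charge (.inr (.inl b)) (R.N - t) = 0 := by
    simpa [rev_charge _ (Nat.sub_le _ _), Nat.sub_sub_self ht] using h
  have hcount {t : ℕ} (ht : t ≤ R.N) :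
      R.prefixCount (R.slot b) (R.arrived none t) +
        R.rev.prefixCount (R.slot b) (R.rev.departed none (R.N - t)) = R.len (R.slot b) := by
    have hsum := arrived_none_add_rev_departed ht
    rw [← prefixCount_add_rev_prefixCount (R.slot b) (Nat.le.intro hsum),
      Nat.sub_eq_of_eq_add' hsum.symm]
  have hrev := h.rev.prefixCount_le_of_charge_inl_eq_zero (Nat.sub_le_sub_left h₁₂ R.N)
    (Nat.sub_le _ _) (hcharge h₂ hcharge₂) (hcharge h₁ hcharge₁)
  have hcount₁ := hcount h₁
  have hcount₂ := hcount h₂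
  have hmono := R.prefixCount_mono (R.slot b) (arrived_none_le_departed_none h₁)
  have hle := h.prefixCount_departed_le (R.slot b) h₂
  rw [rev_slot] at hrev
  lia

end Run

/-! ### Occupants of a slot gadget -/

lemma exists_last_entry (p : ℕ → Prop) {t : ℕ} (h : p t) :
    ∃ s ≤ t, (∀ r, s ≤ r → r ≤ t → p r) ∧ ∀ s', s = s' + 1 → ¬p s' := by
  classical
  have hex : ∃ s, s ≤ t ∧ ∀ r, s ≤ r → r ≤ t → p r :=
    ⟨t, le_rfl, fun r hr hr' => le_antisymm hr hr' ▸ h⟩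
  obtain ⟨hle, hall⟩ := Nat.find_spec hex
  refine ⟨Nat.find hex, hle, hall, fun s' hs' hp => ?_⟩
  refine Nat.find_min hex (m := s') (by lia) ⟨by lia, fun r hr hr' => ?_⟩
  rcases hr.eq_or_lt with rfl | hr
  · exact hp
  · exact hall r (by lia) hr'

namespace Run

variable {m : ℕ} {ι : Type*} [Fintype ι] {R : Run m ι} {x y : Token m ι} {a : ι ⊕ ι}
  {l : Fin m} {r : Option (Fin m)} {c s t t' : ℕ}

lemma Stays.mono (h : R.Stays r x t t') (ht : t ≤ s) {s' : ℕ} (ht' : s' ≤ t') :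
    R.Stays r x s s' :=
  fun i hi hi' => h i (ht.trans hi) (hi'.trans ht')

lemma Stays.charge_eq (h : R.Stays r x t t') (htt : t ≤ t') (ht : t' ≤ R.N) :
    R.charge x t' = R.charge x t := by
  induction t', htt using Nat.le_induction with
  | base => rfl
  | succ t' htt ih =>
    rw [charge_succ ht ((h _ (Nat.le_succ_of_le htt) le_rfl).trans (h _ htt (Nat.le_succ _)).symm)]
    exact ih (h.mono le_rfl (Nat.le_succ _)) (Nat.le_of_succ_le ht)

lemma depth_le_depth_succ_add_one (ht : t < R.N) (x : Token m ι) :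
    depth R.k (R.loc t x) ≤ depth R.k (R.loc (t + 1) x) + 1 := by
  obtain ⟨p, q, h⟩ := R.exists_swaps ht
  have hk := R.two_le_k
  rcases eq_or_ne x p with rfl | hxp
  · rw [h.down]
    rcases h.root_or_path_or_nook with ⟨r, hp, hq⟩ | ⟨r, d, hp, hq⟩ | ⟨l, hp, hq⟩ <;>
      simp only [hp, hq, depth_pathVtx, depth_root, depth_nook]
    all_goals lia
  rcases eq_or_ne x q with rfl | hxq
  · rw [h.up]
    rcases h.root_or_path_or_nook with ⟨r, hp, hq⟩ | ⟨r, d, hp, hq⟩ | ⟨l, hp, hq⟩ <;>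
      simp only [hp, hq, depth_pathVtx, depth_root, depth_nook]
    all_goals lia
  rw [h.other x hxp hxq]
  exact Nat.le_succ _

variable (R) in
open Classical in
/-- The tokens with home region `r` that leave it for the first time between steps `t` and `t'`. -/
noncomputable def departures (r : Option (Fin m)) (t t' : ℕ) : Finset (ι ⊕ ι) :=
  Finset.univ.filter fun a => R.home a = r ∧ R.AtHome a t ∧ ¬R.AtHome a t'

variable (R) in
open Classical in
/-- The tokens with goal region `r` that settle in it between steps `t` and `t'`. -/
noncomputable def arrivals (r : Option (Fin m)) (t t' : ℕ) : Finset (ι ⊕ ι) :=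
  Finset.univ.filter fun a => R.goal a = r ∧ ¬R.Settled a t ∧ R.Settled a t'

lemma departed_add_card_departures (r : Option (Fin m)) (h : t ≤ t') :
    R.departed r t + (R.departures r t t').card = R.departed r t' := by
  classical
  rw [departed, departed, departures, ← Finset.card_union_of_disjoint]
  · congr 1
    ext a
    have hmono : R.AtHome a t' → R.AtHome a t := fun h' => h'.mono h
    simp only [Finset.mem_union, Finset.mem_filter, Finset.mem_univ, true_and]
    tauto
  · exact Finset.disjoint_filter.2 fun a _ h h' => h.2 h'.2.1

lemma arrived_add_card_arrivals (r : Option (Fin m)) (h : t ≤ t') :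
    R.arrived r t + (R.arrivals r t t').card = R.arrived r t' := by
  classical
  rw [arrived, arrived, arrivals, ← Finset.card_union_of_disjoint]
  · congr 1
    ext a
    have hmono : R.Settled a t → R.Settled a t' := fun h' => h'.mono h
    simp only [Finset.mem_union, Finset.mem_filter, Finset.mem_univ, true_and]
    tauto
  · exact Finset.disjoint_filter.2 fun a _ h h' => h'.2.1 h.2

lemma le_card_of_forall_pathVtx {S : Finset (Token m ι)} {D : ℕ} (ht : t ≤ R.N)
    (hD : D ≤ R.regionLen r) (hS : ∀ x d, d < D → R.loc t x = pathVtx r d → x ∈ S) :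
    D ≤ S.card := by
  have hex (d : Fin D) : ∃ x, R.loc t x = pathVtx r d :=
    R.exists_loc_eq ht ((R.inTree_pathVtx _ _).2 (d.2.trans_le hD))
  choose f hf using hex
  have hinj : Function.Injective f := fun d d' h =>
    Fin.ext (pathVtx_inj ((hf d).symm.trans (h ▸ hf d'))).2
  simpa using Finset.card_le_card_of_injOn (s := Finset.univ) f
    (fun d _ => hS _ d d.2 (hf d)) hinj.injOn

lemma not_atHome_of_stays (ha : .inr a ∉ R.derailed) (hl : R.home a = some l) (h : t ≤ t')
    (ht : t' ≤ R.N) (hx : R.Stays (some l) x t t') (hx0 : R.loc t' x = pathVtx (some l) 0)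
    (hlt : depth R.k (R.loc t (.inr a)) < depth R.k (R.loc t x)) : ¬R.AtHome a t' := by
  intro hat
  have hle := hat.depth_le_depth ha hl h ht hx hlt.le
  obtain ⟨d, hd⟩ := exists_loc_eq_pathVtx ha ht (hat.region.trans (congrArg some hl))
  rw [hd, hx0, depth_pathVtx, depth_pathVtx, Nat.add_le_add_iff_right, Nat.le_zero] at hle
  rw [R.loc_injective ht (hd.trans (hle ▸ hx0.symm))] at hlt
  exact lt_irrefl _ hlt

lemma not_settled_of_stays (ha : .inr a ∉ R.derailed) (hl : R.goal a = some l) (h : t ≤ t')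
    (ht : t' ≤ R.N) (hx : R.Stays (some l) x t t') (hx0 : R.loc t x = pathVtx (some l) 0)
    (hlt : depth R.k (R.loc t' (.inr a)) < depth R.k (R.loc t' x)) : ¬R.Settled a t := by
  intro hset
  have htN := h.trans ht
  obtain ⟨d, hd⟩ := exists_loc_eq_pathVtx ha htN ((hset.region htN).trans (congrArg some hl))
  rcases Nat.eq_zero_or_pos d with rfl | hpos
  · rw [R.loc_injective htN (hd.trans hx0.symm)] at hlt
    exact lt_irrefl _ hlt
  · refine hlt.not_gt (hset.depth_lt_depth ha hl h ht hx ?_)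
    rw [hd, hx0, depth_pathVtx, depth_pathVtx]
    lia

/-- If `x` goes from the root to depth `D` and then `y` comes back to the root from depth `D`, the
tokens between them and the root are replaced: all of them arrive or depart, with few exceptions. -/
lemma le_card_add_card_arrivals_add_card_departures {D : ℕ} (hD : D ≤ R.len l) {t₁ t₂ t₃ : ℕ}
    (h₁₂ : t₁ ≤ t₂) (h₂₃ : t₂ ≤ t₃) (h₃ : t₃ ≤ R.N)
    (hx : R.Stays (some l) x t₁ t₂) (hy : R.Stays (some l) y t₂ t₃)
    (hx₁ : R.loc t₁ x = pathVtx (some l) 0) (hy₃ : R.loc t₃ y = pathVtx (some l) 0)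
    (hx₂ : D < depth R.k (R.loc t₂ x)) (hy₂ : D < depth R.k (R.loc t₂ y)) :
    D ≤ (R.transit (some l) t₂).card + R.derailed.card + (R.arrivals (some l) t₁ t₂).card +
      (R.departures (some l) t₂ t₃).card := by
  classical
  have h₂ := h₂₃.trans h₃
  have hcover := le_card_of_forall_pathVtx (r := some l) (S := R.transit (some l) t₂ ∪ R.derailed ∪
    (R.arrivals (some l) t₁ t₂).image .inr ∪ (R.departures (some l) t₂ t₃).image .inr) h₂ hD
    fun z d hd hz => by
      have hregion : region (R.loc t₂ z) = some (some l) := by rw [hz, region_pathVtx]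
      have hlt {w : Token m ι} (hw : D < depth R.k (R.loc t₂ w)) :
          depth R.k (R.loc t₂ z) < depth R.k (R.loc t₂ w) := by
        rw [hz, depth_pathVtx]
        lia
      simp only [Finset.mem_union, Finset.mem_image, or_assoc]
      by_cases hderailed : z ∈ R.derailed
      · exact .inr (.inl hderailed)
      rcases R.charge_cases z t₂ with hcharge | hcharge | hcharge
      · obtain ⟨a, rfl, hat⟩ := charge_eq_neg_one.1 hcharge
        have hhome := hat.home_eq hregion
        exact .inr (.inr (.inr ⟨a, Finset.mem_filter.2 ⟨Finset.mem_univ _, hhome, hat,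
          not_atHome_of_stays hderailed hhome h₂₃ h₃ hy hy₃ (hlt hy₂)⟩, rfl⟩))
      · exact .inl (mem_transit.2 ⟨hcharge, hregion⟩)
      · obtain ⟨a, rfl, hset⟩ := (charge_eq_one h₂).1 hcharge
        have hgoal := hset.goal_eq h₂ hregion
        exact .inr (.inr (.inl ⟨a, Finset.mem_filter.2 ⟨Finset.mem_univ _, hgoal,
          not_settled_of_stays hderailed hgoal h₁₂ h₂ hx hx₁ (hlt hx₂), hset⟩, rfl⟩))
  have hunion := Finset.card_union_le (R.transit (some l) t₂ ∪ R.derailed ∪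
    (R.arrivals (some l) t₁ t₂).image .inr) ((R.departures (some l) t₂ t₃).image .inr)
  have hunion' := Finset.card_union_le (R.transit (some l) t₂ ∪ R.derailed)
    ((R.arrivals (some l) t₁ t₂).image .inr)
  have hunion'' := Finset.card_union_le (R.transit (some l) t₂) R.derailed
  rw [Finset.card_image_of_injective _ Sum.inr_injective] at hunion hunion'
  lia

lemma exists_stays_of_not_stays (ht : t' ≤ R.N)
    (hregion : region (R.loc t x) = some r) (hx : ¬R.Stays r x t t') :
    ∃ s, t ≤ s ∧ s < t' ∧ R.Stays r x t s ∧ R.loc s x = pathVtx r 0 := by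
  obtain ⟨i, hti, hit, hi⟩ : ∃ i, t ≤ i ∧ i ≤ t' ∧ region (R.loc i x) ≠ some r := by
    simpa only [Stays, not_forall, exists_prop] using hx
  obtain ⟨s, hts, hsi, hall, hs⟩ := exists_first_switch
    (fun i => region (R.loc i x) ≠ some r) hti (not_not.2 hregion) hi
  have hstays : R.Stays r x t s := fun j hj hj' => not_not.1 (hall j hj hj')
  exact ⟨s, hts, hsi.trans_le hit, hstays,
    loc_eq_pathVtx_zero (by lia) (hstays s hts le_rfl) hs⟩

namespace Budget

lemma departed_add_k_le (h : R.Budget c) (hlen : R.k ≤ R.len l) {t₁ t₂ t₃ : ℕ}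
    (h₁₂ : t₁ ≤ t₂) (h₂₃ : t₂ ≤ t₃) (h₃ : t₃ ≤ R.N)
    (hx : R.Stays (some l) x t₁ t₂) (hy : R.Stays (some l) y t₂ t₃)
    (hx₁ : R.loc t₁ x = pathVtx (some l) 0) (hy₃ : R.loc t₃ y = pathVtx (some l) 0)
    (hx₂ : R.k ≤ depth R.k (R.loc t₂ x) + 2 * c)
    (hy₂ : R.k ≤ depth R.k (R.loc t₂ y) + 1 + 2 * c) :
    R.departed (some l) t₁ + R.k ≤ R.departed (some l) t₃ + 8 * c + 4 := by
  have h₂ := h₂₃.trans h₃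
  have hcard := card_transit (R := R) (some l) h₂
  have harrived := arrived_add_card_arrivals (R := R) (some l) h₁₂
  have hdeparted := departed_add_card_departures (R := R) (some l) h₂₃
  have hderailed := h.card_derailed_le
  have hle := h.departed_le_arrived (some l) (h₁₂.trans h₂)
  rw [if_neg (Option.some_ne_none l)] at hcard
  rcases le_or_gt R.k (2 * c + 2) with hk | hk
  · have hmono := R.departed_mono (some l) (h₁₂.trans h₂₃)
    lia
  · have hcover := le_card_add_card_arrivals_add_card_departures (D := R.k - 2 * c - 2)
      (by lia) h₁₂ h₂₃ h₃ hx hy hx₁ hy₃ (by lia) (by lia)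
    lia

lemma exists_stays_deep (h : R.Budget c) (hk : 2 * c + 1 < R.k) (l : Fin m) (ht : t ≤ R.N) :
    ∃ s ≤ t, (∃ x, R.charge x t = 0 ∧ R.Stays (some l) x s t ∧
        R.k ≤ depth R.k (R.loc s x) + 2 * c) ∧
      ∀ s', s = s' + 1 → ∃ y, region (R.loc s' y) = some (some l) ∧
        ¬R.Stays (some l) y s' t ∧ R.k ≤ depth R.k (R.loc s' y) + 2 * c := by
  classical
  have hex : ∃ s, s ≤ t ∧ ∃ x, R.charge x t = 0 ∧ R.Stays (some l) x s t ∧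
      R.k ≤ depth R.k (R.loc s x) + 2 * c := by
    obtain ⟨x, hx, hd⟩ := h.exists_depth hk l ht
    obtain ⟨hcharge, hregion⟩ := mem_transit.1 hx
    exact ⟨t, le_rfl, x, hcharge, fun s hs hs' => le_antisymm hs hs' ▸ hregion, hd⟩
  obtain ⟨hle, hx⟩ := Nat.find_spec hex
  refine ⟨Nat.find hex, hle, hx, fun s' hs' => ?_⟩
  obtain ⟨y, hy, hd⟩ := h.exists_depth hk l (t := s') (by lia)
  obtain ⟨hcharge, hregion⟩ := mem_transit.1 hy
  refine ⟨y, hregion, fun hstays => ?_, hd⟩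
  exact Nat.find_min hex (m := s') (by lia)
    ⟨by lia, y, (hstays.charge_eq (by lia) ht).trans hcharge, hstays, hd⟩

/-- One step before the earliest deep position of a token `x` that stays until `t`, some other
deep token `y` is about to leave before `t`: `x` goes in and `y` out. -/
lemma exists_stays_departed_add_k_le (h : R.Budget c) (hk : 2 * c + 1 < R.k) (l : Fin m)
    (hlen : R.k ≤ R.len l) (ht : t ≤ R.N) :
    ∃ x, ∃ te ≤ t, R.charge x t = 0 ∧ R.Stays (some l) x te t ∧
      (te = 0 ∨ R.departed (some l) te + R.k ≤ R.departed (some l) t + 8 * c + 4) := by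
  obtain ⟨s, hst, ⟨x, hcharge, hx, hdeep⟩, hmin⟩ := h.exists_stays_deep hk l ht
  obtain ⟨te, hte, henter, hfirst⟩ := exists_last_entry
    (fun i => region (R.loc i x) = some (some l)) (hx s le_rfl hst)
  have hxt : R.Stays (some l) x te t := fun i hi hit =>
    (le_total i s).elim (henter i hi) fun his => hx i his hit
  refine ⟨x, te, hte.trans hst, hcharge, hxt, ?_⟩
  rcases te with _ | te
  · exact .inl rfl
  have hx₀ := loc_succ_eq_pathVtx_zero (by lia) (hfirst te rfl) (henter _ le_rfl hte)
  have hne : te + 1 ≠ s := by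
    rintro rfl
    rw [hx₀, depth_pathVtx] at hdeep
    lia
  obtain ⟨s, rfl⟩ := Nat.exists_eq_add_one_of_ne_zero (n := s) (by lia)
  obtain ⟨y, hregion, hnot, hdeep'⟩ := hmin s rfl
  obtain ⟨t₃, hst₃, ht₃, hy, hy₀⟩ := exists_stays_of_not_stays ht hregion hnot
  have hlt : s ≠ t₃ := by
    rintro rfl
    rw [hy₀, depth_pathVtx] at hdeep'
    lia
  have hdepth := depth_le_depth_succ_add_one (R := R) (show s < R.N by lia) y
  have hle := h.departed_add_k_le hlen hte (by lia) (ht₃.le.trans ht)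
    (hxt.mono le_rfl hst) (hy.mono (Nat.le_succ s) le_rfl) hx₀ hy₀ hdeep (by lia)
  exact .inr (hle.trans (by grw [R.departed_mono (some l) ht₃.le]))

lemma exists_occupant (h : R.Budget c) (hk : 2 * c + 1 < R.k) (l : Fin m)
    (hlen : R.k ≤ R.len l) (ht : t ≤ R.N) :
    ∃ x, ∃ te ≤ t, R.Stays (some l) x te t ∧
      (te = 0 ∨ R.prefixCount l (R.departed none te) + R.k ≤
        R.prefixCount l (R.departed none t) + 14 * c + 8) ∧
      ((∃ e, x = .inl e) ∨ te ≠ 0 ∧ ∃ l', R.prefixCount l' (R.departed none t) ≤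
        R.prefixCount l' (R.departed none te) + 13 * c + 5) := by
  obtain ⟨x, te, hte, hcharge, hx, hle⟩ := h.exists_stays_departed_add_k_le hk l hlen ht
  refine ⟨x, te, hte, hx, hle.imp_right fun hle => ?_, ?_⟩
  · have hbefore := h.prefixCount_le_departed_some l (hte.trans ht)
    have hafter := h.departed_some_le l ht
    lia
  have hcharge' := (hx.charge_eq hte ht).symm.trans hcharge
  rcases x with e | b
  · exact .inl ⟨e, rfl⟩
  refine .inr ⟨?_, ?_⟩
  · rintro rfl
    exact (charge_inr_eq_zero.1 hcharge').1 (R.atHome_zero b)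
  rcases b with b | b
  · exact ⟨R.slot b, (h.prefixCount_le_of_charge_inl_eq_zero hte ht hcharge' hcharge).trans
      (by lia)⟩
  · exact ⟨R.slot b, h.prefixCount_le_of_charge_inr_eq_zero hte ht hcharge' hcharge⟩

end Budget

end Run

/-! ### Phases and the star swaps they determine -/

section Star

variable {m n p : ℕ}

lemma exists_last_eq {f : ℕ → ℕ} {N v : ℕ} (h0 : f 0 ≤ v) (hN : v ≤ f N)
    (hstep : ∀ t < N, f (t + 1) ≤ f t + 1) : ∃ t ≤ N, f t = v ∧ ∀ t' ≤ N, f t' ≤ v → t' ≤ t := by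
  have hspec := Nat.findGreatest_spec (P := fun t => f t ≤ v) (Nat.zero_le N) h0
  have hle : Nat.findGreatest (fun t => f t ≤ v) N ≤ N := Nat.findGreatest_le N
  refine ⟨_, hle, le_antisymm hspec ?_, fun t' ht' h => Nat.le_findGreatest ht' h⟩
  rcases hle.eq_or_lt with heq | hlt
  · exact hN.trans_eq (congrArg f heq.symm)
  · have hgt := Nat.findGreatest_is_greatest (P := fun t => f t ≤ v) (Nat.lt_succ_self _) hlt
    exact Nat.le_of_lt_succ ((not_le.1 hgt).trans_le (hstep _ hlt))

/-- The first phase from `p` on in which slot `l` is swapped, or `n` if there is none. -/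
noncomputable def nextPhase (s : Fin n → Fin m) (l : Fin m) (p : ℕ) : ℕ :=
  sInf {q | q = n ∨ p ≤ q ∧ ∃ h : q < n, s ⟨q, h⟩ = l}

lemma nextPhase_le (s : Fin n → Fin m) (l : Fin m) (p : ℕ) : nextPhase s l p ≤ n :=
  Nat.sInf_le (.inl rfl)

lemma le_nextPhase (s : Fin n → Fin m) (l : Fin m) (hp : p ≤ n) : p ≤ nextPhase s l p :=
  (Nat.sInf_mem ⟨n, .inl rfl⟩ : nextPhase s l p ∈ _).elim (fun h => hp.trans_eq h.symm) And.left

lemma ne_of_lt_nextPhase {s : Fin n → Fin m} {l : Fin m} {j : Fin n} (hj : p ≤ j)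
    (hlt : j < nextPhase s l p) : s j ≠ l :=
  fun hs => Nat.notMem_of_lt_sInf hlt (.inr ⟨hj, j.2, hs⟩)

lemma nextPhase_succ (s : Fin n → Fin m) {l : Fin m} (p : Fin n) (h : l ≠ s p) :
    nextPhase s l (p + 1) = nextPhase s l p := by
  unfold nextPhase
  congr 1
  ext q
  refine or_congr_right ⟨fun hq => ⟨Nat.le_of_succ_le hq.1, hq.2⟩,
    fun hq => ⟨hq.1.lt_of_ne ?_, hq.2⟩⟩
  rintro rfl
  exact h hq.2.2.symm

section Occupants

variable {L X : Type*} {f g : X → Option L} {o o' : L → X} {l : L}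

lemma eq_of_occupant_eq (hf : Function.Injective f) (hg : Function.Injective g)
    (hfo : ∀ i, f (o i) = some i) (hgo : ∀ i, g (o i) = some i) : f = g := by
  have hle {f g : X → Option L} (hf : Function.Injective f) (hfo : ∀ i, f (o i) = some i)
      (hgo : ∀ i, g (o i) = some i) {x : X} {i : L} (hx : f x = some i) : g x = some i :=
    hf (hx.trans (hfo i).symm) ▸ hgo i
  funext x
  exact Option.ext fun i => ⟨hle hf hfo hgo, hle hg hgo hfo⟩

variable [DecidableEq L]

lemma starApply_append_singleton (σ : List L) (l : L) (f : Option L → Option L) :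
    starApply (σ ++ [l]) f = fun x => swapV (none, some l) (starApply σ f x) :=
  List.foldl_append

lemma starApply_injective (σ : List L) {f : Option L → Option L} (hf : Function.Injective f) :
    Function.Injective (starApply σ f) := by
  induction σ using List.reverseRecOn with
  | nil => exact hf
  | append_singleton σ l ih =>
    rw [starApply_append_singleton]
    exact (swapV_involutive _).injective.comp ih

lemma swapV_occupant_eq (hf : Function.Injective f) (ho' : Function.Injective o')
    (h : ∀ i, f (o i) = some i) (heq : ∀ i ≠ l, o' i = o i) (hne : o' l ≠ o l) (i : L) :
    swapV (none, some l) (f (o' i)) = some i := by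
  rcases eq_or_ne i l with rfl | hi
  · have hnone : f (o' i) = none := by
      by_contra hsome
      obtain ⟨j, hj⟩ := Option.ne_none_iff_exists'.1 hsome
      have hoj := hf (hj.trans (h j).symm)
      rcases eq_or_ne j i with rfl | hji
      · exact hne hoj
      · exact hji (ho' (hoj.trans (heq j hji).symm)).symm
    rw [hnone, swapV, if_pos rfl]
  · rw [heq i hi, h]
    simp [swapV, hi]

end Occupants

lemma exists_sublist_starApply_occupant {s : Fin n → Fin m} (occ : ℕ → Fin m → Option (Fin m))
    (hinj : ∀ p ≤ n, Function.Injective (occ p))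
    (hstep : ∀ (p : Fin n) l, l ≠ s p → occ (p + 1) l = occ p l) (h0 : ∀ l, occ 0 l = some l)
    (hp : p ≤ n) :
    ∃ σ, σ.Sublist ((List.ofFn s).take p) ∧ ∀ l, starApply σ id (occ p l) = some l := by
  induction p with
  | zero => exact ⟨[], List.nil_sublist _, h0⟩
  | succ p ih =>
    obtain ⟨σ, hσ, hf⟩ := ih (Nat.le_of_succ_le hp)
    have hstep' := hstep ⟨p, hp⟩
    have htake : (List.ofFn s).take (p + 1) = (List.ofFn s).take p ++ [s ⟨p, hp⟩] := by
      rw [List.take_add_one, List.getElem?_ofFn, dif_pos (show p < n from hp), Option.toList_some]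
    rw [htake]
    by_cases heq : occ (p + 1) (s ⟨p, hp⟩) = occ p (s ⟨p, hp⟩)
    · refine ⟨σ, hσ.trans (List.sublist_append_left _ _), fun l => ?_⟩
      rcases eq_or_ne l (s ⟨p, hp⟩) with rfl | hl
      · rw [heq, hf]
      · rw [hstep' l hl, hf]
    · refine ⟨σ ++ [s ⟨p, hp⟩], hσ.append (List.Sublist.refl _), fun l => ?_⟩
      rw [starApply_append_singleton]
      exact swapV_occupant_eq (starApply_injective σ Function.injective_id) (hinj _ hp) hf hstep'
        heq l

lemma starSTSYes_of_occupants {s : Fin n → Fin m} {π : Equiv.Perm (Option (Fin m))}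
    (occ : ℕ → Fin m → Option (Fin m)) (hinj : ∀ p ≤ n, Function.Injective (occ p))
    (hstep : ∀ (p : Fin n) l, l ≠ s p → occ (p + 1) l = occ p l)
    (h0 : ∀ l, occ 0 l = some l) (hn : ∀ l, π (occ n l) = some l) :
    StarSTSYes π (List.ofFn s) := by
  obtain ⟨σ, hσ, hf⟩ := exists_sublist_starApply_occupant occ hinj hstep h0 le_rfl
  exact ⟨σ, hσ.trans (List.take_sublist _ _),
    eq_of_occupant_eq (starApply_injective σ Function.injective_id) π.injective hf hn⟩

end Star

namespace Run

variable {m : ℕ} {ι : Type*} [Fintype ι] {R : Run m ι} {c n B k' p q t : ℕ} {s : Fin n → Fin m}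
  {l : Fin m}

/-- The ordering gadget consists of `n` blocks of length `B`, the `j`-th one starting with `k`
letters `s j` and containing `k'` further letters of every slot. -/
structure Phased (R : Run m ι) (s : Fin n → Fin m) (B k' : ℕ) : Prop where
  L_eq : R.L = n * B
  prefixCount_big (j : Fin n) (l : Fin m) (hl : s j ≠ l) :
    R.prefixCount l (j * B + R.k) = R.prefixCount l (j * B)
  prefixCount_pad (j : Fin n) (l : Fin m) :
    R.prefixCount l ((j + 1) * B) = R.prefixCount l (j * B + R.k) + k'

namespace Phased

lemma prefixCount_le_add_mul (h : R.Phased s B k') (hpq : p ≤ q) (hq : q ≤ n)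
    (hs : ∀ j : Fin n, p ≤ j → j < q → s j ≠ l) :
    R.prefixCount l (q * B) ≤ R.prefixCount l (p * B) + (q - p) * k' := by
  induction q, hpq using Nat.le_induction with
  | base => exact Nat.le_add_right _ _
  | succ q hpq ih =>
    have hbig := h.prefixCount_big ⟨q, hq⟩ l (hs ⟨q, hq⟩ hpq (Nat.lt_succ_self q))
    rw [h.prefixCount_pad ⟨q, hq⟩ l, hbig, Nat.succ_sub hpq, Nat.succ_mul, ← add_assoc]
    exact Nat.add_le_add_right
      (ih (Nat.le_of_succ_le hq) fun j hj hjq => hs j hj (Nat.lt_succ_of_lt hjq)) _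

/-- A difference of almost `k` letters `l` cannot come from padding alone, so it spans the end of a
big segment and the padding that follows it. -/
lemma prefixCount_add_le (h : R.Phased s B k') (hq : q ≤ n) {C v : ℕ} (hk : q * k' + C < R.k)
    (hv : R.prefixCount l v + R.k ≤ R.prefixCount l (q * B) + C) (l' : Fin m) :
    R.prefixCount l' v + k' ≤ R.prefixCount l' (q * B) := by
  induction q generalizing C with
  | zero =>
    rw [Nat.zero_mul] at hv
    have hmono := R.prefixCount_mono l (Nat.zero_le v)
    lia
  | succ q ih =>
    have hpad := h.prefixCount_pad ⟨q, hq⟩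
    rw [Nat.succ_mul] at hk
    by_cases hs : s ⟨q, hq⟩ = l
    · have hle : v ≤ q * B + R.k := by
        by_contra! hlt
        have hmono := R.prefixCount_mono l hlt.le
        have hpad := hpad l
        lia
      rw [hpad l']
      exact Nat.add_le_add_right (R.prefixCount_mono l' hle) k'
    · refine (ih (Nat.le_of_succ_le hq) (C := C + k') (by lia) ?_).trans
        (R.prefixCount_mono l' (Nat.mul_le_mul_right B (Nat.le_succ q)))
      rwa [hpad l, h.prefixCount_big ⟨q, hq⟩ l hs, add_assoc _ k' C, add_comm k' C] at hv

lemma exists_last_departed_eq (h : R.Phased s B k') (hq : q ≤ n) :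
    ∃ t ≤ R.N, R.departed none t = q * B ∧
      ∀ t' ≤ R.N, R.departed none t' ≤ q * B → t' ≤ t :=
  exists_last_eq (by rw [R.departed_zero]; exact Nat.zero_le _)
    (by rw [R.departed_N, regionLen, h.L_eq]; exact Nat.mul_le_mul_right _ hq)
    fun _ ht => R.departed_succ_le none ht

/-- The token occupying slot gadget `l` when `q` blocks have left the ordering gadget must be an
item: a non-item token would have been in transit while about `k'` tokens of its slot departed. -/
lemma exists_item (h : R.Phased s B k') (hB : R.Budget c) (hlen : R.k ≤ R.len l)
    (hk' : 13 * c + 5 < k') (hk : n * k' + 14 * c + 8 < R.k) (hq : q ≤ n) :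
    ∃ e, ∀ p ≤ q, (∀ j : Fin n, p ≤ j → j < q → s j ≠ l) → ∀ t ≤ R.N,
      p * B ≤ R.departed none t → R.departed none t ≤ q * B →
      region (R.loc t (.inl e)) = some (some l) := by
  obtain ⟨t, ht, hdep, hlast⟩ := h.exists_last_departed_eq hq
  have hmul {i : ℕ} (hi : i ≤ n) : i * k' ≤ n * k' := Nat.mul_le_mul_right _ hi
  have hqk := hmul hq
  obtain ⟨x, te, -, hx, hte, hitem⟩ := hB.exists_occupant (by lia) l hlen ht
  rw [hdep] at hte hitem
  rcases hitem with ⟨e, rfl⟩ | ⟨hte0, l', hl'⟩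
  · refine ⟨e, fun p hpq hs t' ht' hp hq' => hx t' ?_ (hlast t' ht' hq')⟩
    rcases hte with rfl | hte
    · exact Nat.zero_le _
    by_contra! hlt
    have hgap := h.prefixCount_le_add_mul hpq hq hs
    have hmono := R.prefixCount_mono l (hp.trans (R.departed_mono none hlt.le))
    have hpqk := hmul (i := q - p) (by lia)
    lia
  · have hpassed := h.prefixCount_add_le hq (C := 14 * c + 8) (by lia)
      (hte.resolve_left hte0) l'
    lia

lemma exists_occupants (h : R.Phased s B k') (hB : R.Budget c) (hlen : ∀ l, R.k ≤ R.len l)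
    (hk' : 13 * c + 5 < k') (hk : n * k' + 14 * c + 8 < R.k) :
    ∃ occ : ℕ → Fin m → Option (Fin m), (∀ p ≤ n, Function.Injective (occ p)) ∧
      (∀ (p : Fin n) l, l ≠ s p → occ (p + 1) l = occ p l) ∧
      (∀ l, region (R.loc 0 (.inl (occ 0 l))) = some (some l)) ∧
      ∀ l, region (R.loc R.N (.inl (occ n l))) = some (some l) := by
  have hitem (l : Fin m) (q : ℕ) (hq : q ≤ n) := h.exists_item hB (hlen l) hk' hk hq
  choose item hitem using hitem
  let occ (p : ℕ) (l : Fin m) := item l (nextPhase s l p) (nextPhase_le s l p)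
  have hregion {p t : ℕ} (hp : p ≤ n) (ht : t ≤ R.N) (hdep : R.departed none t = p * B)
      (l : Fin m) : region (R.loc t (.inl (occ p l))) = some (some l) :=
    hitem l _ _ p (le_nextPhase s l hp) (fun _ => ne_of_lt_nextPhase) t ht hdep.ge
      (hdep.trans_le (Nat.mul_le_mul_right _ (le_nextPhase s l hp)))
  refine ⟨occ, fun p hp l l' hll => ?_, fun p l hl => ?_,
    hregion (Nat.zero_le n) (Nat.zero_le _) (by rw [R.departed_zero, Nat.zero_mul]),
    hregion le_rfl le_rfl (by rw [R.departed_N, regionLen, h.L_eq])⟩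
  · obtain ⟨t, ht, hdep, -⟩ := h.exists_last_departed_eq hp
    have hl := hregion hp ht hdep l
    rw [hll, hregion hp ht hdep l'] at hl
    exact (Option.some.inj (Option.some.inj hl)).symm
  · simp only [occ, nextPhase_succ s p hl]

end Phased

end Run

/-! ### Layout of the gadgets -/

section Layout

variable {m n : ℕ} {s : Fin n → Fin m} {i i' : Fin m} {j j' : Fin n}

lemma card_filter_add_card_filter_lt (P : Fin m → Prop) [DecidablePred P] (hi : ¬P i) :
    (Finset.univ.filter P).card + (Finset.univ.filter fun i' => i' < i ∧ ¬P i').card < m := by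
  rw [← Finset.card_union_of_disjoint (Finset.disjoint_filter.2 fun _ _ h h' => h'.2 h)]
  exact (Finset.card_lt_univ_of_notMem (x := i) (by simp [hi])).trans_eq (Fintype.card_fin m)

lemma rho_of_ne (hnxt : some i ≠ nxt s j) (hi : i ≠ s j) :
    rho s i j = (if (nxt s j).isSome then 1 else 0) +
      (Finset.univ.filter fun i' => i' < i ∧ ¬(i' = s j ∨ some i' = nxt s j)).card := by
  simp only [not_or]
  rw [rho, if_neg hnxt, if_neg hi]
  rfl

lemma rho_add_card_lt (hnxt : some i ≠ nxt s j) (hi : i ≠ s j) :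
    rho s i j + (Finset.univ.filter fun i' => i' = s j ∨ some i' = nxt s j).card <
      m + if (nxt s j).isSome then 1 else 0 := by
  rw [rho_of_ne hnxt hi]
  have h := card_filter_add_card_filter_lt (fun i' => i' = s j ∨ some i' = nxt s j)
    (not_or.2 ⟨hi, hnxt⟩)
  lia

lemma rho_self (h : some (s j) ≠ nxt s j) : rho s (s j) j = m - 1 := by
  rw [rho, if_neg h, if_pos rfl]

lemma rho_lt (s : Fin n → Fin m) (i : Fin m) (j : Fin n) : rho s i j < m := by
  have hm := i.pos
  by_cases hnxt : some i = nxt s j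
  · rwa [rho, if_pos hnxt]
  by_cases hi : i = s j
  · subst hi
    rw [rho_self hnxt]
    lia
  have h := rho_add_card_lt hnxt hi
  have hpos : 0 < (Finset.univ.filter fun i' => i' = s j ∨ some i' = nxt s j).card :=
    Finset.card_pos.2 ⟨s j, by simp⟩
  split_ifs at h <;> lia

lemma rho_add_one_lt (hnxt : some i ≠ nxt s j) (hi : i ≠ s j) (hs : some (s j) ≠ nxt s j) :
    rho s i j + 1 < m := by
  have h := rho_add_card_lt hnxt hi
  rcases hj : nxt s j with _ | l
  · have hpos : 0 < (Finset.univ.filter fun i' => i' = s j ∨ some i' = nxt s j).card :=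
      Finset.card_pos.2 ⟨s j, by simp⟩
    rw [hj] at h hpos
    simp only [Option.isSome_none, Bool.false_eq_true, if_false] at h
    lia
  · have hpair : ({s j, l} : Finset (Fin m)).card = 2 :=
      Finset.card_pair fun h => hs (hj.trans (congrArg some h.symm)).symm
    have hle : ({s j, l} : Finset (Fin m)).card ≤
        (Finset.univ.filter fun i' => i' = s j ∨ some i' = nxt s j).card := by
      refine Finset.card_le_card fun x hx => ?_
      simpa [hj] using hx
    simp only [hj, Option.isSome_some, if_true] at h hle
    lia

lemma rho_lt_rho (hnxt : some i ≠ nxt s j) (hi : i ≠ s j) (hnxt' : some i' ≠ nxt s j)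
    (hi' : i' ≠ s j) (h : i < i') : rho s i j < rho s i' j := by
  rw [rho_of_ne hnxt hi, rho_of_ne hnxt' hi', Nat.add_lt_add_iff_left]
  refine Finset.card_lt_card (Finset.ssubset_iff_of_subset ?_ |>.2 ⟨i, ?_, ?_⟩)
  · exact Finset.monotone_filter_right _ fun x _ hx => ⟨hx.1.trans h, hx.2⟩
  · simp [h, hnxt, hi]
  · simp

lemma rho_injective (s : Fin n → Fin m) (j : Fin n) : Function.Injective (rho s · j) := by
  intro i i' h
  by_contra hne
  simp only at h
  wlog hnxt : some i' ≠ nxt s j generalizing i i'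
  · rw [not_not] at hnxt
    exact this h.symm (Ne.symm hne) fun hi => hne (Option.some.inj (hi.trans hnxt.symm))
  by_cases hi : some i = nxt s j
  · have hzero : rho s i j = 0 := if_pos hi
    have hpos : 0 < rho s i' j := by
      by_cases hs : i' = s j
      · subst hs
        rw [rho_self hnxt]
        have := Fin.val_ne_of_ne hne
        lia
      · rw [rho_of_ne hnxt hs, ← hi, Option.isSome_some, if_pos rfl]
        lia
    exact hpos.ne (hzero.symm.trans h)
  by_cases hs : i = s j
  · subst hs
    have := rho_add_one_lt hnxt (Ne.symm hne) hi
    rw [rho_self hi] at h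
    lia
  by_cases hs' : i' = s j
  · subst hs'
    have := rho_add_one_lt hi hne hnxt
    rw [rho_self hnxt] at h
    lia
  rcases lt_or_gt_of_ne hne with hlt | hgt
  · exact (rho_lt_rho hi hs hnxt hs' hlt).ne h
  · exact (rho_lt_rho hnxt hs' hi hs hgt).ne' h

/-- The length of the part of slot gadget `i` belonging to phase `j`. -/
def width (s : Fin n → Fin m) (i : Fin m) (j : Fin n) : ℕ :=
  kk' m n + if s j = i then kk m n else 0

lemma offQ_add_width_le (s : Fin n → Fin m) (i : Fin m) (h : j < j') :
    offQ s i j + width s i j ≤ offQ s i j' := by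
  rw [add_comm]
  refine (Finset.sum_insert (f := width s i) (by simp)).symm.trans_le
    (Finset.sum_le_sum_of_subset fun x hx => ?_)
  simp only [Finset.mem_insert, Finset.mem_filter, Finset.mem_univ, true_and] at hx ⊢
  exact hx.elim (fun hx => hx ▸ h) fun hx => hx.trans h

lemma sum_width (s : Fin n → Fin m) (i : Fin m) : ∑ j, width s i j = lenSlot s i := by
  simp only [width, lenSlot, cnt, Finset.sum_add_distrib, ← Finset.sum_filter, Finset.sum_const,
    Finset.card_univ, Fintype.card_fin, smul_eq_mul, add_comm]

lemma offQ_add_width_add_tOffP (s : Fin n → Fin m) (i : Fin m) (j : Fin n) :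
    offQ s i j + width s i j + tOffP s i j = lenSlot s i := by
  have hnot : (Finset.univ.filter fun j' : Fin n => ¬j'.val < j.val) =
      insert j (Finset.univ.filter fun j' : Fin n => j.val < j'.val) := by
    ext x
    simp only [Finset.mem_filter, Finset.mem_univ, true_and, Finset.mem_insert, Fin.ext_iff]
    lia
  rw [← sum_width, ← Finset.sum_filter_add_sum_filter_not (Finset.univ : Finset (Fin n))
    (fun j' => j'.val < j.val) (width s i), hnot, Finset.sum_insert (by simp), ← add_assoc]
  rfl

lemma eq_and_eq_of_mul_add_eq {q q' a a' c : ℕ} (ha : a < c) (ha' : a' < c)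
    (h : q * c + a = q' * c + a') : q = q' ∧ a = a' := by
  have hc : 0 < c := ha.pos
  rw [mul_comm q, mul_comm q'] at h
  have hdiv := congrArg (· / c) h
  have hmod := congrArg (· % c) h
  simp only [Nat.mul_add_div hc, Nat.mul_add_mod, Nat.div_eq_of_lt, Nat.mod_eq_of_lt, ha, ha',
    add_zero] at hdiv hmod
  exact ⟨hdiv, hmod⟩

lemma mul_add_lt_mul_add_iff {q q' a c v : ℕ} (ha : a < c) (hv : v ≤ c) :
    q * c + a < q' * c + v ↔ q < q' ∨ q = q' ∧ a < v := by
  rcases lt_trichotomy q q' with h | rfl | h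
  · have := Nat.mul_le_mul_right c (Nat.succ_le_of_lt h)
    rw [Nat.succ_mul] at this
    lia
  · lia
  · have := Nat.mul_le_mul_right c (Nat.succ_le_of_lt h)
    rw [Nat.succ_mul] at this
    lia

/-- The length of the part of the ordering gadget belonging to one phase. -/
def blockLen (m n : ℕ) : ℕ := kk m n + m * kk' m n

lemma kk_le_blockLen (m n : ℕ) : kk m n ≤ blockLen m n :=
  Nat.le_add_right _ _

lemma lenOrd_eq (m n : ℕ) : lenOrd m n = n * blockLen m n := by
  rw [lenOrd, blockLen]
  ring

/-- The non-item tokens of one direction, i.e. those of the segments `x` and `p`, or those of the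
segments `y` and `q`: first the big segments, then the padding segments. -/
abbrev SegmentToken (m n : ℕ) := (Fin n × Fin (kk m n)) ⊕ (Fin m × Fin n × Fin (kk' m n))

namespace SegmentToken

/-- The slot whose gadget a token visits. -/
def slot (s : Fin n → Fin m) : SegmentToken m n → Fin m
  | .inl (j, _) => s j
  | .inr (i, _, _) => i

/-- The index `j` of the segment of a token. -/
def phase : SegmentToken m n → Fin n
  | .inl (j, _) => j
  | .inr (_, j, _) => j

/-- The position of a token in the ordering gadget, relative to the start of its phase. -/
def ordOffset (s : Fin n → Fin m) : SegmentToken m n → ℕ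
  | .inl (_, a) => a
  | .inr (i, j, a) => kk m n + (rho s i j * kk' m n + a)

/-- The position of a token in the ordering gadget: counted from the root in the initial
placement for `x` and `p`, from the far end in the target placement for `y` and `q`. -/
def ordPos (s : Fin n → Fin m) (b : SegmentToken m n) : ℕ :=
  b.phase * blockLen m n + b.ordOffset s

/-- The position of a token in its slot gadget, relative to the start of its phase. -/
def slotOffset (s : Fin n → Fin m) : SegmentToken m n → ℕ
  | .inl (_, a) => a
  | .inr (i, j, a) => (if s j = i then kk m n else 0) + a

/-- The position of a token in its slot gadget: counted from the root in the initial placement for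
`y` and `q`, from the far end in the target placement for `x` and `p`. -/
def slotPos (s : Fin n → Fin m) (b : SegmentToken m n) : ℕ :=
  offQ s (b.slot s) b.phase + b.slotOffset s

variable {s : Fin n → Fin m} {b b' : SegmentToken m n}

lemma ordOffset_lt (s : Fin n → Fin m) (b : SegmentToken m n) : b.ordOffset s < blockLen m n := by
  rcases b with ⟨j, a⟩ | ⟨i, j, a⟩ <;> simp only [ordOffset, blockLen]
  · lia
  · have h := Nat.mul_le_mul_right (kk' m n) (Nat.succ_le_of_lt (rho_lt s i j))
    rw [Nat.succ_mul] at h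
    lia

lemma ordPos_lt_iff {j v : ℕ} (hv : v ≤ blockLen m n) :
    b.ordPos s < j * blockLen m n + v ↔ b.phase < j ∨ b.phase = j ∧ b.ordOffset s < v :=
  mul_add_lt_mul_add_iff (b.ordOffset_lt s) hv

lemma ordPos_lt_ordPos_iff : b.ordPos s < b'.ordPos s ↔
    b.phase < b'.phase ∨ b.phase = b'.phase ∧ b.ordOffset s < b'.ordOffset s := by
  rw [ordPos.eq_def s b', ordPos_lt_iff (b'.ordOffset_lt s).le, Fin.lt_def, Fin.ext_iff]

lemma slot_eq_and_ordPos_lt_succ_mul_iff {j : Fin n} {l : Fin m}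
    (b : SegmentToken m n) :
    b.slot s = l ∧ b.ordPos s < (j + 1) * blockLen m n ↔
      (b.slot s = l ∧ b.ordPos s < j * blockLen m n + kk m n) ∨ ∃ a, .inr (l, j, a) = b := by
  rw [Nat.succ_mul, ordPos_lt_iff le_rfl, and_iff_left (b.ordOffset_lt s),
    ordPos_lt_iff (kk_le_blockLen m n)]
  rcases b with ⟨j', a⟩ | ⟨i, j', a⟩
  · simp [phase, ordOffset]
  · simp only [slot, phase, ordOffset, Sum.inr.injEq,
      Prod.mk.injEq, Fin.ext_iff, exists_and_left, Fin.exists_iff]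
    lia

lemma ordPos_lt_lenOrd (s : Fin n → Fin m) (b : SegmentToken m n) : b.ordPos s < lenOrd m n := by
  rw [lenOrd_eq, ← add_zero (n * blockLen m n), ordPos_lt_iff (Nat.zero_le _)]
  exact Or.inl b.phase.2

lemma ordPos_injective (s : Fin n → Fin m) : Function.Injective (ordPos (m := m) s) := by
  intro b b' h
  obtain ⟨hphase, hoff⟩ := eq_and_eq_of_mul_add_eq (b.ordOffset_lt s) (b'.ordOffset_lt s) h
  rcases b with ⟨j, a⟩ | ⟨i, j, a⟩ <;> rcases b' with ⟨j', a'⟩ | ⟨i', j', a'⟩ <;>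
    obtain rfl : j = j' := Fin.ext hphase <;> simp only [ordOffset] at hoff
  · rw [Fin.ext hoff]
  · lia
  · lia
  · obtain ⟨hrho, ha⟩ := eq_and_eq_of_mul_add_eq a.2 a'.2 (Nat.add_left_cancel hoff)
    rw [rho_injective s j hrho, Fin.ext ha]

lemma slotOffset_lt (s : Fin n → Fin m) (b : SegmentToken m n) :
    b.slotOffset s < width s (b.slot s) b.phase := by
  rcases b with ⟨j, a⟩ | ⟨i, j, a⟩ <;> simp only [slotOffset, width, slot, phase]
  · rw [if_pos trivial]
    lia
  · lia

lemma slotPos_lt (s : Fin n → Fin m) (b : SegmentToken m n) :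
    b.slotPos s < lenSlot s (b.slot s) := by
  rw [slotPos, ← offQ_add_width_add_tOffP s (b.slot s) b.phase]
  exact Nat.lt_add_right _ (Nat.add_lt_add_left (b.slotOffset_lt s) _)

lemma slotOffset_lt_slotOffset (hslot : b.slot s = b'.slot s) (hphase : b.phase = b'.phase)
    (h : b.ordOffset s < b'.ordOffset s) : b.slotOffset s < b'.slotOffset s := by
  rcases b with ⟨j, a⟩ | ⟨i, j, a⟩ <;> rcases b' with ⟨j', a'⟩ | ⟨i', j', a'⟩ <;>
    obtain rfl : j = j' := hphase <;> simp only [ordOffset, slotOffset, slot] at h hslot ⊢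
  · exact h
  · rw [if_pos hslot]
    lia
  · lia
  · subst hslot
    lia

lemma slotPos_lt_slotPos (hslot : b.slot s = b'.slot s) (h : b.ordPos s < b'.ordPos s) :
    b.slotPos s < b'.slotPos s := by
  rw [slotPos, slotPos]
  rcases ordPos_lt_ordPos_iff.1 h with hphase | ⟨hphase, hoff⟩
  · rw [← hslot]
    exact (Nat.add_lt_add_left (b.slotOffset_lt s) _).trans_le
      ((offQ_add_width_le s _ hphase).trans (Nat.le_add_right _ _))
  · rw [hslot, hphase]
    exact Nat.add_lt_add_left (slotOffset_lt_slotOffset hslot hphase hoff) _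

lemma card_filter_slot (s : Fin n → Fin m) (l : Fin m) :
    (Finset.univ.filter fun b : SegmentToken m n => slot s b = l).card = lenSlot s l := by
  have hbig : (Finset.univ.filter fun x : Fin n × Fin (kk m n) => s x.1 = l) =
      (Finset.univ.filter fun j => s j = l) ×ˢ Finset.univ := by
    ext x
    simp
  have hpad : (Finset.univ.filter fun x : Fin m × Fin n × Fin (kk' m n) => x.1 = l) =
      {l} ×ˢ Finset.univ := by
    ext x
    rw [Finset.mem_product]
    simp
  calc
    _ = (Finset.univ.filter fun x : Fin n × Fin (kk m n) => s x.1 = l).card +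
        (Finset.univ.filter fun x : Fin m × Fin n × Fin (kk' m n) => x.1 = l).card := by
      simp only [Finset.card_filter]
      exact Fintype.sum_sum_type _
    _ = lenSlot s l := by
      rw [hbig, hpad, Finset.card_product, Finset.card_product]
      simp [lenSlot, cnt]

lemma card_eq_lenOrd (m n : ℕ) : Fintype.card (SegmentToken m n) = lenOrd m n := by
  simp only [Fintype.card_sum, Fintype.card_prod, Fintype.card_fin, lenOrd]
  ring

end SegmentToken

end Layout

/-! ### The run of a solution of the constructed instance -/

section Distance

variable {m : ℕ} {len : Fin m → ℕ} {L k : ℕ} {r r' : Option (Fin m)} {d d' : ℕ}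

lemma exists_walk_root (h : InTree len L (pathVtx r d)) :
    ∃ w : (Tree len L k).Walk .root (pathVtx r d), w.length = d + 1 := by
  induction d with
  | zero =>
    have hadj : (Tree len L k).Adj .root (pathVtx r 0) := by
      rw [Tree, SimpleGraph.fromRel_adj]
      exact ⟨(pathVtx_ne_root r 0).symm, Or.inl (by cases r <;> exact ⟨rfl, h⟩)⟩
    exact ⟨hadj.toWalk, rfl⟩
  | succ d ih =>
    obtain ⟨w, hw⟩ := ih (by cases r <;> exact Nat.lt_of_succ_lt h)
    have hadj : (Tree len L k).Adj (pathVtx r d) (pathVtx r (d + 1)) := by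
      rw [Tree, SimpleGraph.fromRel_adj]
      refine ⟨fun heq => d.lt_succ_self.ne (pathVtx_inj heq).2, Or.inl ?_⟩
      cases r
      · exact ⟨rfl, h⟩
      · exact ⟨rfl, rfl, h⟩
    exact ⟨w.concat hadj, by rw [SimpleGraph.Walk.length_concat, hw]⟩

lemma dist_pathVtx_le (h : InTree len L (pathVtx r d)) (h' : InTree len L (pathVtx r' d')) :
    (Tree len L k).dist (pathVtx r d) (pathVtx r' d') ≤
      depth k (pathVtx r d) + depth k (pathVtx r' d') := by
  obtain ⟨w, hw⟩ := exists_walk_root (k := k) h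
  obtain ⟨w', hw'⟩ := exists_walk_root (k := k) h'
  refine (SimpleGraph.dist_le (w.reverse.append w')).trans_eq ?_
  rw [SimpleGraph.Walk.length_append, SimpleGraph.Walk.length_reverse, hw, hw', depth_pathVtx,
    depth_pathVtx]

end Distance

section Reduction

variable {m n : ℕ}

/-- The non-item tokens sorted by direction: first those of the segments `x` and `p`, then those of
the segments `y` and `q`. -/
def toNonItem : SegmentToken m n ⊕ SegmentToken m n → NonItem m n
  | .inl (.inl x) => .inl x
  | .inr (.inl y) => .inr (.inl y)
  | .inl (.inr p) => .inr (.inr (.inl p))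
  | .inr (.inr q) => .inr (.inr (.inr q))

lemma sum_toNonItem (f : NonItem m n → ℕ) : ∑ a, f (toNonItem a) = ∑ t, f t := by
  simp only [Fintype.sum_sum_type, toNonItem]
  ring

section Placement

variable (s : Fin n → Fin m) (π : Equiv.Perm (Option (Fin m))) (e : Option (Fin m))
  (b : SegmentToken m n)

lemma initTok_item : initTok s (.inl e) = itemVtx e := by
  cases e <;> rfl

lemma tgtTok_item : tgtTok s π (.inl e) = itemVtx (π e) := by
  simp only [tgtTok]
  cases π e <;> rfl

lemma initTok_X : initTok s (.inr (toNonItem (.inl b))) = .ord (b.ordPos s) := by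
  rcases b with ⟨j, a⟩ | ⟨i, j, a⟩
  · rfl
  · simp only [toNonItem, initTok, SegmentToken.ordPos, SegmentToken.phase,
      SegmentToken.ordOffset, blockLen, add_assoc]

lemma initTok_Y : initTok s (.inr (toNonItem (.inr b))) = .slot (b.slot s) (b.slotPos s) := by
  rcases b with ⟨j, a⟩ | ⟨i, j, a⟩
  · rfl
  · simp only [toNonItem, initTok, SegmentToken.slotPos, SegmentToken.phase, SegmentToken.slot,
      SegmentToken.slotOffset, add_assoc]

lemma tgtTok_X : tgtTok s π (.inr (toNonItem (.inl b))) =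
    .slot (b.slot s) (lenSlot s (b.slot s) - 1 - b.slotPos s) := by
  have h := offQ_add_width_add_tOffP s (b.slot s) b.phase
  have hlt := b.slotOffset_lt s
  rcases b with ⟨j, a⟩ | ⟨i, j, a⟩ <;>
    simp only [toNonItem, tgtTok, SegmentToken.slotPos, SegmentToken.phase, SegmentToken.slot,
      SegmentToken.slotOffset, width, Vtx.slot.injEq, true_and, if_true] at h hlt ⊢ <;>
    lia

lemma tgtTok_Y : tgtTok s π (.inr (toNonItem (.inr b))) =
    .ord (lenOrd m n - 1 - b.ordPos s) := by
  rcases b with ⟨j, a⟩ | ⟨i, j, a⟩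
  · rfl
  · simp only [toNonItem, tgtTok, SegmentToken.ordPos, SegmentToken.phase, SegmentToken.ordOffset,
      blockLen, add_assoc]

end Placement

variable {s : Fin n → Fin m} {π : Equiv.Perm (Option (Fin m))} {hk : 2 ≤ kk m n}
  {σ : List (Vtx m × Vtx m)} {hedges : ∀ e ∈ σ, (TheGraph s).Adj e.1 e.2}
  {hsol : applySwaps σ (initTok s) = tgtTok s π}

/-- The run of a swap sequence solving the constructed instance. -/
def runOf (hk : 2 ≤ kk m n) (hedges : ∀ e ∈ σ, (TheGraph s).Adj e.1 e.2)
    (hsol : applySwaps σ (initTok s) = tgtTok s π) : Run m (SegmentToken m n) where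
  k := kk m n
  L := lenOrd m n
  N := σ.length
  len := lenSlot s
  slot := SegmentToken.slot s
  ordPos := SegmentToken.ordPos s
  slotPos := SegmentToken.slotPos s
  loc t x := applySwaps (σ.take t) (initTok s) (Sum.map id toNonItem x)
  two_le_k := hk
  L_eq := (SegmentToken.card_eq_lenOrd m n).symm
  len_eq l := (SegmentToken.card_filter_slot s l).symm
  ordPos_injective := SegmentToken.ordPos_injective s
  ordPos_lt := SegmentToken.ordPos_lt_lenOrd s
  slotPos_lt := SegmentToken.slotPos_lt s
  slotPos_lt_slotPos _ _ := SegmentToken.slotPos_lt_slotPos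
  init_X := initTok_X s
  init_Y := initTok_Y s
  final_X b := by rw [List.take_length, hsol]; exact tgtTok_X s π b
  final_Y b := by rw [List.take_length, hsol]; exact tgtTok_Y s π b
  init_item := ⟨Equiv.refl _, initTok_item s⟩
  final_item := ⟨π, fun e => by rw [List.take_length, hsol]; exact tgtTok_item s π e⟩
  step t ht := ⟨σ[t].1, σ[t].2, hedges _ (List.getElem_mem ht), fun x => by
    rw [List.take_succ_eq_append_getElem ht, applySwaps, List.foldl_append]
    rfl⟩

lemma runOf_loc_zero (x : Token m (SegmentToken m n)) :
    (runOf hk hedges hsol).loc 0 x = initTok s (Sum.map id toNonItem x) :=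
  rfl

lemma runOf_loc_length (x : Token m (SegmentToken m n)) :
    (runOf hk hedges hsol).loc σ.length x = tgtTok s π (Sum.map id toNonItem x) := by
  simp only [runOf, List.take_length, hsol]

lemma dd_toNonItem_le (hk : 2 ≤ kk m n) (hedges : ∀ e ∈ σ, (TheGraph s).Adj e.1 e.2)
    (hsol : applySwaps σ (initTok s) = tgtTok s π) (a : SegmentToken m n ⊕ SegmentToken m n) :
    dd s π (.inr (toNonItem a)) ≤ depth (kk m n) (initTok s (.inr (toNonItem a))) +
      depth (kk m n) (tgtTok s π (.inr (toNonItem a))) := by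
  have hinit : ∃ r d, initTok s (.inr (toNonItem a)) = pathVtx r d := by
    rcases a with b | b
    · exact ⟨none, _, initTok_X s b⟩
    · exact ⟨some _, _, initTok_Y s b⟩
  have htgt : ∃ r d, tgtTok s π (.inr (toNonItem a)) = pathVtx r d := by
    rcases a with b | b
    · exact ⟨some _, _, tgtTok_X s π b⟩
    · exact ⟨none, _, tgtTok_Y s π b⟩
  have h := (runOf hk hedges hsol).inTree_loc (Nat.zero_le _) (.inr a)
  have h' := (runOf hk hedges hsol).inTree_loc (le_refl σ.length) (.inr a)
  rw [runOf_loc_zero, Sum.map_inr] at h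
  rw [runOf_loc_length, Sum.map_inr] at h'
  obtain ⟨r, d, hrd⟩ := hinit
  obtain ⟨r', d', hrd'⟩ := htgt
  rw [hrd] at h
  rw [hrd'] at h'
  rw [dd, TheGraph, hrd, hrd']
  exact dist_pathVtx_le h h'

lemma runOf_budget
    (hlen : 2 * σ.length ≤ ∑ t : NonItem m n, (dd s π (.inr t) + 1) + 2 * n) :
    (runOf hk hedges hsol).Budget n := by
  refine hlen.trans (Nat.add_le_add_right ?_ _)
  rw [← sum_toNonItem]
  refine Finset.sum_le_sum fun a _ => Nat.add_le_add_right ?_ 1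
  rw [show (runOf hk hedges hsol).N = σ.length from rfl, runOf_loc_length]
  exact dd_toNonItem_le hk hedges hsol a

section PrefixCount

variable {j : Fin n} {l : Fin m}

lemma runOf_prefixCount_big (hl : s j ≠ l) :
    (runOf hk hedges hsol).prefixCount l (j * blockLen m n + kk m n) =
      (runOf hk hedges hsol).prefixCount l (j * blockLen m n) := by
  unfold Run.prefixCount
  congr 1
  refine Finset.filter_congr fun b _ => and_congr_right fun hb => ?_
  change b.slot s = l at hb
  change b.ordPos s < _ ↔ b.ordPos s < j * blockLen m n + 0
  rw [SegmentToken.ordPos_lt_iff (kk_le_blockLen m n),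
    SegmentToken.ordPos_lt_iff (Nat.zero_le _)]
  refine or_congr_right (and_congr_right fun hphase => iff_of_false (fun h => ?_)
    (Nat.not_lt_zero _))
  rcases b with ⟨j', a⟩ | ⟨i, j', a⟩
  · exact hl ((congrArg s (Fin.ext hphase)).symm.trans hb)
  · exact (Nat.le_add_right _ _).not_gt h

lemma runOf_prefixCount_pad :
    (runOf hk hedges hsol).prefixCount l ((j + 1) * blockLen m n) =
      (runOf hk hedges hsol).prefixCount l (j * blockLen m n + kk m n) + kk' m n := by
  classical
  have hpad : (Finset.univ.image fun a : Fin (kk' m n) =>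
      (.inr (l, j, a) : SegmentToken m n)).card = kk' m n := by
    rw [Finset.card_image_of_injective _ fun a a' h => by simpa using h, Finset.card_univ,
      Fintype.card_fin]
  refine Eq.trans ?_ (congrArg _ hpad)
  unfold Run.prefixCount
  rw [← Finset.card_union_of_disjoint]
  · congr 1
    ext b
    simp only [Finset.mem_union, Finset.mem_filter, Finset.mem_univ, true_and, Finset.mem_image]
    exact SegmentToken.slot_eq_and_ordPos_lt_succ_mul_iff b
  · refine Finset.disjoint_left.2 fun b hb hb' => ?_
    obtain ⟨a, -, rfl⟩ := Finset.mem_image.1 hb'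
    have hpos := (Finset.mem_filter.1 hb).2.2
    rcases (SegmentToken.ordPos_lt_iff (kk_le_blockLen m n)).1 hpos with h | h
    · exact h.ne rfl
    · exact (Nat.le_add_right _ _).not_gt h.2

lemma runOf_phased : (runOf hk hedges hsol).Phased s (blockLen m n) (kk' m n) where
  L_eq := lenOrd_eq m n
  prefixCount_big _ _ := runOf_prefixCount_big
  prefixCount_pad _ _ := runOf_prefixCount_pad

end PrefixCount

end Reduction

lemma kk_bounds {m n : ℕ} (hm : 2 ≤ m) (hn : 2 ≤ n) :
    13 * n + 5 < kk' m n ∧ n * kk' m n + 14 * n + 8 < kk m n := by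
  have hkk' : kk' m n = m ^ 25 * n ^ 17 := by
    rw [kk', kk, mul_pow, show n ^ 25 = n ^ 17 * n ^ 8 by ring, ← mul_assoc,
      Nat.mul_div_cancel _ (by positivity)]
  have hkk : kk m n = kk' m n * n ^ 8 := by
    rw [hkk', kk]
    ring
  have hlarge : 2 ^ 25 * n ≤ kk' m n := by
    rw [hkk']
    exact Nat.mul_le_mul (Nat.pow_le_pow_left hm 25) (Nat.le_self_pow (by norm_num) n)
  have hpow : n + 2 ≤ n ^ 8 :=
    calc n + 2 ≤ n * n := by nlinarith
      _ = n ^ 2 := (sq n).symm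
      _ ≤ n ^ 8 := Nat.pow_le_pow_right (by lia) (by norm_num)
  have hk : kk' m n * (n + 2) ≤ kk m n := hkk ▸ Nat.mul_le_mul_left _ hpow
  constructor <;> nlinarith

section

variable {m n : ℕ} {s : Fin n → Fin m} {π : Equiv.Perm (Option (Fin m))}
  {σ : List (Vtx m × Vtx m)}

lemma kk_le_lenSlot {l : Fin m} (hl : ∃ j, s j = l) : kk m n ≤ lenSlot s l := by
  obtain ⟨j, hj⟩ := hl
  have hpos : 0 < cnt s l := Finset.card_pos.2 ⟨j, by simp [hj]⟩
  exact (Nat.le_mul_of_pos_left _ hpos).trans (Nat.le_add_right _ _)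

lemma eq_some_of_region_itemVtx {e : Option (Fin m)} {l : Fin m}
    (h : region (itemVtx e) = some (some l)) : e = some l := by
  cases e <;> simp_all [region, itemVtx]

lemma starSTSYes_of_swaps (hm : 2 ≤ m) (hocc : ∀ i, ∃ j, s j = i)
    (hedges : ∀ e ∈ σ, (TheGraph s).Adj e.1 e.2)
    (hsol : applySwaps σ (initTok s) = tgtTok s π)
    (hlen : 2 * σ.length ≤ ∑ t : NonItem m n, (dd s π (.inr t) + 1) + 2 * n) :
    StarSTSYes π (List.ofFn s) := by
  have hmn : m ≤ n := by simpa using Fintype.card_le_of_surjective s hocc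
  obtain ⟨hk', hk⟩ := kk_bounds hm (hm.trans hmn)
  have hk₂ : 2 ≤ kk m n := by lia
  obtain ⟨occ, hinj, hstep, hinit, hfinal⟩ :=
    (runOf_phased (hk := hk₂) (hedges := hedges) (hsol := hsol)).exists_occupants
      (runOf_budget hlen) (fun l => kk_le_lenSlot (hocc l)) hk' hk
  refine starSTSYes_of_occupants occ hinj hstep (fun l => eq_some_of_region_itemVtx ?_)
    fun l => eq_some_of_region_itemVtx ?_
  · rw [← initTok_item s]
    exact hinit l
  · rw [← tgtTok_item s]
    exact (congrArg region (runOf_loc_length _)).symm.trans (hfinal l)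

lemma perm_option_eq_swap {L : Type*} [DecidableEq L] [Subsingleton L]
    (π : Equiv.Perm (Option L)) : π = Equiv.swap none (π none) := by
  have h : Equiv.swap none (π none) * π = 1 := by
    rw [← map_equiv_removeNone, Subsingleton.elim (Equiv.removeNone π) 1]
    exact Equiv.optionCongr_refl
  rw [← Equiv.swap_inv]
  exact eq_inv_of_mul_eq_one_right h

lemma starSTSYes_of_subsingleton {L : Type*} [DecidableEq L] [Subsingleton L]
    (π : Equiv.Perm (Option L)) {σ : List L} (hσ : ∀ l, l ∈ σ) : StarSTSYes π σ := by
  rw [perm_option_eq_swap π]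
  cases π none with
  | none => exact ⟨[], List.nil_sublist _, by rw [Equiv.swap_self]; rfl⟩
  | some l => exact ⟨[l], List.singleton_sublist.2 (hσ l), rfl⟩

end

theorem tokenSwapping_yes_implies_starSTS_yes_general {m n : ℕ}
    (s : Fin n → Fin m) (π : Equiv.Perm (Option (Fin m)))
    (hocc : ∀ i : Fin m, ∃ j, s j = i)
    (σ : List (Vtx m × Vtx m))
    (hedges : ∀ e ∈ σ, (TheGraph s).Adj e.1 e.2)
    (hsol : applySwaps σ (initTok s) = tgtTok s π)
    (hlen : 2 * σ.length ≤ (∑ t : NonItem m n, (dd s π (Sum.inr t) + 1)) + 2 * n) :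
    StarSTSYes π (List.ofFn s) := by
  rcases le_or_gt m 1 with hm | hm
  · have := Fin.subsingleton_iff_le_one.2 hm
    exact starSTSYes_of_subsingleton π fun l => (List.mem_ofFn' s l).2 (hocc l)
  · exact starSTSYes_of_swaps hm hocc hedges hsol hlen

/-!
STATEMENT 4: If the constructed (unweighted, sequential) token swapping instance has a
swap sequence of length at most `K = H + n` transforming the initial placement into
the target placement, then the Star STS instance is a YES instance.  The length bound
`σ.length ≤ H + n` is stated in the equivalent doubled form
`2·σ.length ≤ Σ_{t∈A}(d_t+1) + 2n`.
-/
theorem tokenSwapping_yes_implies_starSTS_yes {m n : ℕ}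
    (s : Fin n → Fin m) (π : Equiv.Perm (Option (Fin m)))
    (hπ0 : π none = none)
    (hocc : ∀ i : Fin m, ∃ j, s j = i)
    (hcons : ∀ (j : Fin n) (h : j.val + 1 < n), s j ≠ s ⟨j.val + 1, h⟩)
    (σ : List (Vtx m × Vtx m))
    (hedges : ∀ e ∈ σ, (TheGraph s).Adj e.1 e.2)
    (hsol : applySwaps σ (initTok s) = tgtTok s π)
    (hlen : 2 * σ.length ≤ (∑ t : NonItem m n, (dd s π (Sum.inr t) + 1)) + 2 * n) :
    StarSTSYes π (List.ofFn s) :=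
  tokenSwapping_yes_implies_starSTS_yes_general s π hocc σ hedges hsol hlen

end UnweightedTS
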